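/- Let k ≥ 2 be an integer, let ε be an integer with 0 < ε < 2^k, and set q = 2^k + 1 + ε. Let L be a real vector subspace of the q×q complex matrices consisting entirely of Hermitian matrices, and suppose that every nonzero X ∈ L has at least 2 positive eigenvalues and at least 2 negative eigenvalues (counted with multiplicity). Then the real dimension of L is at most q² − (4q − 3 − 4ε). -/

import Mathlib

open Matrix

/-- The number of positive eigenvalues (counted with multiplicity) of a Hermitian matrix. -/
noncomputable def posEigCount {n : Type*} [Fintype n] [DecidableEq n]
    {A : Matrix n n ℂ} (hA : A.IsHermitian) : ℕ :=
  (Finset.univ.filter fun i => 0 < hA.eigenvalues i).card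

/-- The number of negative eigenvalues (counted with multiplicity) of a Hermitian matrix. -/
noncomputable def negEigCount {n : Type*} [Fintype n] [DecidableEq n]
    {A : Matrix n n ℂ} (hA : A.IsHermitian) : ℕ :=
  (Finset.univ.filter fun i => hA.eigenvalues i < 0).card


theorem HI.odd_root (p : Polynomial ℝ) (hp : p.Monic) (ho : Odd p.natDegree) :
    ∃ c, p.IsRoot c := by
  have hd : 0 < p.degree := Polynomial.natDegree_pos_iff_degree_pos.mp ho.pos
  have h1 := p.tendsto_atTop_of_leadingCoeff_nonneg hd (by rw [hp.leadingCoeff]; norm_num)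
  have hnd : (p.comp (-Polynomial.X)).natDegree = p.natDegree := by
    rw [Polynomial.natDegree_comp]; simp
  have h2 := (p.comp (-Polynomial.X)).tendsto_atBot_of_leadingCoeff_nonpos
    (Polynomial.natDegree_pos_iff_degree_pos.mp (by rw [hnd]; exact ho.pos)) (by
      rw [Polynomial.leadingCoeff_comp (by simp), hp.leadingCoeff]
      simp [ho.neg_one_pow])
  obtain ⟨x, hx⟩ := (h1.eventually_ge_atTop 0).exists
  obtain ⟨y, hy⟩ := (h2.eventually_le_atBot 0).exists
  have hy' : p.eval (-y) ≤ 0 := by simpa using hy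
  obtain ⟨c, hc⟩ := intermediate_value_univ (-y) x p.continuous ⟨hy', hx⟩
  exact ⟨c, hc⟩

theorem HI.common_eig (m : ℕ) : ∀ (V : Type) [AddCommGroup V] [Module ℝ V] [Module.Finite ℝ V]
    (S : Set (Module.End ℝ V)) (_ : Module.finrank ℝ V = m) (_ : Odd m)
    (_ : ∀ f ∈ S, ∀ g ∈ S, Commute f g),
    ∃ v : V, v ≠ 0 ∧ ∀ f ∈ S, ∃ c : ℝ, f v = c • v := by
  induction m using Nat.strong_induction_on with
  | _ m ih =>
  intro V _ _ _ S hm hodd hS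
  by_cases hall : ∀ f ∈ S, ∃ c : ℝ, f = c • LinearMap.id
  · have : 0 < Module.finrank ℝ V := by rw [hm]; exact hodd.pos
    have := Module.finrank_pos_iff.mp this
    obtain ⟨v, hv⟩ := exists_ne (0 : V)
    refine ⟨v, hv, fun f hf => ?_⟩
    obtain ⟨c, hc⟩ := hall f hf
    exact ⟨c, by rw [hc]; simp⟩
  push Not at hall
  obtain ⟨f, hf, hfc⟩ := hall
  -- real eigenvalue
  have hroot : ∃ c : ℝ, f.charpoly.IsRoot c := by
    have hdeg : Odd f.charpoly.natDegree := by rw [LinearMap.charpoly_natDegree, hm]; exact hodd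
    exact HI.odd_root _ (LinearMap.charpoly_monic f) hdeg
  obtain ⟨c, hc⟩ := hroot
  have hev : Module.End.HasEigenvalue f c :=
    (Module.End.hasEigenvalue_iff_isRoot_charpoly f c).mpr hc
  set g : Module.End ℝ V := f - c • LinearMap.id with hg
  have hcomm : ∀ h ∈ S, Commute g h := by
    intro h hh
    have h1 := hS f hf h hh
    have h2 : Commute (c • (LinearMap.id : Module.End ℝ V)) h := by
      ext x; simp
    exact h1.sub_left h2
  have key : ∀ W : Submodule ℝ V, (∀ h ∈ S, ∀ x ∈ W, h x ∈ W) → Odd (Module.finrank ℝ W) →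
      Module.finrank ℝ W < m → ∃ v : V, v ≠ 0 ∧ ∀ f ∈ S, ∃ c : ℝ, f v = c • v := by
    intro W hW ho hlt
    obtain ⟨v, hv0, hv⟩ := ih _ hlt W {h' | ∃ h ∈ S, ∀ x : W, ((h' x : W) : V) = h x} rfl ho (by
      rintro a ⟨a', ha', ha⟩ b ⟨b', hb', hb⟩
      ext x
      have := LinearMap.congr_fun (hS a' ha' b' hb') (x : V)
      simp only [Module.End.mul_apply] at this ⊢
      rw [ha, hb, hb, ha, this])
    refine ⟨v, by simpa using hv0, fun h hh => ?_⟩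
    obtain ⟨c, hc⟩ := hv (h.restrict (hW h hh)) ⟨h, hh, fun x => rfl⟩
    exact ⟨c, by simpa using congrArg Subtype.val hc⟩
  have hsum := LinearMap.finrank_range_add_finrank_ker g
  rw [hm] at hsum
  have hkpos : 0 < Module.finrank ℝ (LinearMap.ker g) := by
    rw [Module.finrank_pos_iff, Submodule.nontrivial_iff_ne_bot]
    obtain ⟨v, hv⟩ := hev.exists_hasEigenvector
    intro hb
    have : v ∈ LinearMap.ker g := by
      rw [LinearMap.mem_ker, hg]; simp [hv.apply_eq_smul]
    rw [hb] at this
    exact hv.2 (by simpa using this)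
  have hrpos : 0 < Module.finrank ℝ (LinearMap.range g) := by
    rw [Module.finrank_pos_iff, Submodule.nontrivial_iff_ne_bot]
    intro hb
    rw [LinearMap.range_eq_bot] at hb
    exact hfc c (sub_eq_zero.mp hb)
  rcases Nat.even_or_odd (Module.finrank ℝ (LinearMap.ker g)) with he | ho
  · apply key (LinearMap.range g)
    · rintro h hh _ ⟨x, rfl⟩
      exact ⟨h x, LinearMap.congr_fun (hcomm h hh) x⟩
    · rw [← hsum] at hodd
      exact (Nat.odd_add.mp hodd).mpr he
    · omega
  · apply key (LinearMap.ker g)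
    · intro h hh x hx
      rw [LinearMap.mem_ker] at hx ⊢
      have := LinearMap.congr_fun (hcomm h hh) x
      simp only [Module.End.mul_apply] at this
      rw [this, hx, map_zero]
    · exact ho
    · omega

theorem HI.card_sum_eq (N m : ℕ) :
    Nat.card {d : Fin (N+1) →₀ ℕ | d.degree = m} = (N + m).choose N := by
  have h := Finset.card_finsuppAntidiag_nat_eq_choose (s := (Finset.univ : Finset (Fin (N+1)))) m
  have h2 : {d : Fin (N+1) →₀ ℕ | d.degree = m} = ((Finset.univ : Finset (Fin (N+1))).finsuppAntidiag m : Set _) := by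
    ext d
    simp [Finset.mem_finsuppAntidiag, Finsupp.degree_eq_sum]
  rw [h2, Nat.card_coe_set_eq, Set.ncard_coe_finset, h]
  simp only [Finset.card_univ, Fintype.card_fin]
  rw [show N + 1 + m - 1 = N + m by omega, Nat.choose_symm_add]

theorem HI.finrank_deg (N m : ℕ) :
    Module.finrank ℝ (MvPolynomial.restrictTotalDegree (Fin N) ℝ m) = (m + N).choose N := by
  unfold MvPolynomial.restrictTotalDegree
  rw [Module.finrank_eq_nat_card_basis (MvPolynomial.basisRestrictSupport ℝ _), add_comm, ← HI.card_sum_eq]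
  apply Nat.card_congr
  refine ⟨fun d => ⟨Finsupp.cons (m - d.1.degree) d.1, ?_⟩, fun d => ⟨Finsupp.tail d.1, ?_⟩, ?_, ?_⟩
  · have h : d.1.degree ≤ m := d.2
    have : (Finsupp.cons (m - d.1.degree) d.1).degree = (m - d.1.degree) + d.1.degree := by
      rw [Finsupp.degree_eq_sum, Fin.sum_univ_succ, Finsupp.degree_eq_sum]; simp
    simp only [Set.mem_ofPred_eq, this]; omega
  · have h : d.1.degree = m := d.2
    have : (Finsupp.tail d.1).degree ≤ m := by
      refine le_trans ?_ h.le
      rw [Finsupp.degree_eq_sum, Finsupp.degree_eq_sum, Fin.sum_univ_succ]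
      simp [Finsupp.tail_apply]
    exact this
  · rintro ⟨d, hd⟩
    simp
  · rintro ⟨d, hd⟩
    have h : d.degree = m := hd
    apply Subtype.ext
    have : m - (Finsupp.tail d).degree = d 0 := by
      rw [← h, Finsupp.degree_eq_sum, Finsupp.degree_eq_sum, Fin.sum_univ_succ]
      simp [Finsupp.tail_apply]
    simp only [this, Finsupp.cons_tail]

open Filter Topology in
theorem HI.choose_ratio (N c : ℕ) :
    Tendsto (fun m : ℕ => (((m + c + N).choose N : ℕ) : ℝ) / (((m + N).choose N : ℕ) : ℝ)) atTop (𝓝 1) := by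
  have hpos : ∀ m : ℕ, (0:ℝ) < (((m + N).choose N : ℕ) : ℝ) := fun m => by
    exact_mod_cast Nat.choose_pos (by omega)
  induction c with
  | zero =>
    refine tendsto_const_nhds.congr fun m => ?_
    rw [add_zero, div_self (hpos m).ne']
  | succ c ih =>
    have h1 : Tendsto (fun m : ℕ => 1 + (N : ℝ) / ((m + c + 1 : ℕ) : ℝ)) atTop (𝓝 1) := by
      have : Tendsto (fun m : ℕ => (N : ℝ) / ((m + c + 1 : ℕ) : ℝ)) atTop (𝓝 0) :=
        tendsto_const_nhds.div_atTop (tendsto_natCast_atTop_atTop.comp (tendsto_add_atTop_nat (c+1)))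
      simpa using this.const_add 1
    have h2 := ih.mul h1
    rw [one_mul] at h2
    refine h2.congr fun m => ?_
    have h3 := Nat.add_one_mul_choose_eq (m + c + N) (m + c)
    have h4 : (m + c + N).choose (m + c) = (m + c + N).choose N := by
      rw [Nat.choose_symm_add]
    have h5 : (m + c + N + 1).choose (m + c + 1) = (m + (c + 1) + N).choose N := by
      rw [show m + c + N + 1 = (m + c + 1) + N by ring, Nat.choose_symm_add]; rfl
    rw [h4, h5] at h3
    have h6 : ((m + c + N + 1 : ℕ) : ℝ) * (((m + c + N).choose N : ℕ) : ℝ) = (((m + (c + 1) + N).choose N : ℕ) : ℝ) * ((m + c + 1 : ℕ) : ℝ) := by exact_mod_cast h3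
    have := (hpos m).ne'
    have h7 : ((m + c + 1 : ℕ) : ℝ) ≠ 0 := by positivity
    field_simp
    rw [mul_comm (((m + c + 1 : ℕ)) : ℝ), ← h6]; push_cast; ring

theorem HI.finrank_mul_le {B : Type*} [CommRing B] [Algebra ℝ B] (M K : Submodule ℝ B)
    [Module.Finite ℝ M] [Module.Finite ℝ K] :
    Module.finrank ℝ ↥(M * K) ≤ Module.finrank ℝ M * Module.finrank ℝ K := by
  rw [← Module.finrank_tensorProduct, ← Submodule.mulMap_range]
  exact LinearMap.finrank_range_le _

section
open Filter Topology

theorem HI.prod_mem_prod {K B ι : Type*} [CommSemiring K] [CommSemiring B] [Algebra K B] (s : Finset ι)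
    (f : ι → B) (M : ι → Submodule K B) (h : ∀ i ∈ s, f i ∈ M i) :
    ∏ i ∈ s, f i ∈ ∏ i ∈ s, M i := by
  classical
  induction s using Finset.induction_on with
  | empty => simp; exact ⟨1, map_one _⟩
  | insert a s ha ih =>
    rw [Finset.prod_insert ha, Finset.prod_insert ha]
    exact Submodule.mul_mem_mul (h a (by simp)) (ih fun i hi => h i (by simp [hi]))

theorem HI.lam_le {B : Type*} [CommRing B] [Algebra ℝ B] {N : ℕ} (lam : Fin N → B) (m : ℕ) :
    (Submodule.span ℝ (insert 1 (Set.range lam))) ^ m ≤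
      (MvPolynomial.restrictTotalDegree (Fin N) ℝ m).map (MvPolynomial.aeval lam).toLinearMap := by
  induction m with
  | zero =>
    rw [pow_zero, Submodule.one_le]
    refine ⟨1, ?_, by simp⟩
    simp [MvPolynomial.mem_restrictTotalDegree]
  | succ m ih =>
    rw [pow_succ]
    refine (mul_le_mul' ih le_rfl).trans ?_
    rw [Submodule.mul_le]
    rintro _ ⟨p, hp, rfl⟩ x hx
    have hp' : p.totalDegree ≤ m := (MvPolynomial.mem_restrictTotalDegree _ _ _).mp hp
    induction hx using Submodule.span_induction with
    | mem x hx =>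
      rcases hx with rfl | ⟨k, rfl⟩
      · refine ⟨p, ?_, by simp⟩
        exact (MvPolynomial.mem_restrictTotalDegree _ _ _).mpr (by omega)
      · refine ⟨p * MvPolynomial.X k, ?_, by simp⟩
        refine (MvPolynomial.mem_restrictTotalDegree _ _ _).mpr ?_
        refine (MvPolynomial.totalDegree_mul _ _).trans ?_
        rw [MvPolynomial.totalDegree_X]; omega
    | zero => simp
    | add x y _ _ hx hy => rw [mul_add]; exact Submodule.add_mem _ hx hy
    | smul c x _ hx => rw [mul_smul_comm]; exact Submodule.smul_mem _ _ hx

theorem HI.le_lam {B : Type*} [CommRing B] [Algebra ℝ B] {N : ℕ} (lam : Fin N → B) (S : Submodule ℝ B)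
    (h1 : 1 ∈ S) (hl : ∀ k, lam k ∈ S) (m : ℕ) (p : MvPolynomial (Fin N) ℝ) (hp : p.totalDegree ≤ m) :
    MvPolynomial.aeval lam p ∈ S ^ m := by
  have hone : (1 : Submodule ℝ B) ≤ S := Submodule.one_le.mpr h1
  rw [p.as_sum, map_sum]
  refine Submodule.sum_mem _ fun d hd => ?_
  rw [MvPolynomial.aeval_monomial, ← Algebra.smul_def]
  refine Submodule.smul_mem _ _ ?_
  have hdm : d.degree ≤ m := (MvPolynomial.le_totalDegree hd).trans hp
  refine (pow_le_pow_right₀ hone hdm) ?_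
  rw [Finsupp.prod, Finsupp.degree_apply, ← Finset.prod_pow_eq_pow_sum]
  exact HI.prod_mem_prod _ _ _ fun i _ => Submodule.pow_mem_pow _ (hl i) _

/-- injectivity of the polynomial map from growth. -/
theorem HI.AL_inj {B : Type*} [CommRing B] [IsDomain B] [Algebra ℝ B] (S : Submodule ℝ B)
    (hfg : S.FG) {N : ℕ} (lam : Fin N → B) (d0 : ℕ)
    (hfin : ∀ m, S ^ (d0 + m) ≤ (Submodule.span ℝ (insert 1 (Set.range lam))) ^ m * S ^ d0)
    (r : ℕ) (hr : 0 < r)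
    (hgrow : Tendsto (fun d => (Module.finrank ℝ ↥(S ^ d) : ℝ) / (((d + N).choose N : ℕ) : ℝ)) atTop (𝓝 r)) :
    Function.Injective (MvPolynomial.aeval (R := ℝ) lam) := by
  rw [injective_iff_map_eq_zero]
  intro h hh
  by_contra hne
  set e := h.totalDegree with he
  have hSfin : ∀ m, Module.Finite ℝ ↥(S ^ m) := fun m => Module.Finite.iff_fg.mpr (hfg.pow m)
  set D := Module.finrank ℝ ↥(S ^ d0) with hD
  set φ := (MvPolynomial.aeval (R := ℝ) lam).toLinearMap with hφ
  have hbd : ∀ m : ℕ, (Module.finrank ℝ ↥(S ^ (m + (d0 + e))) : ℝ) ≤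
      D * ((((m + e + N).choose N : ℕ) : ℝ) - (((m + N).choose N : ℕ) : ℝ)) := by
    intro m
    set T := (MvPolynomial.restrictTotalDegree (Fin N) ℝ (m + e)) with hT
    have hTfr : Module.finrank ℝ T = (m + e + N).choose N := HI.finrank_deg _ _
    have h1 : Module.finrank ℝ ↥(T.map φ) + (m + N).choose N ≤ (m + e + N).choose N := by
      have hrk := LinearMap.finrank_range_add_finrank_ker (φ.domRestrict T)
      rw [LinearMap.range_domRestrict, hTfr] at hrk
      have hker : (m + N).choose N ≤ Module.finrank ℝ (LinearMap.ker (φ.domRestrict T)) := by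
        rw [← HI.finrank_deg N m]
        let ψ : MvPolynomial.restrictTotalDegree (Fin N) ℝ m →ₗ[ℝ] T :=
          LinearMap.codRestrict T ((LinearMap.mulLeft ℝ h).comp (Submodule.subtype _)) (by
            rintro ⟨p, hp⟩
            rw [MvPolynomial.mem_restrictTotalDegree] at hp
            refine (MvPolynomial.mem_restrictTotalDegree _ _ _).mpr ?_
            refine (MvPolynomial.totalDegree_mul _ _).trans ?_
            change e + p.totalDegree ≤ m + e
            omega)
        let ψ' := LinearMap.codRestrict (LinearMap.ker (φ.domRestrict T)) ψ (by
          intro p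
          rw [LinearMap.mem_ker]
          simp [ψ, hφ, hh])
        apply LinearMap.finrank_le_finrank_of_injective (f := ψ')
        intro p p' hpp
        have h3 := congrArg (fun x => ((x : T) : MvPolynomial (Fin N) ℝ)) (congrArg Subtype.val hpp)
        have h4 : h * (p : MvPolynomial (Fin N) ℝ) = h * p' := h3
        exact Subtype.ext (mul_left_cancel₀ hne h4)
      omega
    have h2 : Module.finrank ℝ ↥(S ^ (m + (d0 + e))) ≤ Module.finrank ℝ ↥(T.map φ) * D := by
      have : Module.Finite ℝ ↥(T.map φ * S ^ d0) := Module.Finite.iff_fg.mpr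
        (Submodule.FG.mul (Module.Finite.iff_fg.mp inferInstance) (hfg.pow _))
      refine le_trans (Submodule.finrank_mono (t := T.map φ * S ^ d0) ?_) (HI.finrank_mul_le _ _)
      rw [show m + (d0 + e) = d0 + (m + e) by ring]
      exact (hfin _).trans (mul_le_mul' (HI.lam_le lam _) le_rfl)
    have h2' : (Module.finrank ℝ ↥(S ^ (m + (d0 + e))) : ℝ) ≤ Module.finrank ℝ ↥(T.map φ) * D := by
      exact_mod_cast h2
    have h1' : (Module.finrank ℝ ↥(T.map φ) : ℝ) + (((m + N).choose N : ℕ) : ℝ) ≤ (((m + e + N).choose N : ℕ) : ℝ) := by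
      exact_mod_cast h1
    refine h2'.trans ?_
    rw [mul_comm]
    exact mul_le_mul_of_nonneg_left (by linarith) (by positivity)
  have hA := hgrow.comp (tendsto_add_atTop_nat (d0 + e))
  have hpos : ∀ m : ℕ, (0:ℝ) < (((m + N).choose N : ℕ) : ℝ) := fun m => by
    exact_mod_cast Nat.choose_pos (by omega)
  have hC : Tendsto (fun m : ℕ => (D : ℝ) * ((((m + e + N).choose N : ℕ) : ℝ) / (((m + N).choose N : ℕ) : ℝ) - 1)) atTop (𝓝 (D * (1 - 1))) :=
    ((HI.choose_ratio N e).sub_const 1).const_mul _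
  rw [sub_self, mul_zero] at hC
  have := le_of_tendsto_of_tendsto hA hC (Eventually.of_forall fun m => by
    simp only [Function.comp]
    have h5 : (((m + N).choose N : ℕ) : ℝ) ≤ (((m + (d0 + e) + N).choose N : ℕ) : ℝ) := by
      exact_mod_cast Nat.choose_le_choose N (by omega)
    calc _ ≤ (Module.finrank ℝ ↥(S ^ (m + (d0 + e))) : ℝ) / (((m + N).choose N : ℕ) : ℝ) := by
          gcongr; exact hpos m
      _ ≤ (D * ((((m + e + N).choose N : ℕ) : ℝ) - (((m + N).choose N : ℕ) : ℝ))) / (((m + N).choose N : ℕ) : ℝ) := by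
          gcongr; exact hbd m
      _ = _ := by
          have := (hpos m).ne'
          field_simp)
  have : (0:ℝ) < r := by exact_mod_cast hr
  linarith
end

section
open Filter Topology

theorem HI.choose_ratio' (N c d : ℕ) :
    Tendsto (fun m : ℕ => (((m + c + N).choose N : ℕ) : ℝ) / (((m + d + N).choose N : ℕ) : ℝ)) atTop (𝓝 1) := by
  have h := (HI.choose_ratio N c).div (HI.choose_ratio N d) one_ne_zero
  rw [div_one] at h
  refine h.congr fun m => ?_
  have hpos : ∀ m : ℕ, (0:ℝ) < (((m + N).choose N : ℕ) : ℝ) := fun m => by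
    exact_mod_cast Nat.choose_pos (by omega)
  have := (hpos m).ne'
  have := (hpos (m+d)).ne'
  simp only [Pi.div_apply]
  field_simp

/-- combination map -/
noncomputable def HI.comb {B : Type*} [CommRing B] [Algebra ℝ B] {N : ℕ} (lam : Fin N → B)
    {κ : Type*} [Fintype κ] (w : κ → B) (m : ℕ) :
    (κ → MvPolynomial.restrictTotalDegree (Fin N) ℝ m) →ₗ[ℝ] B where
  toFun p := ∑ i, MvPolynomial.aeval lam (p i : MvPolynomial (Fin N) ℝ) * w i
  map_add' p q := by simp [add_mul, Finset.sum_add_distrib]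
  map_smul' c p := by simp [Finset.smul_sum]

theorem HI.comb_finrank {B : Type*} [CommRing B] [Algebra ℝ B] {N : ℕ} (lam : Fin N → B)
    {κ : Type*} [Fintype κ] (m : ℕ) : Module.finrank ℝ (κ → MvPolynomial.restrictTotalDegree (Fin N) ℝ m)
      = Fintype.card κ * (m + N).choose N := by
  rw [Module.finrank_pi_fintype]
  simp [HI.finrank_deg]

theorem HI.le_comb {B : Type*} [CommRing B] [Algebra ℝ B] (S : Submodule ℝ B)
    {N : ℕ} (lam : Fin N → B) (d0 : ℕ)
    (hfin : ∀ m, S ^ (d0 + m) ≤ (Submodule.span ℝ (insert 1 (Set.range lam))) ^ m * S ^ d0)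
    {D : ℕ} (w : Fin D → B) (hw : Submodule.span ℝ (Set.range w) = S ^ d0) (m : ℕ) :
    S ^ (d0 + m) ≤ LinearMap.range (HI.comb lam w m) := by
  classical
  refine (hfin m).trans ((mul_le_mul' (HI.lam_le lam m) le_rfl).trans ?_)
  rw [← hw, Submodule.mul_le]
  rintro _ ⟨p, hp, rfl⟩ x hx
  induction hx using Submodule.span_induction with
  | mem x hx =>
    obtain ⟨i, rfl⟩ := hx
    refine ⟨Pi.single i ⟨p, hp⟩, ?_⟩
    simp only [HI.comb, LinearMap.coe_mk, AddHom.coe_mk]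
    rw [Finset.sum_eq_single i]
    · simp
    · intro j _ hj; simp [Pi.single_eq_of_ne hj]
    · simp
  | zero => simp
  | add x y _ _ hx hy => rw [mul_add]; exact Submodule.add_mem _ hx hy
  | smul c x _ hx => rw [mul_smul_comm]; exact Submodule.smul_mem _ _ hx

/-- First half: a generic "basis" of odd size. -/
theorem HI.AL_basis {B : Type*} [CommRing B] [IsDomain B] [Algebra ℝ B] (S : Submodule ℝ B) (h1 : 1 ∈ S)
    (hfg : S.FG) {N : ℕ} (lam : Fin N → B) (hl : ∀ k, lam k ∈ S) (d0 : ℕ)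
    (hfin0 : S ^ (d0 + 1) ≤ (Submodule.span ℝ (insert 1 (Set.range lam))) * S ^ d0)
    (r : ℕ) (hr : 0 < r)
    (hgrow : Tendsto (fun d => (Module.finrank ℝ ↥(S ^ d) : ℝ) / (((d + N).choose N : ℕ) : ℝ)) atTop (𝓝 r)) :
    ∃ (x : Fin r → B) (g : MvPolynomial (Fin N) ℝ), g ≠ 0 ∧ (∀ j, x j ∈ Algebra.adjoin ℝ (S : Set B)) ∧
      (∀ c : Fin r → MvPolynomial (Fin N) ℝ, ∑ j, MvPolynomial.aeval lam (c j) * x j = 0 → c = 0) ∧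
      (∀ f ∈ Algebra.adjoin ℝ (S : Set B), ∃ c : Fin r → MvPolynomial (Fin N) ℝ,
        MvPolynomial.aeval lam g * f = ∑ j, MvPolynomial.aeval lam (c j) * x j) := by
  classical
  have hone : (1 : Submodule ℝ B) ≤ S := Submodule.one_le.mpr h1
  have hfin : ∀ m, S ^ (d0 + m) ≤ (Submodule.span ℝ (insert 1 (Set.range lam))) ^ m * S ^ d0 := by
    intro m
    induction m with
    | zero => simp
    | succ m ih =>
      rw [← add_assoc, pow_succ]
      refine (mul_le_mul' ih le_rfl).trans ?_
      rw [mul_assoc, ← pow_succ, pow_succ (Submodule.span ℝ _), mul_assoc]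
      exact mul_le_mul' le_rfl hfin0
  have hinj := HI.AL_inj S hfg lam d0 hfin r hr hgrow
  have hSfin : ∀ m, Module.Finite ℝ ↥(S ^ m) := fun m => Module.Finite.iff_fg.mpr (hfg.pow m)
  obtain ⟨D, w, hw⟩ := Submodule.fg_iff_exists_fin_generating_family.mp (hfg.pow d0)
  let modA : Module (MvPolynomial (Fin N) ℝ) B := Module.compHom B (MvPolynomial.aeval (R := ℝ) lam).toRingHom
  have smul_def : ∀ (p : MvPolynomial (Fin N) ℝ) (b : B), p • b = MvPolynomial.aeval lam p * b := fun p b => rfl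
  obtain ⟨s, hli, hmax⟩ := exists_maximal_linearIndepOn (MvPolynomial (Fin N) ℝ) w
  have hall : ∀ i, ∃ a : MvPolynomial (Fin N) ℝ, a ≠ 0 ∧ a • w i ∈ Submodule.span (MvPolynomial (Fin N) ℝ) (w '' s) := by
    intro i
    by_cases hi : i ∈ s
    · exact ⟨1, one_ne_zero, by rw [one_smul]; exact Submodule.subset_span ⟨i, hi, rfl⟩⟩
    · exact hmax i hi
  choose a ha0 ha using hall
  set g := ∏ i, a i with hg
  have hg0 : g ≠ 0 := Finset.prod_ne_zero_iff.mpr fun i _ => ha0 i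
  have hgw : ∀ i, ∃ c : s → MvPolynomial (Fin N) ℝ, ∑ j, MvPolynomial.aeval lam (c j) * w j = MvPolynomial.aeval lam g * w i := by
    intro i
    have h2 : g • w i ∈ Submodule.span (MvPolynomial (Fin N) ℝ) (w '' s) := by
      rw [hg, ← Finset.prod_erase_mul _ _ (Finset.mem_univ i), mul_smul]
      exact Submodule.smul_mem _ _ (ha i)
    rw [Set.image_eq_range, Submodule.mem_span_range_iff_exists_fun] at h2
    exact h2
  choose G hG using hgw
  have hlin : ∀ c : s → MvPolynomial (Fin N) ℝ, ∑ j, MvPolynomial.aeval lam (c j) * w j = 0 → c = 0 := by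
    intro c hc
    have := Fintype.linearIndependent_iff.mp hli c hc
    exact funext this
  have hwS : ∀ i, w i ∈ S ^ d0 := fun i => hw ▸ Submodule.subset_span ⟨i, rfl⟩
  -- lower bound
  have hlow : ∀ m, Fintype.card s * (m + N).choose N ≤ Module.finrank ℝ ↥(S ^ (d0 + m)) := by
    intro m
    rw [← HI.comb_finrank lam]
    have hmem : ∀ p, HI.comb lam (fun j : s => w j) m p ∈ S ^ (d0 + m) := by
      intro p
      simp only [HI.comb, LinearMap.coe_mk, AddHom.coe_mk]
      refine Submodule.sum_mem _ fun j _ => ?_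
      rw [add_comm, pow_add]
      exact Submodule.mul_mem_mul (HI.le_lam lam S h1 hl m _ ((MvPolynomial.mem_restrictTotalDegree _ _ _).mp (p j).2)) (hwS j)
    apply LinearMap.finrank_le_finrank_of_injective (f := LinearMap.codRestrict (S ^ (d0 + m)) (HI.comb lam (fun j : s => w j) m) hmem)
    rw [← LinearMap.ker_eq_bot, LinearMap.ker_codRestrict, LinearMap.ker_eq_bot']
    intro p hp
    have := hlin (fun j => (p j : MvPolynomial (Fin N) ℝ)) hp
    funext j
    exact Subtype.ext (congrFun this j)
  -- upper bound
  obtain ⟨c, hc⟩ : ∃ c, ∀ i j, (G i j).totalDegree ≤ c := by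
    refine ⟨∑ i, ∑ j, (G i j).totalDegree, fun i j => ?_⟩
    refine le_trans ?_ (Finset.single_le_sum (fun _ _ => Nat.zero_le _) (Finset.mem_univ i))
    exact (Finset.single_le_sum (f := fun j => (G i j).totalDegree) (fun _ _ => Nat.zero_le _) (Finset.mem_univ j))
  have hcombG : ∀ p : Fin D → MvPolynomial (Fin N) ℝ, MvPolynomial.aeval lam g * (∑ i, MvPolynomial.aeval lam (p i) * w i) =
      ∑ j : s, MvPolynomial.aeval lam (∑ i, p i * G i j) * w j := by
    intro p
    simp only [map_sum, map_mul, Finset.mul_sum, Finset.sum_mul]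
    rw [Finset.sum_comm]
    refine Finset.sum_congr rfl fun i _ => ?_
    rw [mul_left_comm, ← hG i, Finset.mul_sum]
    exact Finset.sum_congr rfl fun j _ => by ring
  have hup : ∀ m, Module.finrank ℝ ↥(S ^ (d0 + m)) ≤ Fintype.card s * (m + c + N).choose N := by
    intro m
    rw [← HI.comb_finrank lam]
    refine le_trans ?_ (LinearMap.finrank_range_le (HI.comb lam (fun j : s => w j) (m + c)))
    have hmem : ∀ f : ↥(S ^ (d0 + m)), MvPolynomial.aeval lam g * f ∈ LinearMap.range (HI.comb lam (fun j : s => w j) (m + c)) := by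
      rintro ⟨f, hf⟩
      obtain ⟨p, rfl⟩ := HI.le_comb S lam d0 hfin w hw m hf
      refine ⟨fun j => ⟨∑ i, (p i : MvPolynomial (Fin N) ℝ) * G i j, ?_⟩, ?_⟩
      · refine (MvPolynomial.mem_restrictTotalDegree _ _ _).mpr ?_
        refine MvPolynomial.totalDegree_finsetSum_le fun i _ => ?_
        refine (MvPolynomial.totalDegree_mul _ _).trans ?_
        exact add_le_add ((MvPolynomial.mem_restrictTotalDegree _ _ _).mp (p i).2) (hc i j)
      · exact (hcombG _).symm
    apply LinearMap.finrank_le_finrank_of_injective (f := LinearMap.codRestrict _ ((LinearMap.mulLeft ℝ (MvPolynomial.aeval lam g)).comp (Submodule.subtype _)) hmem)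
    intro p p' hpp
    have h4 : MvPolynomial.aeval lam g * (p : B) = MvPolynomial.aeval lam g * p' := congrArg Subtype.val hpp
    refine Subtype.ext (mul_left_cancel₀ ?_ h4)
    intro h0
    exact hg0 (hinj (by rw [h0, map_zero]))
  -- comparison
  have hcard : Fintype.card s = r := by
    have hpos : ∀ m : ℕ, (0:ℝ) < (((m + N).choose N : ℕ) : ℝ) := fun m => by
      exact_mod_cast Nat.choose_pos (by omega)
    have hA := hgrow.comp (tendsto_add_atTop_nat d0)
    have hlo := (HI.choose_ratio' N 0 d0).const_mul (Fintype.card s : ℝ)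
    have hhi := (HI.choose_ratio' N c d0).const_mul (Fintype.card s : ℝ)
    rw [mul_one] at hlo hhi
    have e1 := le_of_tendsto_of_tendsto hlo hA (Eventually.of_forall fun m => by
      simp only [Function.comp]
      rw [← mul_div_assoc]
      refine div_le_div_of_nonneg_right ?_ (hpos _).le
      have h7 := hlow m
      rw [add_comm d0 m] at h7
      exact_mod_cast h7)
    have e2 := le_of_tendsto_of_tendsto hA hhi (Eventually.of_forall fun m => by
      simp only [Function.comp]
      rw [← mul_div_assoc]
      refine div_le_div_of_nonneg_right ?_ (hpos _).le
      have h7 := hup m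
      rw [add_comm d0 m] at h7
      exact_mod_cast h7)
    exact_mod_cast le_antisymm e1 e2
  have eqv : Fin r ≃ s := (Fintype.equivFinOfCardEq hcard).symm
  have hmemadj : ∀ m, ∀ f ∈ S ^ m, f ∈ Algebra.adjoin ℝ (S : Set B) := by
    intro m
    induction m with
    | zero =>
      intro f hf
      rw [pow_zero, Submodule.mem_one] at hf
      obtain ⟨y, rfl⟩ := hf
      exact Subalgebra.algebraMap_mem _ y
    | succ m ih =>
      intro f hf
      rw [pow_succ] at hf
      induction hf using Submodule.mul_induction_on' with
      | mem_mul_mem a ha b hb => exact Subalgebra.mul_mem _ (ih a ha) (Algebra.subset_adjoin hb)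
      | add x _ y _ hx hy => exact Subalgebra.add_mem _ hx hy
  refine ⟨fun j => w (eqv j), g, hg0, fun j => hmemadj _ _ (hwS _), ?_, ?_⟩
  · intro c hc
    have := hlin (fun j => c (eqv.symm j)) (by
      rw [← eqv.sum_comp]; simpa using hc)
    funext j
    simpa using congrFun this (eqv j)
  · intro f hf
    have hf' : ∃ m, f ∈ S ^ (d0 + m) := by
      suffices h : ∃ m, f ∈ S ^ m by
        obtain ⟨m, hm⟩ := h
        exact ⟨m, pow_le_pow_right₀ hone (by omega) hm⟩
      induction hf using Algebra.adjoin_induction with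
      | mem x hx => exact ⟨1, by simpa using hx⟩
      | algebraMap r => exact ⟨0, by rw [pow_zero]; exact Submodule.algebraMap_mem r⟩
      | add x y _ _ hx hy =>
        obtain ⟨m, hm⟩ := hx
        obtain ⟨m', hm'⟩ := hy
        exact ⟨m + m', Submodule.add_mem _ (pow_le_pow_right₀ hone (by omega) hm) (pow_le_pow_right₀ hone (by omega) hm')⟩
      | mul x y _ _ hx hy =>
        obtain ⟨m, hm⟩ := hx
        obtain ⟨m', hm'⟩ := hy
        exact ⟨m + m', by rw [pow_add]; exact Submodule.mul_mem_mul hm hm'⟩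
    obtain ⟨m, hm⟩ := hf'
    obtain ⟨p, rfl⟩ := HI.le_comb S lam d0 hfin w hw m hm
    refine ⟨fun j => ∑ i, (p i : MvPolynomial (Fin N) ℝ) * G i (eqv j), ?_⟩
    rw [eqv.sum_comp (fun j : s => MvPolynomial.aeval lam (∑ i, (p i : MvPolynomial (Fin N) ℝ) * G i j) * w j)]
    exact hcombG _

theorem HI.AL {B : Type*} [CommRing B] [IsDomain B] [Algebra ℝ B] (S : Submodule ℝ B) (h1 : 1 ∈ S)
    (hfg : S.FG) {N : ℕ} (lam : Fin N → B) (hl : ∀ k, lam k ∈ S) (d0 : ℕ)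
    (hfin0 : S ^ (d0 + 1) ≤ (Submodule.span ℝ (insert 1 (Set.range lam))) * S ^ d0)
    (r : ℕ) (hr : Odd r)
    (hgrow : Tendsto (fun d => (Module.finrank ℝ ↥(S ^ d) : ℝ) / (((d + N).choose N : ℕ) : ℝ)) atTop (𝓝 r)) :
    ∃ g : MvPolynomial (Fin N) ℝ, g ≠ 0 ∧ ∀ y : Fin N → ℝ, MvPolynomial.eval y g ≠ 0 →
      ∃ χ : Algebra.adjoin ℝ (S : Set B) →ₐ[ℝ] ℝ, ∀ k, χ ⟨lam k, Algebra.subset_adjoin (hl k)⟩ = y k := by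
  classical
  obtain ⟨x, g, hg0, hx, hli, hspan⟩ := HI.AL_basis S h1 hfg lam hl d0 hfin0 r hr.pos hgrow
  refine ⟨g, hg0, fun y hy => ?_⟩
  set R := Algebra.adjoin ℝ (S : Set B) with hR
  have huniq : ∀ c c' : Fin r → MvPolynomial (Fin N) ℝ, ∑ j, MvPolynomial.aeval lam (c j) * x j =
      ∑ j, MvPolynomial.aeval lam (c' j) * x j → c = c' := by
    intro c c' h
    have := hli (c - c') (by
      simp only [Pi.sub_apply, map_sub, sub_mul, Finset.sum_sub_distrib, h, sub_self])
    exact sub_eq_zero.mp this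
  have hex : ∀ (f : R) (k : Fin r), ∃ c : Fin r → MvPolynomial (Fin N) ℝ,
      MvPolynomial.aeval lam g * ((f : B) * x k) = ∑ j, MvPolynomial.aeval lam (c j) * x j :=
    fun f k => hspan _ (R.mul_mem f.2 (hx k))
  choose M hM using hex
  have hMuniq : ∀ (f : R) (k : Fin r) (c : Fin r → MvPolynomial (Fin N) ℝ),
      MvPolynomial.aeval lam g * ((f : B) * x k) = ∑ j, MvPolynomial.aeval lam (c j) * x j → M f k = c := by
    intro f k c hc
    exact huniq _ _ (by rw [← hM, hc])
  have hMadd : ∀ f f' k j, M (f + f') k j = M f k j + M f' k j := by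
    intro f f' k j
    rw [hMuniq (f + f') k (fun j => M f k j + M f' k j)]
    simp only [map_add, add_mul, Finset.sum_add_distrib, ← hM]
    push_cast; ring
  have hMlam : ∀ (p : MvPolynomial (Fin N) ℝ) (f : R), (f : B) = MvPolynomial.aeval lam p → ∀ k j,
      M f k j = if k = j then g * p else 0 := by
    intro p f hf k j
    rw [hMuniq f k (fun j => if k = j then g * p else 0)]
    rw [Finset.sum_eq_single k]
    · simp [hf, mul_assoc]
    · intro b _ hb; simp [hb.symm]
    · simp
  have hMmul : ∀ f f' k i, g * M (f * f') k i = ∑ j, M f k j * M f' j i := by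
    intro f f' k i
    have : (fun i => g * M (f * f') k i) = fun i => ∑ j, M f k j * M f' j i := by
      apply huniq
      simp only [map_mul, map_sum, mul_assoc, ← Finset.mul_sum, ← hM, Finset.sum_mul]
      rw [Finset.sum_comm]
      simp only [← Finset.mul_sum, ← hM]
      push_cast
      calc _ = (MvPolynomial.aeval lam g * f') * (MvPolynomial.aeval lam g * ((f : B) * x k)) := by ring
        _ = _ := by
          rw [hM, Finset.mul_sum]
          exact Finset.sum_congr rfl fun j _ => by ring
    exact congrFun this i
  set γ := MvPolynomial.eval y g with hγ
  let ρ : R → Matrix (Fin r) (Fin r) ℝ := fun f => Matrix.of fun k j => MvPolynomial.eval y (M f k j) / γ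
  have hρadd : ∀ f f', ρ (f + f') = ρ f + ρ f' := by
    intro f f'; ext k j; simp [ρ, hMadd, add_div]
  have hρmul : ∀ f f', ρ (f * f') = ρ f * ρ f' := by
    intro f f'; ext k i
    have := congrArg (MvPolynomial.eval y) (hMmul f f' k i)
    simp only [map_mul, map_sum] at this
    simp only [ρ, Matrix.mul_apply, Matrix.of_apply]
    rw [eq_div_of_mul_eq hy ((mul_comm _ _).trans this), Finset.sum_div, Finset.sum_div]
    refine Finset.sum_congr rfl fun j _ => ?_
    field_simp
  have hρlam : ∀ (p : MvPolynomial (Fin N) ℝ) (f : R), (f : B) = MvPolynomial.aeval lam p →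
      ρ f = (MvPolynomial.eval y p) • 1 := by
    intro p f hf
    ext k j
    simp only [ρ, Matrix.of_apply, hMlam p f hf, Matrix.smul_apply, Matrix.one_apply]
    split_ifs
    · rw [map_mul, ← hγ, smul_eq_mul, mul_one, mul_div_cancel_left₀ _ hy]
    · simp
  obtain ⟨v, hv0, hv⟩ := HI.common_eig r (Fin r → ℝ) (Set.range fun f => Matrix.toLin' (ρ f)) (by simp) hr (by
    rintro _ ⟨f, rfl⟩ _ ⟨f', rfl⟩
    change _ * _ = _ * _
    rw [Module.End.mul_eq_comp, Module.End.mul_eq_comp, ← Matrix.toLin'_mul, ← Matrix.toLin'_mul, ← hρmul, ← hρmul, mul_comm])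
  have hv' : ∀ f, ∃ c : ℝ, ρ f *ᵥ v = c • v := by
    intro f
    obtain ⟨c, hc⟩ := hv _ ⟨f, rfl⟩
    exact ⟨c, by simpa using hc⟩
  choose χ hχ using hv'
  have hsm : ∀ a b : ℝ, a • v = b • v → a = b := fun a b h => smul_left_injective ℝ hv0 h
  have hχlam : ∀ (p : MvPolynomial (Fin N) ℝ) (f : R), (f : B) = MvPolynomial.aeval lam p → χ f = MvPolynomial.eval y p := by
    intro p f hf
    apply hsm
    rw [← hχ, hρlam p f hf, Matrix.smul_mulVec, Matrix.one_mulVec]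
  refine ⟨{ toFun := χ, map_one' := ?_, map_mul' := ?_, map_zero' := ?_, map_add' := ?_, commutes' := ?_ }, ?_⟩
  · rw [hχlam 1 1 (by simp)]; simp
  · intro f f'
    apply hsm
    rw [← hχ, hρmul, ← Matrix.mulVec_mulVec, hχ f', Matrix.mulVec_smul, hχ f, smul_smul, mul_comm]
  · rw [hχlam 0 0 (by simp)]; simp
  · intro f f'
    apply hsm
    rw [← hχ, hρadd, Matrix.add_mulVec, hχ, hχ, add_smul]
  · intro c
    change χ _ = _
    rw [hχlam (MvPolynomial.C c) _ (by simp)]; simp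
  · intro k
    change χ _ = _
    rw [hχlam (MvPolynomial.X k) _ (by simp)]; simp
end

abbrev HI.P (n : ℕ) := MvPolynomial (Fin 4 × Fin (n+1)) ℂ

noncomputable section

def HI.Xm (n : ℕ) (i j : Fin (n+1)) : HI.P n :=
  MvPolynomial.X (0, i) * MvPolynomial.X (2, j) + MvPolynomial.X (1, i) * MvPolynomial.X (3, j)

def HI.dE (n : ℕ) : Derivation ℂ (HI.P n) (HI.P n) := MvPolynomial.mkDerivation ℂ fun ci =>
  (![0, MvPolynomial.X (0, ci.2), - MvPolynomial.X (3, ci.2), 0] : Fin 4 → HI.P n) ci.1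

def HI.dF (n : ℕ) : Derivation ℂ (HI.P n) (HI.P n) := MvPolynomial.mkDerivation ℂ fun ci =>
  (![MvPolynomial.X (1, ci.2), 0, 0, - MvPolynomial.X (2, ci.2)] : Fin 4 → HI.P n) ci.1

def HI.dH (n : ℕ) : Derivation ℂ (HI.P n) (HI.P n) := MvPolynomial.mkDerivation ℂ fun ci =>
  (![MvPolynomial.X ci, - MvPolynomial.X ci, - MvPolynomial.X ci, MvPolynomial.X ci] : Fin 4 → HI.P n) ci.1

end

theorem HI.comm_EF (n : ℕ) (x : HI.P n) :
    HI.dE n (HI.dF n x) = HI.dF n (HI.dE n x) + HI.dH n x := by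
  have : ⁅HI.dE n, HI.dF n⁆ = HI.dH n := by
    apply MvPolynomial.derivation_ext
    rintro ⟨c, i⟩
    fin_cases c <;> simp [Derivation.commutator_apply, HI.dE, HI.dF, HI.dH, MvPolynomial.mkDerivation_X]
  rw [← this, Derivation.commutator_apply]; ring

theorem HI.comm_HE (n : ℕ) (x : HI.P n) :
    HI.dH n (HI.dE n x) = HI.dE n (HI.dH n x) + 2 * HI.dE n x := by
  have : ⁅HI.dH n, HI.dE n⁆ = (2 : ℂ) • HI.dE n := by
    apply MvPolynomial.derivation_ext
    rintro ⟨c, i⟩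
    fin_cases c <;> simp [Derivation.commutator_apply, HI.dE, HI.dH, MvPolynomial.mkDerivation_X, two_smul] <;> ring
  have h2 := congrArg (fun D => D x) this
  simp only [Derivation.commutator_apply, Derivation.smul_apply] at h2
  rw [two_smul] at h2
  linear_combination h2

theorem HI.E_nilp (n : ℕ) (x : HI.P n) : ∃ m, ∀ k ≥ m, (HI.dE n)^[k] x = 0 := by
  induction x using MvPolynomial.induction_on with
  | C c =>
    refine ⟨1, fun k hk => ?_⟩
    obtain ⟨k, rfl⟩ := Nat.exists_eq_add_of_le' hk
    rw [Function.iterate_succ_apply]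
    have : HI.dE n (MvPolynomial.C c) = 0 := Derivation.map_algebraMap _ _
    rw [this]; exact Function.iterate_fixed (map_zero _) k
  | add p q hp hq =>
    obtain ⟨m, hm⟩ := hp
    obtain ⟨m', hm'⟩ := hq
    refine ⟨m + m', fun k hk => ?_⟩
    rw [iterate_map_add, hm k (by omega), hm' k (by omega), add_zero]
  | mul_X p v hp =>
    obtain ⟨m, hm⟩ := hp
    have h2 : HI.dE n (HI.dE n (MvPolynomial.X v)) = 0 := by
      obtain ⟨c, i⟩ := v
      fin_cases c <;> simp [HI.dE, MvPolynomial.mkDerivation_X]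
    have key : ∀ k : ℕ, (HI.dE n)^[k+1] (p * MvPolynomial.X v) =
        (HI.dE n)^[k+1] p * MvPolynomial.X v + ((k : HI.P n)+1) * ((HI.dE n)^[k] p * HI.dE n (MvPolynomial.X v)) := by
      intro k
      induction k with
      | zero => simp [Derivation.leibniz]; ring
      | succ k ih =>
        rw [Function.iterate_succ_apply', ih, map_add, Derivation.leibniz, Derivation.leibniz, Derivation.leibniz, h2,
          Function.iterate_succ_apply' _ (k+1), Function.iterate_succ_apply' _ k]
        have : HI.dE n ((k : HI.P n) + 1) = 0 := by simp [map_add]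
        rw [this]
        simp only [smul_eq_mul]
        push_cast; ring
    refine ⟨m + 1, fun k hk => ?_⟩
    obtain ⟨k, rfl⟩ := Nat.exists_eq_add_of_le' (show 1 ≤ k by omega)
    rw [key, hm _ (by omega), hm _ (by omega)]; simp

theorem HI.EF_inj (n : ℕ) (w : HI.P n) (hH : HI.dH n w = 2 * w) (hEF : HI.dE n (HI.dF n w) = 0) : w = 0 := by
  set E := HI.dE n
  have hHm : ∀ m : ℕ, HI.dH n (E^[m] w) = (2 + 2 * m) * E^[m] w := by
    intro m
    induction m with
    | zero => simpa using hH
    | succ m ih =>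
      rw [Function.iterate_succ_apply', HI.comm_HE, ih, Derivation.leibniz]
      have : HI.dE n ((2 : HI.P n) + 2 * m) = 0 := by
        have h : (2 : HI.P n) + 2 * m = ((2 + 2 * m : ℕ) : HI.P n) := by push_cast; ring
        rw [h]; exact Derivation.map_natCast _ _
      rw [this]
      simp only [smul_eq_mul]
      change _ = (2 + 2 * ((m + 1 : ℕ) : HI.P n)) * HI.dE n (E^[m] w)
      push_cast; ring
  have hFE : ∀ m : ℕ, HI.dF n (E^[m+1] w) = - ((m + 1) * (m + 2)) * E^[m] w := by
    intro m
    induction m with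
    | zero =>
      have := HI.comm_EF n w
      rw [hEF, hH] at this
      simp only [Function.iterate_one, zero_add, Function.iterate_zero, id]
      linear_combination -this
    | succ m ih =>
      have h1 := HI.comm_EF n (E^[m+1] w)
      rw [ih, hHm, Derivation.leibniz] at h1
      have : HI.dE n (-(((m : HI.P n) + 1) * (m + 2))) = 0 := by
        have h : (-(((m : HI.P n) + 1) * (m + 2))) = ((-((m + 1) * (m + 2)) : ℤ) : HI.P n) := by push_cast; ring
        rw [h]; exact Derivation.map_intCast _ _
      rw [this] at h1
      rw [Function.iterate_succ_apply']
      have h3 : HI.dE n (E^[m] w) = E^[m+1] w := (Function.iterate_succ_apply' _ _ _).symm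
      rw [h3] at h1
      simp only [smul_eq_mul] at h1
      push_cast at h1 ⊢
      linear_combination -h1
  obtain ⟨M, hM⟩ := HI.E_nilp n w
  have hdown : ∀ j m, m + j = M → E^[m] w = 0 := by
    intro j
    induction j with
    | zero => intro m hm; exact hM m (by omega)
    | succ j ih =>
      intro m hm
      have h1 := ih (m+1) (by omega)
      have h2 := hFE m
      rw [h1, map_zero] at h2
      have h3 : (-(((m : HI.P n) + 1) * (m + 2))) ≠ 0 := by
        rw [neg_ne_zero]
        exact_mod_cast (by positivity : (m+1)*(m+2) ≠ 0)
      exact (mul_eq_zero.mp h2.symm).resolve_left h3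
  exact hdown M 0 (by omega)

noncomputable section
def HI.md (n : ℕ) (m : Fin 4 × Fin (n+1) →₀ ℕ) : Fin 4 → ℕ := fun c => ∑ i, m (c, i)

def HI.W (n : ℕ) (T : Set (Fin 4 → ℕ)) : Submodule ℂ (HI.P n) :=
  MvPolynomial.restrictSupport ℂ {m | HI.md n m ∈ T}

def HI.T0 (d : ℕ) : Set (Fin 4 → ℕ) := {t | ∃ x ∈ Finset.HasAntidiagonal.antidiagonal d, t = ![x.1, x.2, x.1, x.2]}
def HI.T2 (d : ℕ) : Set (Fin 4 → ℕ) := {t | ∃ x ∈ Finset.HasAntidiagonal.antidiagonal d, t = ![x.1 + 1, x.2, x.1, x.2 + 1]}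

def HI.V (n : ℕ) (c : Fin 4) : Submodule ℂ (HI.P n) := Submodule.span ℂ (Set.range fun i => MvPolynomial.X (c, i))
def HI.R1 (n : ℕ) : Submodule ℂ (HI.P n) := Submodule.span ℂ (Set.range fun p : Fin (n+1) × Fin (n+1) => HI.Xm n p.1 p.2)
end

theorem HI.md_add (n : ℕ) (m m') : HI.md n (m + m') = HI.md n m + HI.md n m' := by
  funext c; simp [HI.md, Finset.sum_add_distrib]

theorem HI.md_single (n : ℕ) (c i) : HI.md n (Finsupp.single (c, i) 1) = Pi.single c 1 := by
  classical
  funext c'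
  simp only [HI.md, Finsupp.single_apply, Pi.single_apply, Prod.mk.injEq]
  by_cases h : c = c'
  · subst h; simp
  · simp [h, Ne.symm h]

theorem HI.W_mul (n : ℕ) (T T' T'' : Set (Fin 4 → ℕ)) (h : ∀ t ∈ T, ∀ t' ∈ T', t + t' ∈ T'') :
    HI.W n T * HI.W n T' ≤ HI.W n T'' := by
  rw [HI.W, HI.W, ← MvPolynomial.restrictSupport_add]
  apply MvPolynomial.restrictSupport_mono
  rintro _ ⟨m, hm, m', hm', rfl⟩
  change HI.md n (m + m') ∈ T''
  rw [HI.md_add]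
  exact h _ hm _ hm'

theorem HI.W_mono (n : ℕ) {T T' : Set (Fin 4 → ℕ)} (h : T ⊆ T') : HI.W n T ≤ HI.W n T' :=
  MvPolynomial.restrictSupport_mono ℂ fun _ hm => h hm

theorem HI.V_le (n : ℕ) (c : Fin 4) : HI.V n c ≤ HI.W n {Pi.single c 1} := by
  rw [HI.V, Submodule.span_le]
  rintro _ ⟨i, rfl⟩
  refine (MvPolynomial.monomial_mem_restrictSupport ℂ).mpr (Or.inl ?_)
  exact HI.md_single n c i

theorem HI.one_le_W (n : ℕ) (T : Set (Fin 4 → ℕ)) (h : 0 ∈ T) : 1 ≤ HI.W n T := by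
  rw [Submodule.one_le]
  refine (MvPolynomial.monomial_mem_restrictSupport ℂ).mpr (Or.inl ?_)
  have : HI.md n 0 = 0 := by funext c; simp [HI.md]
  simpa [this] using h

theorem HI.Vpow_le (n : ℕ) (c : Fin 4) (k : ℕ) : HI.V n c ^ k ≤ HI.W n {Pi.single c k} := by
  induction k with
  | zero => rw [pow_zero]; exact HI.one_le_W n _ (by simp)
  | succ k ih =>
    rw [pow_succ]
    refine (mul_le_mul' ih (HI.V_le n c)).trans (HI.W_mul n _ _ _ ?_)
    rintro t rfl t' rfl
    simp [← Pi.single_add]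

theorem HI.R1_le (n : ℕ) : HI.R1 n ≤ HI.W n (HI.T0 1) := by
  have hX : ∀ c i, (MvPolynomial.X (c, i) : HI.P n) ∈ HI.W n {Pi.single c 1} := fun c i =>
    HI.V_le n c (Submodule.subset_span ⟨i, rfl⟩)
  rw [HI.R1, Submodule.span_le]
  rintro _ ⟨⟨i, j⟩, rfl⟩
  refine Submodule.add_mem _ ?_ ?_
  · refine HI.W_mul n {Pi.single 0 1} {Pi.single 2 1} _ ?_ (Submodule.mul_mem_mul (hX _ _) (hX _ _))
    rintro t rfl t' rfl
    refine ⟨(1, 0), by simp, ?_⟩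
    funext c; fin_cases c <;> simp
  · refine HI.W_mul n {Pi.single 1 1} {Pi.single 3 1} _ ?_ (Submodule.mul_mem_mul (hX _ _) (hX _ _))
    rintro t rfl t' rfl
    refine ⟨(0, 1), by simp, ?_⟩
    funext c; fin_cases c <;> simp

theorem HI.R1_T2 (n d : ℕ) : HI.R1 n * HI.W n (HI.T2 d) ≤ HI.W n (HI.T2 (d + 1)) := by
  refine (mul_le_mul' (HI.R1_le n) le_rfl).trans (HI.W_mul n _ _ _ ?_)
  rintro _ ⟨⟨i, j⟩, hij, rfl⟩ _ ⟨⟨p, q⟩, hpq, rfl⟩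
  simp only [Finset.HasAntidiagonal.mem_antidiagonal] at hij hpq
  refine ⟨(i + p, j + q), by simp; omega, ?_⟩
  funext c; fin_cases c <;> simp <;> omega

theorem HI.R1pow_le (n d : ℕ) : HI.R1 n ^ d ≤ HI.W n (HI.T0 d) := by
  induction d with
  | zero => rw [pow_zero]; exact HI.one_le_W n _ ⟨(0,0), by simp, by funext c; fin_cases c <;> rfl⟩
  | succ d ih =>
    rw [pow_succ]
    refine (mul_le_mul' ih (HI.R1_le n)).trans (HI.W_mul n _ _ _ ?_)
    rintro _ ⟨⟨i, j⟩, hij, rfl⟩ _ ⟨⟨p, q⟩, hpq, rfl⟩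
    simp only [Finset.HasAntidiagonal.mem_antidiagonal] at hij hpq
    refine ⟨(i + p, j + q), by simp; omega, ?_⟩
    funext c; fin_cases c <;> simp

theorem HI.V_T2 (n d : ℕ) : HI.V n 0 ^ (d+1) * HI.V n 2 ^ d * HI.V n 3 ≤ HI.W n (HI.T2 d) := by
  refine (mul_le_mul' (mul_le_mul' (HI.Vpow_le n 0 _) (HI.Vpow_le n 2 _)) (HI.V_le n 3)).trans ?_
  refine (mul_le_mul' (HI.W_mul n _ _ {![d+1, 0, d, 0]} ?_) le_rfl).trans (HI.W_mul n _ _ _ ?_)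
  · rintro t rfl t' rfl
    change _ = _
    funext c; fin_cases c <;> simp
  · rintro t rfl t' rfl
    refine ⟨(d, 0), by simp, ?_⟩
    funext c; fin_cases c <;> simp

theorem HI.F_T2 (n d : ℕ) (w : HI.P n) (hw : w ∈ HI.W n (HI.T2 d)) : HI.dF n w ∈ HI.W n (HI.T0 (d+1)) := by
  classical
  rw [HI.W, MvPolynomial.restrictSupport_eq_span] at hw
  induction hw using Submodule.span_induction with
  | mem x hx =>
    obtain ⟨s, hs, rfl⟩ := hx
    obtain ⟨⟨p, q⟩, hpq, hst⟩ := hs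
    simp only [Finset.HasAntidiagonal.mem_antidiagonal] at hpq
    simp only [HI.dF, MvPolynomial.mkDerivation_monomial, one_smul]
    refine Submodule.sum_mem _ ?_
    rintro ⟨c, i⟩ hci
    have hle : Finsupp.single (c, i) 1 ≤ s := by
      rw [Finsupp.single_le_iff]; exact Nat.one_le_iff_ne_zero.mpr (Finsupp.mem_support_iff.mp hci)
    have hs' : HI.md n (s - Finsupp.single (c, i) 1) + Pi.single c 1 = ![p + 1, q, p, q + 1] := by
      rw [← hst, ← HI.md_single n c i, ← HI.md_add, tsub_add_cancel_of_le hle]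
    have hmem : ∀ c' k, (MvPolynomial.monomial (s - Finsupp.single (c, i) 1) k * MvPolynomial.X (c', i) : HI.P n) ∈
        HI.W n {HI.md n (s - Finsupp.single (c, i) 1) + Pi.single c' 1} := by
      intro c' k
      refine HI.W_mul n {HI.md n (s - Finsupp.single (c, i) 1)} {Pi.single c' 1} _ ?_ (Submodule.mul_mem_mul ?_ ?_)
      · rintro t rfl t' rfl; rfl
      · exact (MvPolynomial.monomial_mem_restrictSupport ℂ).mpr (Or.inl rfl)
      · exact HI.V_le n _ (Submodule.subset_span ⟨i, rfl⟩)
    have h0 := congrFun hs' 0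
    have h1 := congrFun hs' 1
    have h2 := congrFun hs' 2
    have h3 := congrFun hs' 3
    fin_cases c
    · refine HI.W_mono n ?_ (hmem 1 _)
      rintro _ rfl
      refine ⟨(p, q+1), by simp; omega, ?_⟩
      simp at h0 h1 h2 h3
      funext c; fin_cases c <;> simp [h0, h1, h2, h3]
    · simp
    · simp
    · simp only [smul_eq_mul]
      simp only [Fin.reduceFinMk, cons_val, mul_neg]
      refine Submodule.neg_mem _ ?_
      refine HI.W_mono n ?_ (hmem 2 _)
      rintro _ rfl
      refine ⟨(p+1, q), by simp; omega, ?_⟩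
      simp at h0 h1 h2 h3
      funext c; fin_cases c <;> simp [h0, h1, h2, h3]
  | zero => simp
  | add x y _ _ hx hy => rw [map_add]; exact Submodule.add_mem _ hx hy
  | smul c x _ hx => rw [Derivation.map_smul]; exact Submodule.smul_mem _ _ hx

theorem HI.H_T2 (n d : ℕ) (w : HI.P n) (hw : w ∈ HI.W n (HI.T2 d)) : HI.dH n w = 2 * w := by
  classical
  rw [HI.W, MvPolynomial.restrictSupport_eq_span] at hw
  induction hw using Submodule.span_induction with
  | mem x hx =>
    obtain ⟨s, hs, rfl⟩ := hx
    obtain ⟨⟨p, q⟩, hpq, hst⟩ := hs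
    simp only [HI.dH, MvPolynomial.mkDerivation_monomial, one_smul]
    have h1 : ∀ ci ∈ s.support, (MvPolynomial.monomial (s - Finsupp.single ci 1) ((s ci : ℕ) : ℂ) •
        (![MvPolynomial.X ci, - MvPolynomial.X ci, - MvPolynomial.X ci, MvPolynomial.X ci] : Fin 4 → HI.P n) ci.1) =
        MvPolynomial.monomial s ((![1, -1, -1, 1] : Fin 4 → ℂ) ci.1 * (s ci : ℂ)) := by
      intro ci hci
      have hle : Finsupp.single ci 1 ≤ s := by
        rw [Finsupp.single_le_iff]; exact Nat.one_le_iff_ne_zero.mpr (Finsupp.mem_support_iff.mp hci)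
      have hX : (MvPolynomial.monomial (s - Finsupp.single ci 1) ((s ci : ℕ) : ℂ) * MvPolynomial.X ci : HI.P n) =
          MvPolynomial.monomial s (s ci : ℂ) := by
        rw [MvPolynomial.X, MvPolynomial.monomial_mul, tsub_add_cancel_of_le hle, mul_one]
      obtain ⟨c, i⟩ := ci
      fin_cases c <;> simp at hX ⊢ <;> simp [hX]
    rw [Finsupp.sum, Finset.sum_congr rfl h1, ← map_sum]
    have h2 : ∑ ci ∈ s.support, (![1, -1, -1, 1] : Fin 4 → ℂ) ci.1 * (s ci : ℂ) = 2 := by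
      rw [Finset.sum_subset (Finset.subset_univ _) (by intro x _ hx; simp [Finsupp.notMem_support_iff.mp hx]),
        Fintype.sum_prod_type]
      have h3 : ∀ c, ∑ i, (s (c, i) : ℂ) = ((![p + 1, q, p, q + 1] : Fin 4 → ℕ) c : ℂ) := by
        intro c
        rw [← hst]; simp [HI.md]
      simp only [← Finset.mul_sum, h3]
      rw [Fin.sum_univ_four]
      simp; ring
    rw [h2]
    change _ = 2 * MvPolynomial.monomial s 1
    rw [show (2 : HI.P n) = MvPolynomial.C 2 from (map_ofNat MvPolynomial.C 2).symm, MvPolynomial.C_mul_monomial, mul_one]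
  | zero => simp
  | add x y _ _ hx hy => rw [map_add, hx, hy]; ring
  | smul c x _ hx => rw [Derivation.map_smul, hx]; simp [mul_smul_comm]

noncomputable def HI.U (n : ℕ) : Submodule ℂ (HI.P n) := HI.V n 0 * HI.V n 2 ⊔ HI.V n 1 * HI.V n 3

theorem HI.X_mem_V (n : ℕ) (c i) : (MvPolynomial.X (c, i) : HI.P n) ∈ HI.V n c :=
  Submodule.subset_span ⟨i, rfl⟩

theorem HI.W_le_U (n d : ℕ) : HI.W n (HI.T0 d) ≤ HI.U n ^ d := by
  classical
  rw [HI.W, MvPolynomial.restrictSupport_eq_span, Submodule.span_le]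
  rintro _ ⟨m, ⟨⟨p, q⟩, hpq, hm⟩, rfl⟩
  simp only [Finset.HasAntidiagonal.mem_antidiagonal] at hpq
  have h1 : (MvPolynomial.monomial m (1:ℂ) : HI.P n) = ∏ c, ∏ i, MvPolynomial.X (c, i) ^ m (c, i) := by
    rw [MvPolynomial.monomial_eq, Finsupp.prod_fintype _ _ (by simp), map_one, one_mul, Fintype.prod_prod_type]
  have h2 : ∀ c, (∏ i, MvPolynomial.X (c, i) ^ m (c, i) : HI.P n) ∈ HI.V n c ^ (HI.md n m c) := by
    intro c
    rw [HI.md, ← Finset.prod_pow_eq_pow_sum]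
    exact HI.prod_mem_prod _ _ _ fun i _ => Submodule.pow_mem_pow _ (HI.X_mem_V n c i) _
  have h3 := HI.prod_mem_prod Finset.univ _ (fun c => HI.V n c ^ (HI.md n m c)) fun c _ => h2 c
  rw [← h1] at h3
  have h4 : ∏ c, HI.V n c ^ (HI.md n m c) ≤ HI.U n ^ d := by
    rw [hm, Fin.prod_univ_four]
    simp only [cons_val]
    calc HI.V n 0 ^ p * HI.V n 1 ^ q * HI.V n 2 ^ p * HI.V n 3 ^ q
        = (HI.V n 0 * HI.V n 2) ^ p * (HI.V n 1 * HI.V n 3) ^ q := by rw [mul_pow, mul_pow]; ring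
      _ ≤ HI.U n ^ p * HI.U n ^ q := mul_le_mul' (pow_le_pow_left' le_sup_left _) (pow_le_pow_left' le_sup_right _)
      _ = HI.U n ^ d := by rw [← pow_add, hpq]
  exact h4 h3

theorem HI.U_le (n : ℕ) : HI.U n ≤ HI.R1 n ⊔ HI.V n 0 * HI.V n 2 := by
  refine sup_le le_sup_right ?_
  conv_lhs => rw [HI.V, HI.V, Submodule.span_mul_span]
  rw [Submodule.span_le]
  rintro _ ⟨_, ⟨i, rfl⟩, _, ⟨j, rfl⟩, rfl⟩
  have : (MvPolynomial.X (1, i) * MvPolynomial.X (3, j) : HI.P n) = HI.Xm n i j - MvPolynomial.X (0, i) * MvPolynomial.X (2, j) := by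
    rw [HI.Xm]; ring
  change (MvPolynomial.X (1, i) * MvPolynomial.X (3, j) : HI.P n) ∈ _
  rw [this]
  exact Submodule.sub_mem _ (Submodule.mem_sup_left (Submodule.subset_span ⟨(i, j), rfl⟩))
    (Submodule.mem_sup_right (Submodule.mul_mem_mul (HI.X_mem_V n _ _) (HI.X_mem_V n _ _)))

theorem HI.U_pow (n d : ℕ) : HI.U n ^ (d+1) ≤ HI.R1 n * HI.U n ^ d ⊔ (HI.V n 0 * HI.V n 2) ^ (d+1) := by
  induction d with
  | zero => simpa using HI.U_le n
  | succ d ih =>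
    rw [pow_succ' _ (d+1)]
    refine (mul_le_mul' (HI.U_le n) le_rfl).trans ?_
    rw [Submodule.sup_mul]
    refine sup_le le_sup_left ?_
    refine (mul_le_mul' le_rfl ih).trans ?_
    rw [Submodule.mul_sup, ← pow_succ']
    refine sup_le (le_sup_of_le_left ?_) le_sup_right
    rw [mul_left_comm, pow_succ' _ d]
    exact mul_le_mul' le_rfl (mul_le_mul' le_sup_left le_rfl)

theorem HI.F_X (n : ℕ) (i j) : HI.dF n (HI.Xm n i j) = 0 := by
  simp [HI.dF, HI.Xm, Derivation.leibniz, MvPolynomial.mkDerivation_X]; ring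

theorem HI.E_X (n : ℕ) (i j) : HI.dE n (HI.Xm n i j) = 0 := by
  simp [HI.dE, HI.Xm, Derivation.leibniz, MvPolynomial.mkDerivation_X]; ring

theorem HI.D_R1 (n : ℕ) (D : Derivation ℂ (HI.P n) (HI.P n)) (hD : ∀ i j, D (HI.Xm n i j) = 0) (d : ℕ)
    (x : HI.P n) (hx : x ∈ HI.R1 n ^ d) : D x = 0 := by
  have h1 : ∀ x ∈ HI.R1 n, D x = 0 := by
    intro x hx
    induction hx using Submodule.span_induction with
    | mem x hx => obtain ⟨⟨i, j⟩, rfl⟩ := hx; exact hD i j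
    | zero => simp
    | add x y _ _ hx hy => rw [map_add, hx, hy, add_zero]
    | smul c x _ hx => rw [Derivation.map_smul, hx, smul_zero]
  induction d generalizing x with
  | zero =>
    rw [pow_zero, Submodule.mem_one] at hx
    obtain ⟨y, rfl⟩ := hx
    exact Derivation.map_algebraMap _ _
  | succ d ih =>
    rw [pow_succ] at hx
    induction hx using Submodule.mul_induction_on' with
    | mem_mul_mem a ha b hb => rw [Derivation.leibniz, ih a ha, h1 b hb]; simp
    | add x _ y _ hx hy => rw [map_add, hx, hy, add_zero]

theorem HI.F_V2 (n d : ℕ) (x : HI.P n) (hx : x ∈ HI.V n 2 ^ d) : HI.dF n x = 0 := by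
  have h1 : ∀ x ∈ HI.V n 2, HI.dF n x = 0 := by
    intro x hx
    induction hx using Submodule.span_induction with
    | mem x hx => obtain ⟨i, rfl⟩ := hx; simp [HI.dF, MvPolynomial.mkDerivation_X]
    | zero => simp
    | add x y _ _ hx hy => rw [map_add, hx, hy, add_zero]
    | smul c x _ hx => rw [Derivation.map_smul, hx, smul_zero]
  induction d generalizing x with
  | zero =>
    rw [pow_zero, Submodule.mem_one] at hx
    obtain ⟨y, rfl⟩ := hx
    exact Derivation.map_algebraMap _ _
  | succ d ih =>
    rw [pow_succ] at hx
    induction hx using Submodule.mul_induction_on' with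
    | mem_mul_mem a ha b hb => rw [Derivation.leibniz, ih a ha, h1 b hb]; simp
    | add x _ y _ hx hy => rw [map_add, hx, hy, add_zero]

theorem HI.F_V0 (n e : ℕ) (u : HI.P n) (hu : u ∈ HI.V n 0 ^ (e+1)) (k : Fin (n+1)) :
    HI.dF n u * MvPolynomial.X (3, k) + ((e : HI.P n) + 1) * u * MvPolynomial.X (2, k) ∈ HI.R1 n * HI.V n 0 ^ e := by
  have h1 : ∀ x ∈ HI.V n 0, HI.dF n x * MvPolynomial.X (3, k) + x * MvPolynomial.X (2, k) ∈ HI.R1 n := by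
    intro x hx
    induction hx using Submodule.span_induction with
    | mem x hx =>
      obtain ⟨i, rfl⟩ := hx
      have : HI.dF n (MvPolynomial.X (0, i)) * MvPolynomial.X (3, k) + MvPolynomial.X (0, i) * MvPolynomial.X (2, k) = HI.Xm n i k := by
        simp [HI.dF, HI.Xm, MvPolynomial.mkDerivation_X]; ring
      rw [this]; exact Submodule.subset_span ⟨(i, k), rfl⟩
    | zero => simp
    | add x y _ _ hx hy => rw [map_add]; convert Submodule.add_mem _ hx hy using 1; ring
    | smul c x _ hx => rw [Derivation.map_smul]; convert Submodule.smul_mem _ c hx using 1; simp [smul_add]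
  induction e generalizing u with
  | zero => simpa using h1 u (by simpa using hu)
  | succ e ih =>
    rw [pow_succ] at hu
    induction hu using Submodule.mul_induction_on' with
    | mem_mul_mem a ha b hb =>
      have h2 := Submodule.mul_mem_mul (ih a ha) hb
      have h3 := Submodule.mul_mem_mul (h1 b hb) ha
      rw [mul_assoc, ← pow_succ] at h2
      rw [Derivation.leibniz]
      convert Submodule.add_mem _ h2 h3 using 1
      simp only [smul_eq_mul]; push_cast; ring
    | add x _ y _ hx hy => rw [map_add]; convert Submodule.add_mem _ hx hy using 1; ring

theorem HI.Y_le (n d : ℕ) : (HI.V n 0 * HI.V n 2) ^ (d+1) ≤ HI.R1 n * HI.U n ^ d ⊔ (HI.W n (HI.T2 d)).map (HI.dF n).toLinearMap := by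
  rw [mul_pow, pow_succ (HI.V n 2), ← mul_assoc, Submodule.mul_le]
  intro uv huv α hα
  induction hα using Submodule.span_induction with
  | mem x hx =>
    obtain ⟨k, rfl⟩ := hx
    induction huv using Submodule.mul_induction_on' with
    | mem_mul_mem u hu v hv =>
      have h1 := Submodule.mul_mem_mul (HI.F_V0 n d u hu k) hv
      have h2 : HI.R1 n * HI.V n 0 ^ d * HI.V n 2 ^ d ≤ HI.R1 n * HI.U n ^ d := by
        rw [mul_assoc, ← mul_pow]; exact mul_le_mul' le_rfl (pow_le_pow_left' le_sup_left _)
      have h3 : u * v * MvPolynomial.X (3, k) ∈ HI.W n (HI.T2 d) :=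
        HI.V_T2 n d (Submodule.mul_mem_mul (Submodule.mul_mem_mul hu hv) (HI.X_mem_V n _ _))
      have h4 := Submodule.sub_mem _ (Submodule.mem_sup_left (T := (HI.W n (HI.T2 d)).map (HI.dF n).toLinearMap) (h2 h1))
        (Submodule.mem_sup_right (Submodule.mem_map_of_mem (f := (HI.dF n).toLinearMap) h3))
      have h5 := Submodule.smul_mem _ ((d + 2 : ℂ)⁻¹) h4
      have hne : (d + 2 : ℂ) ≠ 0 := by norm_cast
      convert h5 using 1
      rw [eq_inv_smul_iff₀ hne]
      have h6 : (HI.dF n).toLinearMap (u * v * MvPolynomial.X (3, k)) = HI.dF n u * v * MvPolynomial.X (3, k) - u * v * MvPolynomial.X (2, k) := by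
        change HI.dF n (u * v * MvPolynomial.X (3, k)) = _
        rw [Derivation.leibniz, Derivation.leibniz, HI.F_V2 n d v hv]
        simp [HI.dF, MvPolynomial.mkDerivation_X]; ring
      rw [h6, MvPolynomial.smul_eq_C_mul]
      have h7 : (MvPolynomial.C ((d : ℂ) + 2) : HI.P n) = d + 2 := by
        rw [map_add, map_natCast, map_ofNat]
      rw [h7]; ring
    | add x _ y _ hx hy => rw [add_mul]; exact Submodule.add_mem _ hx hy
  | zero => simp
  | add x y _ _ hx hy => rw [mul_add]; exact Submodule.add_mem _ hx hy
  | smul c x _ hx => rw [mul_smul_comm]; exact Submodule.smul_mem _ _ hx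

theorem HI.R1_F (n d : ℕ) : HI.R1 n * (HI.W n (HI.T2 d)).map (HI.dF n).toLinearMap ≤ (HI.W n (HI.T2 (d+1))).map (HI.dF n).toLinearMap := by
  rw [Submodule.mul_le]
  rintro x hx _ ⟨w, hw, rfl⟩
  refine ⟨x * w, HI.R1_T2 n d (Submodule.mul_mem_mul hx hw), ?_⟩
  change HI.dF n (x * w) = x * HI.dF n w
  rw [Derivation.leibniz, HI.D_R1 n _ (HI.F_X n) 1 x (by simpa using hx)]; simp

theorem HI.W_decomp (n d : ℕ) : HI.W n (HI.T0 (d+1)) = HI.R1 n ^ (d+1) ⊔ (HI.W n (HI.T2 d)).map (HI.dF n).toLinearMap := by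
  apply le_antisymm
  · refine (HI.W_le_U n _).trans ?_
    induction d with
    | zero =>
      refine (HI.U_pow n 0).trans (sup_le ?_ ((HI.Y_le n 0).trans ?_))
      · simp
      · simp
    | succ d ih =>
      have h : HI.R1 n * HI.U n ^ (d+1) ≤ HI.R1 n ^ (d+1+1) ⊔ (HI.W n (HI.T2 (d+1))).map (HI.dF n).toLinearMap := by
        refine (mul_le_mul' le_rfl ih).trans ?_
        rw [Submodule.mul_sup, ← pow_succ']
        exact sup_le_sup le_rfl (HI.R1_F n d)
      exact (HI.U_pow n (d+1)).trans (sup_le h ((HI.Y_le n (d+1)).trans (sup_le h le_sup_right)))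
  · refine sup_le (HI.R1pow_le n _) ?_
    rintro _ ⟨w, hw, rfl⟩
    exact HI.F_T2 n d w hw

theorem HI.F_injOn (n d : ℕ) (w : HI.P n) (hw : w ∈ HI.W n (HI.T2 d)) (h : HI.dE n (HI.dF n w) = 0) : w = 0 :=
  HI.EF_inj n w (HI.H_T2 n d w hw) h

theorem HI.finrank_decomp (n d : ℕ) [FiniteDimensional ℂ (HI.W n (HI.T0 (d+1)))] :
    Module.finrank ℂ (HI.W n (HI.T0 (d+1))) = Module.finrank ℂ ↥(HI.R1 n ^ (d+1)) + Module.finrank ℂ (HI.W n (HI.T2 d)) := by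
  have hinj : Function.Injective ((HI.dF n).toLinearMap.domRestrict (HI.W n (HI.T2 d))) := by
    rw [← LinearMap.ker_eq_bot, LinearMap.ker_eq_bot']
    rintro ⟨w, hw⟩ h
    have h' : HI.dF n w = 0 := h
    exact Subtype.ext (HI.F_injOn n d w hw (by rw [h', map_zero]))
  have h1 : Module.finrank ℂ ↥((HI.W n (HI.T2 d)).map (HI.dF n).toLinearMap) = Module.finrank ℂ (HI.W n (HI.T2 d)) := by
    rw [← LinearMap.finrank_range_of_inj hinj, LinearMap.range_domRestrict]
  have hle1 : HI.R1 n ^ (d+1) ≤ HI.W n (HI.T0 (d+1)) := HI.R1pow_le n _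
  have hle2 : (HI.W n (HI.T2 d)).map (HI.dF n).toLinearMap ≤ HI.W n (HI.T0 (d+1)) := by
    rw [HI.W_decomp]; exact le_sup_right
  have := Submodule.finiteDimensional_of_le hle1
  have := Submodule.finiteDimensional_of_le hle2
  have hinf : HI.R1 n ^ (d+1) ⊓ (HI.W n (HI.T2 d)).map (HI.dF n).toLinearMap = ⊥ := by
    rw [eq_bot_iff]
    rintro _ ⟨hx, w, hw, rfl⟩
    have : w = 0 := HI.F_injOn n d w hw (HI.D_R1 n _ (HI.E_X n) (d+1) _ hx)
    simp [this]
  have := Submodule.finrank_sup_add_finrank_inf_eq (HI.R1 n ^ (d+1)) ((HI.W n (HI.T2 d)).map (HI.dF n).toLinearMap)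
  rw [hinf, finrank_bot, add_zero, h1] at this
  rw [← this, HI.W_decomp]

theorem HI.card_fib_equiv (n : ℕ) (t : Fin 4 → ℕ) :
    Nonempty ({m : Fin 4 × Fin (n+1) →₀ ℕ | HI.md n m = t} ≃ ((c : Fin 4) → {d : Fin (n+1) →₀ ℕ | d.degree = t c})) := by
  refine ⟨⟨fun m c => ⟨Finsupp.equivFunOnFinite.symm fun i => m.1 (c, i), ?_⟩,
    fun f => ⟨Finsupp.equivFunOnFinite.symm fun ci => (f ci.1).1 ci.2, ?_⟩, ?_, ?_⟩⟩
  · have := congrFun m.2 c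
    change Finsupp.degree _ = _
    rw [Finsupp.degree_eq_sum, ← this]; rfl
  · funext c
    have := (f c).2
    change Finsupp.degree _ = _ at this
    rw [← this, Finsupp.degree_eq_sum]; rfl
  · rintro ⟨m, hm⟩; apply Subtype.ext; ext ci; rfl
  · intro f; funext c; apply Subtype.ext; ext i; rfl

theorem HI.fin_deg (N m : ℕ) : Finite {d : Fin (N+1) →₀ ℕ | d.degree = m} := by
  apply Nat.finite_of_card_ne_zero
  rw [HI.card_sum_eq]
  exact (Nat.choose_pos (by omega)).ne'

theorem HI.card_fib (n : ℕ) (t : Fin 4 → ℕ) :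
    Nat.card {m : Fin 4 × Fin (n+1) →₀ ℕ | HI.md n m = t} = ∏ c, (n + t c).choose n := by
  obtain ⟨e⟩ := HI.card_fib_equiv n t
  rw [Nat.card_congr e, Nat.card_pi]
  exact Finset.prod_congr rfl fun c _ => HI.card_sum_eq _ _

theorem HI.fin_fib (n : ℕ) (t : Fin 4 → ℕ) : Finite {m : Fin 4 × Fin (n+1) →₀ ℕ | HI.md n m = t} := by
  obtain ⟨e⟩ := HI.card_fib_equiv n t
  have := fun c => HI.fin_deg n (t c)
  exact Finite.of_equiv _ e.symm

theorem HI.card_union {κ : Type*} (n : ℕ) (s : Finset κ) (g : κ → Fin 4 → ℕ) (hg : Function.Injective g) :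
    Finite {m : Fin 4 × Fin (n+1) →₀ ℕ | HI.md n m ∈ {t | ∃ x ∈ s, t = g x}} ∧
    Nat.card {m : Fin 4 × Fin (n+1) →₀ ℕ | HI.md n m ∈ {t | ∃ x ∈ s, t = g x}} = ∑ x ∈ s, ∏ c, (n + g x c).choose n := by
  have e : (Σ x : s, {m : Fin 4 × Fin (n+1) →₀ ℕ | HI.md n m = g x}) ≃
      {m : Fin 4 × Fin (n+1) →₀ ℕ | HI.md n m ∈ {t | ∃ x ∈ s, t = g x}} := by
    refine Equiv.ofBijective (fun y => ⟨y.2.1, y.1.1, y.1.2, y.2.2⟩) ⟨?_, ?_⟩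
    · rintro ⟨⟨x, hx⟩, ⟨m, hm⟩⟩ ⟨⟨x', hx'⟩, ⟨m', hm'⟩⟩ h
      simp only [Subtype.mk.injEq] at h
      subst h
      have : x = x' := hg (hm.symm.trans hm')
      subst this
      rfl
    · rintro ⟨m, x, hx, hm⟩
      exact ⟨⟨⟨x, hx⟩, ⟨m, hm⟩⟩, rfl⟩
  have := fun x : s => HI.fin_fib n (g x)
  refine ⟨Finite.of_equiv _ e, ?_⟩
  rw [← Nat.card_congr e, Nat.card_sigma, ← Finset.sum_coe_sort s]
  exact Finset.sum_congr rfl fun x _ => HI.card_fib n (g x)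

theorem HI.finrank_W {κ : Type*} (n : ℕ) (s : Finset κ) (g : κ → Fin 4 → ℕ) (hg : Function.Injective g) :
    FiniteDimensional ℂ (HI.W n {t | ∃ x ∈ s, t = g x}) ∧
    Module.finrank ℂ (HI.W n {t | ∃ x ∈ s, t = g x}) = ∑ x ∈ s, ∏ c, (n + g x c).choose n := by
  obtain ⟨h1, h2⟩ := HI.card_union n s g hg
  refine ⟨Module.Finite.of_basis (MvPolynomial.basisRestrictSupport ℂ _), ?_⟩
  rw [HI.W, Module.finrank_eq_nat_card_basis (MvPolynomial.basisRestrictSupport ℂ _), h2]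

theorem HI.finite_W0 (n d : ℕ) : FiniteDimensional ℂ (HI.W n (HI.T0 d)) :=
  (HI.finrank_W n (Finset.HasAntidiagonal.antidiagonal d) (fun x => ![x.1, x.2, x.1, x.2])
    (fun x y h => Prod.ext (by simpa using congrFun h 0) (by simpa using congrFun h 1))).1

theorem HI.finrank_R1 (n d : ℕ) :
    Module.finrank ℂ ↥(HI.R1 n ^ (d+1)) +
      ∑ x ∈ Finset.HasAntidiagonal.antidiagonal d, (n + (x.1+1)).choose n * (n + x.2).choose n * (n + x.1).choose n * (n + (x.2+1)).choose n
     = ∑ x ∈ Finset.HasAntidiagonal.antidiagonal (d+1), (n + x.1).choose n ^ 2 * (n + x.2).choose n ^ 2 := by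
  have := HI.finite_W0 n (d+1)
  have h := HI.finrank_decomp n d
  have h0 := (HI.finrank_W n (Finset.HasAntidiagonal.antidiagonal (d+1)) (fun x => ![x.1, x.2, x.1, x.2])
    (fun x y h => Prod.ext (by simpa using congrFun h 0) (by simpa using congrFun h 1))).2
  have h2 := (HI.finrank_W n (Finset.HasAntidiagonal.antidiagonal d) (fun x => ![x.1+1, x.2, x.1, x.2+1])
    (fun x y h => Prod.ext (by simpa using congrFun h 0) (by simpa using congrFun h 1))).2
  rw [HI.T0, HI.T2, h0, h2] at h
  simp only [Fin.prod_univ_four, cons_val] at h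
  rw [← h]
  refine Finset.sum_congr rfl fun x _ => by ring

theorem HI.finite_R1 (n d : ℕ) : FiniteDimensional ℂ ↥(HI.R1 n ^ d) := by
  have := HI.finite_W0 n d
  exact Submodule.finiteDimensional_of_le (HI.R1pow_le n d)

noncomputable def HI.ch (p i : ℕ) : ℝ := ((p + i).choose p : ℕ)

theorem HI.ch_pos (p i : ℕ) : 0 < HI.ch p i := by
  unfold HI.ch; exact_mod_cast Nat.choose_pos (by omega)

theorem HI.ch_conv (p q s : ℕ) :
    ∑ x ∈ Finset.HasAntidiagonal.antidiagonal s, HI.ch p x.1 * HI.ch q x.2 = HI.ch (p+q+1) s := by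
  have h : (PowerSeries.mk (1 : ℕ → ℝ)) ^ (p+1) * (PowerSeries.mk (1 : ℕ → ℝ)) ^ (q+1) = (PowerSeries.mk (1 : ℕ → ℝ)) ^ (p+q+1+1) := by
    rw [← pow_add]; congr 1; ring
  rw [PowerSeries.mk_one_pow_eq_mk_choose_add, PowerSeries.mk_one_pow_eq_mk_choose_add, PowerSeries.mk_one_pow_eq_mk_choose_add] at h
  have h2 := congrArg (PowerSeries.coeff s) h
  rw [PowerSeries.coeff_mul] at h2
  simpa [HI.ch] using h2

theorem HI.ch_mono_right (p : ℕ) {i j : ℕ} (h : i ≤ j) : HI.ch p i ≤ HI.ch p j := by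
  unfold HI.ch; exact_mod_cast Nat.choose_le_choose p (by omega)

theorem HI.ch_succ (p i : ℕ) : HI.ch (p+1) i * (p+1) = (p + i + 1) * HI.ch p i := by
  have := Nat.add_one_mul_choose_eq (p + i) p
  unfold HI.ch
  rw [show p + 1 + i = p + i + 1 by ring]
  exact_mod_cast this.symm


open Filter Topology in
theorem HI.ch_small (p q : ℕ) : Tendsto (fun s => HI.ch q s / HI.ch (p+q+1) s) atTop (𝓝 0) := by
  have h1 : Tendsto (fun s : ℕ => ((q : ℝ) + 1) / ((s + 1 : ℕ) : ℝ)) atTop (𝓝 0) :=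
    tendsto_const_nhds.div_atTop (tendsto_natCast_atTop_atTop.comp (tendsto_add_atTop_nat 1))
  refine squeeze_zero (fun s => (div_pos (HI.ch_pos _ _) (HI.ch_pos _ _)).le) (fun s => ?_) h1
  rw [div_le_div_iff₀ (HI.ch_pos _ _) (by positivity)]
  have h2 := HI.ch_succ q s
  have h3 : HI.ch (q+1) s ≤ HI.ch (p+q+1) s := by
    unfold HI.ch
    rw [show (q + 1 + s).choose (q+1) = (q+1+s).choose s from Nat.choose_symm_add,
      show (p + q + 1 + s).choose (p+q+1) = (p+q+1+s).choose s from Nat.choose_symm_add]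
    exact_mod_cast Nat.choose_le_choose s (by omega)
  have h4 : HI.ch q s * (s + 1) ≤ (q + s + 1) * HI.ch q s := by
    have := HI.ch_pos q s
    have : (0:ℝ) ≤ q := by positivity
    nlinarith
  push_cast
  calc HI.ch q s * (s + 1) ≤ HI.ch (q+1) s * (q+1) := by rw [h2]; exact h4
    _ ≤ _ := by rw [mul_comm]; gcongr

open Filter Topology in
theorem HI.conv_small (p q : ℕ) (a : ℕ → ℝ) (ha : Tendsto a atTop (𝓝 0)) :
    Tendsto (fun s => (∑ x ∈ Finset.HasAntidiagonal.antidiagonal s, |a x.1| * (HI.ch p x.1 * HI.ch q x.2)) / HI.ch (p+q+1) s) atTop (𝓝 0) := by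
  rw [Metric.tendsto_atTop]
  intro ε hε
  obtain ⟨K, hK⟩ := Metric.tendsto_atTop.mp ha (ε/2) (half_pos hε)
  set M := ∑ k ∈ Finset.range K, |a k| * HI.ch p k with hM
  have h1 := (HI.ch_small p q).const_mul M
  rw [mul_zero] at h1
  obtain ⟨S, hS⟩ := Metric.tendsto_atTop.mp h1 (ε/2) (half_pos hε)
  refine ⟨S, fun s hs => ?_⟩
  have hb : (∑ x ∈ Finset.HasAntidiagonal.antidiagonal s, |a x.1| * (HI.ch p x.1 * HI.ch q x.2)) ≤
      ε / 2 * HI.ch (p+q+1) s + M * HI.ch q s := by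
    rw [← HI.ch_conv, Finset.mul_sum, Finset.Nat.sum_antidiagonal_eq_sum_range_succ_mk, Finset.Nat.sum_antidiagonal_eq_sum_range_succ_mk]
    have h2 : ∀ k ∈ Finset.range s.succ, |a k| * (HI.ch p k * HI.ch q (s-k)) ≤
        ε/2 * (HI.ch p k * HI.ch q (s-k)) + (if k < K then |a k| * HI.ch p k else 0) * HI.ch q s := by
      intro k _
      have p1 := HI.ch_pos p k
      have p2 := HI.ch_pos q (s-k)
      have p3 := HI.ch_pos q s
      split_ifs with hk
      · have : |a k| * (HI.ch p k * HI.ch q (s-k)) ≤ |a k| * HI.ch p k * HI.ch q s := by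
          rw [← mul_assoc]
          exact mul_le_mul_of_nonneg_left (HI.ch_mono_right q (Nat.sub_le _ _)) (by positivity)
        have : 0 ≤ ε/2 * (HI.ch p k * HI.ch q (s-k)) := by positivity
        linarith
      · have := hK k (by omega)
        rw [Real.dist_eq, sub_zero] at this
        rw [zero_mul, add_zero]
        gcongr
    refine (Finset.sum_le_sum h2).trans ?_
    rw [Finset.sum_add_distrib, ← Finset.sum_mul]
    gcongr
    · exact (HI.ch_pos _ _).le
    · rw [← Finset.sum_filter, hM]
      refine Finset.sum_le_sum_of_subset_of_nonneg (fun k hk => by simpa using (Finset.mem_filter.mp hk).2) fun i _ _ => ?_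
      exact mul_nonneg (abs_nonneg _) (HI.ch_pos _ _).le
  have hC := HI.ch_pos (p+q+1) s
  have h3 := hS s hs
  rw [Real.dist_eq, sub_zero] at h3 ⊢
  rw [abs_of_nonneg (div_nonneg (Finset.sum_nonneg fun x _ => mul_nonneg (abs_nonneg _) (mul_nonneg (HI.ch_pos _ _).le (HI.ch_pos _ _).le)) hC.le)]
  calc _ ≤ (ε / 2 * HI.ch (p+q+1) s + M * HI.ch q s) / HI.ch (p+q+1) s := by gcongr
    _ = ε/2 + M * (HI.ch q s / HI.ch (p+q+1) s) := by field_simp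
    _ < ε := by linarith [le_abs_self (M * (HI.ch q s / HI.ch (p+q+1) s))]

open Filter Topology in
theorem HI.conv_asym (p q : ℕ) (u v : ℕ → ℝ) (A B : ℝ) (hu : Tendsto (fun i => u i / HI.ch p i) atTop (𝓝 A))
    (hv : Tendsto (fun i => v i / HI.ch q i) atTop (𝓝 B)) :
    Tendsto (fun s => (∑ x ∈ Finset.HasAntidiagonal.antidiagonal s, u x.1 * v x.2) / HI.ch (p+q+1) s) atTop (𝓝 (A * B)) := by
  set a : ℕ → ℝ := fun i => u i / HI.ch p i - A with hadef
  set b : ℕ → ℝ := fun i => v i / HI.ch q i - B with hbdef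
  have ha : Tendsto a atTop (𝓝 0) := by simpa using hu.sub_const A
  have hb : Tendsto b atTop (𝓝 0) := by simpa using hv.sub_const B
  have hub : ∀ i, u i = (A + a i) * HI.ch p i := fun i => by
    have := (HI.ch_pos p i).ne'
    simp only [hadef]; field_simp; ring
  have hvb : ∀ i, v i = (B + b i) * HI.ch q i := fun i => by
    have := (HI.ch_pos q i).ne'
    simp only [hbdef]; field_simp; ring
  obtain ⟨M, hM⟩ : ∃ M, ∀ i, |b i| ≤ M := by
    obtain ⟨M, hM⟩ := hb.norm.bddAbove_range
    exact ⟨M, fun i => hM ⟨i, rfl⟩⟩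
  have h1 := HI.conv_small p q a ha
  have h2 := HI.conv_small q p b hb
  have h3 := (h1.const_mul (|B| + M)).add (h2.const_mul |A|)
  rw [mul_zero, mul_zero, add_zero] at h3
  rw [tendsto_iff_norm_sub_tendsto_zero]
  refine squeeze_zero (fun _ => norm_nonneg _) (fun s => ?_) h3
  have hC := HI.ch_pos (p+q+1) s
  have e1 : (∑ x ∈ Finset.HasAntidiagonal.antidiagonal s, u x.1 * v x.2) / HI.ch (p+q+1) s - A * B =
      (∑ x ∈ Finset.HasAntidiagonal.antidiagonal s, (a x.1 * (B + b x.2) + A * b x.2) * (HI.ch p x.1 * HI.ch q x.2)) / HI.ch (p+q+1) s := by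
    rw [div_sub' hC.ne']
    congr 1
    rw [← HI.ch_conv, Finset.sum_mul, ← Finset.sum_sub_distrib]
    refine Finset.sum_congr rfl fun x _ => ?_
    rw [hub, hvb]; ring
  have e2 : (∑ x ∈ Finset.HasAntidiagonal.antidiagonal s, |b x.1| * (HI.ch q x.1 * HI.ch p x.2)) =
      ∑ x ∈ Finset.HasAntidiagonal.antidiagonal s, |b x.2| * (HI.ch p x.1 * HI.ch q x.2) := by
    rw [← Finset.Nat.sum_antidiagonal_swap]
    exact Finset.sum_congr rfl fun x _ => by simp only [Prod.fst_swap, Prod.snd_swap]; ring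
  rw [e1, norm_div, Real.norm_of_nonneg hC.le, show q + p + 1 = p + q + 1 by ring, e2, mul_div_assoc', mul_div_assoc', ← add_div]
  gcongr
  rw [Finset.mul_sum, Finset.mul_sum, ← Finset.sum_add_distrib]
  refine (norm_sum_le _ _).trans (Finset.sum_le_sum fun x _ => ?_)
  have c1 := HI.ch_pos p x.1
  have c2 := HI.ch_pos q x.2
  rw [norm_mul, Real.norm_of_nonneg (mul_pos c1 c2).le, show (|B| + M) * (|a x.1| * (HI.ch p x.1 * HI.ch q x.2)) + |A| * (|b x.2| * (HI.ch p x.1 * HI.ch q x.2))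
    = ((|B| + M) * |a x.1| + |A| * |b x.2|) * (HI.ch p x.1 * HI.ch q x.2) by ring]
  refine mul_le_mul_of_nonneg_right ?_ (mul_pos c1 c2).le
  calc ‖a x.1 * (B + b x.2) + A * b x.2‖ ≤ |a x.1| * |B + b x.2| + |A| * |b x.2| := by
        refine (norm_add_le _ _).trans ?_
        rw [norm_mul, norm_mul]; rfl
    _ ≤ _ := by
      have : |B + b x.2| ≤ |B| + M := (abs_add_le _ _).trans (by linarith [hM x.2])
      nlinarith [abs_nonneg (a x.1)]

open Filter Topology in
theorem HI.ch_asym (k : ℕ) : Tendsto (fun i : ℕ => HI.ch k i / (i : ℝ) ^ k) atTop (𝓝 (1 / (k.factorial : ℝ))) := by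
  induction k with
  | zero => simp [HI.ch]
  | succ k ih =>
    have h1 : Tendsto (fun i : ℕ => 1 + ((k : ℝ) + 1) / (i : ℝ)) atTop (𝓝 1) := by
      simpa using (tendsto_const_nhds.div_atTop tendsto_natCast_atTop_atTop : Tendsto (fun i : ℕ => ((k : ℝ) + 1) / (i : ℝ)) atTop (𝓝 0)).const_add 1
    have h2 := (ih.mul h1).div_const ((k : ℝ) + 1)
    have e : 1 / (k.factorial : ℝ) * 1 / (k + 1) = 1 / ((k+1).factorial : ℝ) := by
      rw [Nat.factorial_succ]; push_cast; field_simp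
    rw [e] at h2
    refine h2.congr' ?_
    filter_upwards [eventually_gt_atTop 0] with i hi
    have hi' : (i : ℝ) ≠ 0 := by positivity
    have h3 := HI.ch_succ k i
    have h4 : (k : ℝ) + 1 ≠ 0 := by positivity
    field_simp
    linear_combination (-(i:ℝ)^(k+1)) * h3

open Filter Topology in
theorem HI.pow_asym (n e : ℕ) :
    Tendsto (fun i : ℕ => ((i : ℝ) ^ e * HI.ch (n-1) i ^ 2) / HI.ch (2 * (n-1) + e) i) atTop
      (𝓝 (((2 * (n-1) + e).factorial : ℝ) / ((n-1).factorial : ℝ) ^ 2)) := by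
  have h1 := ((HI.ch_asym (n-1)).pow 2).div (HI.ch_asym (2 * (n-1) + e)) (by positivity)
  have e1 : (1 / ((n-1).factorial : ℝ)) ^ 2 / (1 / ((2 * (n-1) + e).factorial : ℝ)) = ((2 * (n-1) + e).factorial : ℝ) / ((n-1).factorial : ℝ) ^ 2 := by
    field_simp
  rw [e1] at h1
  refine h1.congr' ?_
  filter_upwards [eventually_gt_atTop 0] with i hi
  have hi' : (i : ℝ) ≠ 0 := by positivity
  have := (HI.ch_pos (2 * (n-1) + e) i).ne'
  simp only [Pi.div_apply]
  field_simp
  ring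

theorem HI.choose_odd (a j : ℕ) (hj : j < 2 ^ a) : Odd ((2 ^ a - 1).choose j) := by
  induction j with
  | zero => simp
  | succ j ih =>
    have h1 := ih (by omega)
    have h2 : 2 ∣ (2 ^ a).choose (j+1) := Nat.prime_two.dvd_choose_pow (by omega) (by omega)
    have h3 : (2 ^ a).choose (j+1) = (2^a-1).choose j + (2^a-1).choose (j+1) := by
      rw [← Nat.choose_succ_succ]; congr 1
      omega
    rw [h3, ← even_iff_two_dvd, Nat.even_add'] at h2
    exact h2.mp h1

theorem HI.r_odd (k m : ℕ) (hm : m + 1 = 2 ^ k) : ∃ r : ℕ, Odd r ∧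
    (r : ℝ) = ((2*m).factorial : ℝ) * ((2*m+1).factorial : ℝ) / (((m+1).factorial : ℝ) * (m.factorial : ℝ)) ^ 2 := by
  have h1 : Odd ((2 * m + 1).choose m) := by
    have := HI.choose_odd (k+1) m (by rw [pow_succ]; omega)
    rwa [show 2 ^ (k+1) - 1 = 2 * m + 1 by rw [pow_succ]; omega] at this
  have h2 := succ_mul_catalan_eq_centralBinom m
  rw [Nat.centralBinom] at h2
  have h3 : (2 * m + 1).choose m = (2*m+1) * catalan m := by
    have e := Nat.add_one_mul_choose_eq (2*m) m
    have e2 : (2*m+1).choose (m+1) = (2*m+1).choose m := by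
      rw [← Nat.choose_symm (by omega)]; congr 1; omega
    rw [← h2, e2] at e
    have : (m+1) * ((2 * m + 1).choose m) = (m+1) * ((2*m+1) * catalan m) := by rw [mul_comm, ← e]; ring
    exact Nat.eq_of_mul_eq_mul_left (by omega) this
  have h4 : Odd (catalan m) := by rw [h3] at h1; exact (Nat.odd_mul.mp h1).2
  refine ⟨(2 * m + 1).choose m * catalan m, h1.mul h4, ?_⟩
  have f1 : (2*m+1).choose m * m.factorial * (m+1).factorial = (2*m+1).factorial := by
    have := Nat.choose_mul_factorial_mul_factorial (show m ≤ 2*m+1 by omega)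
    rwa [show 2*m+1-m = m+1 by omega] at this
  have f2 : catalan m * m.factorial * (m+1).factorial = (2*m).factorial := by
    have := Nat.choose_mul_factorial_mul_factorial (show m ≤ 2*m by omega)
    rw [show 2*m-m = m by omega, ← h2] at this
    rw [← this, Nat.factorial_succ]; ring
  rw [eq_div_iff (by positivity)]
  rw [← f1, ← f2]; push_cast; ring

theorem HI.R1_formula (m d : ℕ) : (Module.finrank ℂ ↥(HI.R1 (m+1) ^ (d+1)) : ℝ) =
    ((∑ x ∈ Finset.HasAntidiagonal.antidiagonal (d+2), ((x.1 : ℝ) ^ 0 * HI.ch m x.1 ^ 2) * ((x.2 : ℝ) ^ 2 * HI.ch m x.2 ^ 2)) -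
      ∑ x ∈ Finset.HasAntidiagonal.antidiagonal (d+2), ((x.1 : ℝ) ^ 1 * HI.ch m x.1 ^ 2) * ((x.2 : ℝ) ^ 1 * HI.ch m x.2 ^ 2)) / ((m : ℝ) + 1) ^ 2 := by
  have h := HI.finrank_R1 (m+1) d
  have hR : (Module.finrank ℂ ↥(HI.R1 (m+1) ^ (d+1)) : ℝ) =
      (∑ x ∈ Finset.HasAntidiagonal.antidiagonal (d+1), HI.ch (m+1) x.1 ^ 2 * HI.ch (m+1) x.2 ^ 2) -
      ∑ x ∈ Finset.HasAntidiagonal.antidiagonal d, HI.ch (m+1) (x.1+1) * HI.ch (m+1) x.2 * HI.ch (m+1) x.1 * HI.ch (m+1) (x.2+1) := by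
    rw [eq_sub_iff_add_eq]; unfold HI.ch; exact_mod_cast h
  set g : ℕ → ℝ := fun i => i * HI.ch m i / (m+1) with hg
  have hm : (m : ℝ) + 1 ≠ 0 := by positivity
  have hg0 : g 0 = 0 := by simp [hg]
  have hg1 : ∀ i, g (i+1) = HI.ch (m+1) i := by
    intro i
    simp only [hg]
    rw [div_eq_iff hm]
    have := Nat.choose_succ_right_eq (m+1+i) m
    rw [show m + 1 + i - m = i + 1 by omega] at this
    unfold HI.ch
    rw [show m + (i+1) = m + 1 + i by ring]
    have h2 : (((m+1+i).choose (m+1) : ℕ) : ℝ) * ((m:ℝ)+1) = (((m+1+i).choose m : ℕ) : ℝ) * ((i:ℝ)+1) := by exact_mod_cast this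
    rw [h2]; push_cast; ring
  have hh : ∀ i, HI.ch (m+1) i = (m + i + 1) * HI.ch m i / (m+1) := by
    intro i; rw [eq_div_iff hm]; exact HI.ch_succ m i
  have s1 : (∑ x ∈ Finset.HasAntidiagonal.antidiagonal (d+1), HI.ch (m+1) x.1 ^ 2 * HI.ch (m+1) x.2 ^ 2) =
      ∑ x ∈ Finset.HasAntidiagonal.antidiagonal (d+2), HI.ch (m+1) x.1 ^ 2 * g x.2 ^ 2 := by
    rw [Finset.Nat.sum_antidiagonal_succ' (n := d+1)]; simp [hg0, hg1]
  have s2 : (∑ x ∈ Finset.HasAntidiagonal.antidiagonal d, HI.ch (m+1) (x.1+1) * HI.ch (m+1) x.2 * HI.ch (m+1) x.1 * HI.ch (m+1) (x.2+1)) =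
      ∑ x ∈ Finset.HasAntidiagonal.antidiagonal (d+2), HI.ch (m+1) x.1 * g x.1 * (HI.ch (m+1) x.2 * g x.2) := by
    rw [Finset.Nat.sum_antidiagonal_succ' (n := d+1), Finset.Nat.sum_antidiagonal_succ (n := d)]
    simp only [hg0, hg1, mul_zero, zero_mul, zero_add]
    exact Finset.sum_congr rfl fun x _ => by ring
  have hanti : ∑ x ∈ Finset.HasAntidiagonal.antidiagonal (d+2), ((x.1:ℝ) * x.2^2 - x.1^2 * x.2) * (HI.ch m x.1 ^ 2 * HI.ch m x.2^2) = 0 := by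
    have e := Finset.Nat.sum_antidiagonal_swap (n := d+2) (f := fun x => ((x.1:ℝ) * x.2^2 - x.1^2 * x.2) * (HI.ch m x.1 ^ 2 * HI.ch m x.2^2))
    have e2 : ∑ x ∈ Finset.HasAntidiagonal.antidiagonal (d+2), ((x.swap.1:ℝ) * x.swap.2^2 - x.swap.1^2 * x.swap.2) * (HI.ch m x.swap.1 ^ 2 * HI.ch m x.swap.2^2)
      = - ∑ x ∈ Finset.HasAntidiagonal.antidiagonal (d+2), ((x.1:ℝ) * x.2^2 - x.1^2 * x.2) * (HI.ch m x.1 ^ 2 * HI.ch m x.2^2) := by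
      rw [← Finset.sum_neg_distrib]
      exact Finset.sum_congr rfl fun x _ => by simp only [Prod.fst_swap, Prod.snd_swap]; ring
    rw [e2] at e
    linarith
  rw [hR, s1, s2, ← Finset.sum_sub_distrib, ← Finset.sum_sub_distrib, Finset.sum_div, ← sub_eq_zero, ← Finset.sum_sub_distrib]
  rw [← zero_div (((m:ℝ)+1)^3), ← hanti, Finset.sum_div]
  refine Finset.sum_congr rfl fun x _ => ?_
  rw [hh, hh]
  simp only [hg]
  field_simp
  ring

open Filter Topology in
theorem HI.R1_asym (m : ℕ) : Tendsto (fun d => (Module.finrank ℂ ↥(HI.R1 (m+1) ^ d) : ℝ) / HI.ch (4*m+3) d) atTop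
    (𝓝 (((2*m).factorial : ℝ) * ((2*m+1).factorial : ℝ) / (((m+1).factorial : ℝ) * (m.factorial : ℝ)) ^ 2)) := by
  have a0 := HI.pow_asym (m+1) 0
  have a1 := HI.pow_asym (m+1) 1
  have a2 := HI.pow_asym (m+1) 2
  simp only [Nat.add_sub_cancel] at a0 a1 a2
  have c1 := HI.conv_asym _ _ _ _ _ _ a0 a2
  have c2 := HI.conv_asym _ _ _ _ _ _ a1 a1
  rw [show 2*m+0+(2*m+2)+1 = 4*m+3 by ring] at c1
  rw [show 2*m+1+(2*m+1)+1 = 4*m+3 by ring] at c2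
  have c3 := (c1.sub c2).div_const (((m:ℝ)+1)^2)
  have c4 := c3.comp (tendsto_add_atTop_nat 1)
  have c5 := c4.mul (HI.choose_ratio (4*m+3) 1)
  have e : (((2*m+0).factorial : ℝ) / (m.factorial : ℝ)^2 * (((2*m+2).factorial : ℝ) / (m.factorial : ℝ)^2) -
     ((2*m+1).factorial : ℝ) / (m.factorial : ℝ)^2 * (((2*m+1).factorial : ℝ) / (m.factorial : ℝ)^2)) / ((m:ℝ)+1)^2 * 1 =
     ((2*m).factorial : ℝ) * ((2*m+1).factorial : ℝ) / (((m+1).factorial : ℝ) * (m.factorial : ℝ)) ^ 2 := by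
    rw [add_zero, show 2*m+2 = (2*m+1)+1 by ring, Nat.factorial_succ (2*m+1), Nat.factorial_succ (2*m), Nat.factorial_succ m]
    push_cast
    field_simp
    ring
  rw [e] at c5
  refine c5.congr' ?_
  filter_upwards [eventually_gt_atTop 0] with d hd
  obtain ⟨d, rfl⟩ := Nat.exists_eq_add_of_le' hd
  rw [HI.R1_formula]
  have e1 : (((d + 1 + 1 + (4*m+3)).choose (4*m+3) : ℕ) : ℝ) = HI.ch (4*m+3) (d+1+1) := by rw [HI.ch, add_comm]
  have e2 : (((d + 1 + (4*m+3)).choose (4*m+3) : ℕ) : ℝ) = HI.ch (4*m+3) (d+1) := by rw [HI.ch, add_comm]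
  have p1 := (HI.ch_pos (4*m+3) (d+1+1)).ne'
  have p2 := (HI.ch_pos (4*m+3) (d+1)).ne'
  simp only [Function.comp]
  rw [e1, e2]
  rw [← sub_div, show d + 1 + 1 = d + 2 by ring]
  rw [show d + 1 + 1 = d + 2 by ring] at p1
  field_simp

open Filter Topology in
theorem HI.cum_asym (m : ℕ) : Tendsto (fun d => (∑ e ∈ Finset.range (d+1), (Module.finrank ℂ ↥(HI.R1 (m+1) ^ e) : ℝ)) / HI.ch (4*(m+1)) d) atTop
    (𝓝 (((2*m).factorial : ℝ) * ((2*m+1).factorial : ℝ) / (((m+1).factorial : ℝ) * (m.factorial : ℝ)) ^ 2)) := by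
  have h1 : Tendsto (fun i => (fun _ : ℕ => (1:ℝ)) i / HI.ch 0 i) atTop (𝓝 1) := by simp [HI.ch]
  have h := HI.conv_asym _ _ _ _ _ _ (HI.R1_asym m) h1
  rw [mul_one] at h
  refine h.congr fun d => ?_
  rw [Finset.Nat.sum_antidiagonal_eq_sum_range_succ_mk, show 4*m+3+0+1 = 4*(m+1) by ring]
  simp

noncomputable def HI.tau (n : ℕ) : HI.P n →+* HI.P n :=
  (MvPolynomial.rename (fun ci : Fin 4 × Fin (n+1) => ((![2,3,0,1] : Fin 4 → Fin 4) ci.1, ci.2))).toRingHom.comp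
    (MvPolynomial.map (starRingEnd ℂ))

noncomputable def HI.t (n : ℕ) (p : Fin (n+1) × Fin (n+1)) : HI.P n :=
  ((1 - Complex.I) / 2 : ℂ) • HI.Xm n p.1 p.2 + ((1 + Complex.I) / 2 : ℂ) • HI.Xm n p.2 p.1

theorem HI.tau_smul (n : ℕ) (c : ℂ) (x : HI.P n) : HI.tau n (c • x) = (starRingEnd ℂ c) • HI.tau n x := by
  rw [MvPolynomial.smul_eq_C_mul, map_mul, MvPolynomial.smul_eq_C_mul]
  congr 1
  simp [HI.tau]

theorem HI.tau_X (n : ℕ) (i j) : HI.tau n (HI.Xm n i j) = HI.Xm n j i := by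
  simp [HI.tau, HI.Xm]; ring

theorem HI.tau_t (n : ℕ) (p) : HI.tau n (HI.t n p) = HI.t n p := by
  rw [HI.t, map_add, HI.tau_smul, HI.tau_smul, HI.tau_X, HI.tau_X, add_comm]
  simp [map_ofNat, sub_eq_add_neg, show (starRingEnd ℂ) 2 = 2 from map_ofNat _ 2]

theorem HI.X_t (n : ℕ) (i j) : HI.Xm n i j = ((1 + Complex.I) / 2 : ℂ) • HI.t n (i, j) + ((1 - Complex.I) / 2 : ℂ) • HI.t n (j, i) := by
  simp only [HI.t, smul_add, smul_smul]
  have h1 : ((1 + Complex.I) / 2 * ((1 - Complex.I) / 2) : ℂ) = 1/2 := by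
    linear_combination (-1/4 : ℂ) * Complex.I_sq
  have h2 : ((1 - Complex.I) / 2 * ((1 - Complex.I) / 2) : ℂ) = - ((1 + Complex.I) / 2 * ((1 + Complex.I) / 2)) := by
    linear_combination (1/2 : ℂ) * Complex.I_sq
  rw [h1, h2, mul_comm ((1 - Complex.I) / 2) ((1 + Complex.I) / 2), h1]
  have : HI.Xm n i j = (1/2 : ℂ) • HI.Xm n i j + (1/2 : ℂ) • HI.Xm n i j := by rw [← add_smul]; norm_num
  conv_lhs => rw [this]
  module

theorem HI.tau_fix (n : ℕ) (x : HI.P n) (hx : x ∈ Algebra.adjoin ℝ (Set.range (HI.t n))) : HI.tau n x = x := by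
  induction hx using Algebra.adjoin_induction with
  | mem x hx => obtain ⟨p, rfl⟩ := hx; exact HI.tau_t n p
  | algebraMap r =>
    rw [Algebra.algebraMap_eq_smul_one, show r • (1 : HI.P n) = (r : ℂ) • 1 by simp, HI.tau_smul]; simp
  | add x y _ _ hx hy => rw [map_add, hx, hy]
  | mul x y _ _ hx hy => rw [map_mul, hx, hy]

theorem HI.re_im (n : ℕ) (u v : HI.P n) (hu : HI.tau n u = u) (hv : HI.tau n v = v) (h : u + Complex.I • v = 0) : u = 0 ∧ v = 0 := by
  have h2 := congrArg (HI.tau n) h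
  rw [map_add, HI.tau_smul, hu, hv, map_zero, Complex.conj_I, neg_smul] at h2
  have h3 : (2:ℂ) • u = 0 := by
    rw [two_smul]; linear_combination h + h2
  have h4 : u = 0 := (smul_eq_zero.mp h3).resolve_left two_ne_zero
  rw [h4, zero_add] at h
  exact ⟨h4, (smul_eq_zero.mp h).resolve_left Complex.I_ne_zero⟩

theorem HI.li_real (n : ℕ) {κ : Type*} [Fintype κ] (b : κ → HI.P n) (hb : ∀ i, HI.tau n (b i) = b i)
    (hl : LinearIndependent ℝ b) : LinearIndependent ℂ b := by
  rw [Fintype.linearIndependent_iff] at hl ⊢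
  intro g hg
  have key : (∑ i, (g i).re • b i) + Complex.I • (∑ i, (g i).im • b i) = 0 := by
    rw [← hg, Finset.smul_sum, ← Finset.sum_add_distrib]
    refine Finset.sum_congr rfl fun i _ => ?_
    conv_rhs => rw [← Complex.re_add_im (g i)]
    rw [add_smul, mul_comm, mul_smul]
    simp
  have hfix : ∀ r : κ → ℝ, HI.tau n (∑ i, r i • b i) = ∑ i, r i • b i := by
    intro r
    rw [map_sum]
    refine Finset.sum_congr rfl fun i _ => ?_
    rw [show r i • b i = (r i : ℂ) • b i by simp, HI.tau_smul, hb]; simp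
  obtain ⟨h1, h2⟩ := HI.re_im n _ _ (hfix _) (hfix _) key
  intro i
  exact Complex.ext (hl _ h1 i) (hl _ h2 i)

theorem HI.finrank_real (n : ℕ) (M : Submodule ℝ (HI.P n)) [Module.Finite ℝ M] (hM : ∀ x ∈ M, HI.tau n x = x) :
    Module.finrank ℝ M = Module.finrank ℂ (Submodule.span ℂ (M : Set (HI.P n))) := by
  set b := Module.finBasis ℝ M
  have h1 : LinearIndependent ℝ (fun i => (b i : HI.P n)) := b.linearIndependent.map' M.subtype (by simp)
  have h2 := HI.li_real n _ (fun i => hM _ (b i).2) h1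
  have h3 := finrank_span_eq_card h2
  have h4 : Submodule.span ℝ (Set.range fun i => (b i : HI.P n)) = M := by
    have := congrArg (Submodule.map M.subtype) b.span_eq
    rw [Submodule.map_span, Submodule.map_top, Submodule.range_subtype, ← Set.range_comp] at this
    exact this
  rw [← Submodule.span_span_of_tower ℝ ℂ, h4] at h3
  rw [h3, Fintype.card_fin]

theorem HI.one_sup_pow {K B : Type*} [CommSemiring K] [CommSemiring B] [Algebra K B] (M : Submodule K B) (d : ℕ) :
    (1 ⊔ M) ^ (d+1) = (1 ⊔ M) ^ d ⊔ M ^ (d+1) := by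
  induction d with
  | zero => simp
  | succ d ih =>
    apply le_antisymm
    · rw [pow_succ _ (d+1), Submodule.mul_sup, mul_one]
      refine sup_le le_sup_left ?_
      conv_lhs => rw [ih]
      rw [Submodule.sup_mul, ← pow_succ]
      refine sup_le (le_sup_of_le_left ?_) le_sup_right
      rw [pow_succ]
      exact mul_le_mul' le_rfl le_sup_right
    · exact sup_le (pow_le_pow_right₀ le_sup_left (by omega)) (pow_le_pow_left' le_sup_right _)

theorem HI.R1_hom (n d : ℕ) : HI.R1 n ^ d ≤ MvPolynomial.homogeneousSubmodule _ ℂ (2 * d) := by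
  have h1 : HI.R1 n ≤ MvPolynomial.homogeneousSubmodule _ ℂ 2 := by
    rw [HI.R1, Submodule.span_le]
    rintro _ ⟨⟨i, j⟩, rfl⟩
    exact ((MvPolynomial.isHomogeneous_X ℂ _).mul (MvPolynomial.isHomogeneous_X ℂ _)).add
      ((MvPolynomial.isHomogeneous_X ℂ _).mul (MvPolynomial.isHomogeneous_X ℂ _))
  induction d with
  | zero => rw [pow_zero, Submodule.one_le]; exact MvPolynomial.isHomogeneous_one _ _
  | succ d ih =>
    rw [pow_succ]
    exact (mul_le_mul' ih h1).trans (MvPolynomial.homogeneousSubmodule_mul _ _)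

theorem HI.R1_cum_deg (n d : ℕ) : (1 ⊔ HI.R1 n) ^ d ≤ MvPolynomial.restrictTotalDegree _ ℂ (2 * d) := by
  induction d with
  | zero => rw [pow_zero, Submodule.one_le, MvPolynomial.mem_restrictTotalDegree]; simp
  | succ d ih =>
    rw [HI.one_sup_pow]
    refine sup_le (fun x hx => ?_) (fun x hx => ?_)
    · have := ih hx
      rw [MvPolynomial.mem_restrictTotalDegree] at this ⊢; omega
    · rw [MvPolynomial.mem_restrictTotalDegree]
      exact (HI.R1_hom n (d+1) hx).totalDegree_le

theorem HI.R1_cum (n d : ℕ) : FiniteDimensional ℂ ↥((1 ⊔ HI.R1 n) ^ d) ∧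
    Module.finrank ℂ ↥((1 ⊔ HI.R1 n) ^ d) = ∑ e ∈ Finset.range (d+1), Module.finrank ℂ ↥(HI.R1 n ^ e) := by
  induction d with
  | zero =>
    have h1 := HI.finite_R1 n 0
    refine ⟨?_, ?_⟩
    · rw [pow_zero] at h1 ⊢; exact h1
    · rw [Finset.sum_range_one, pow_zero, pow_zero]
  | succ d ih =>
    obtain ⟨h1, h2⟩ := ih
    have h3 := HI.finite_R1 n (d+1)
    rw [HI.one_sup_pow, Finset.sum_range_succ, ← h2]
    refine ⟨inferInstance, ?_⟩
    rw [← Submodule.finrank_sup_add_finrank_inf_eq]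
    have : (1 ⊔ HI.R1 n) ^ d ⊓ HI.R1 n ^ (d+1) = ⊥ := by
      rw [eq_bot_iff]
      rintro x ⟨hx1, hx2⟩
      by_contra hx
      have e1 := (HI.R1_hom n (d+1) hx2).totalDegree hx
      have e2 := HI.R1_cum_deg n d hx1
      rw [MvPolynomial.mem_restrictTotalDegree] at e2
      omega
    rw [this]; simp

noncomputable def HI.S (n : ℕ) : Submodule ℝ (HI.P n) := Submodule.span ℝ (insert 1 (Set.range (HI.t n)))
noncomputable def HI.G (n : ℕ) : Submodule ℝ (HI.P n) := Submodule.span ℝ (Set.range (HI.t n))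

theorem HI.S_eq (n : ℕ) : HI.S n = 1 ⊔ HI.G n := by
  rw [HI.S, HI.G, Submodule.span_insert, Submodule.one_eq_span]

theorem HI.span_t (n : ℕ) : Submodule.span ℂ (Set.range (HI.t n)) = HI.R1 n := by
  apply le_antisymm
  · rw [Submodule.span_le]
    rintro _ ⟨p, rfl⟩
    exact Submodule.add_mem _ (Submodule.smul_mem _ _ (Submodule.subset_span ⟨(p.1, p.2), rfl⟩))
      (Submodule.smul_mem _ _ (Submodule.subset_span ⟨(p.2, p.1), rfl⟩))
  · rw [HI.R1, Submodule.span_le]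
    rintro _ ⟨⟨i, j⟩, rfl⟩
    change HI.Xm n i j ∈ _
    rw [HI.X_t]
    exact Submodule.add_mem _ (Submodule.smul_mem _ _ (Submodule.subset_span ⟨_, rfl⟩))
      (Submodule.smul_mem _ _ (Submodule.subset_span ⟨_, rfl⟩))

theorem HI.span_pow_tower (n d : ℕ) (s : Set (HI.P n)) :
    Submodule.span ℂ ((Submodule.span ℝ s ^ d : Submodule ℝ (HI.P n)) : Set (HI.P n)) = Submodule.span ℂ s ^ d := by
  rw [Submodule.span_pow, Submodule.span_pow, Submodule.span_span_of_tower]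

theorem HI.fix_pow (n d : ℕ) (x : HI.P n) (hx : x ∈ HI.S n ^ d) : HI.tau n x = x := by
  apply HI.tau_fix
  have h1 : HI.S n ≤ Subalgebra.toSubmodule (Algebra.adjoin ℝ (Set.range (HI.t n))) := by
    rw [HI.S, Submodule.span_le]
    rintro x (rfl | hx)
    · exact one_mem (Algebra.adjoin ℝ (Set.range (HI.t n)))
    · exact Algebra.subset_adjoin hx
  have h2 : ∀ d, HI.S n ^ d ≤ Subalgebra.toSubmodule (Algebra.adjoin ℝ (Set.range (HI.t n))) := by
    intro d
    induction d with
    | zero => rw [pow_zero, Submodule.one_le]; exact one_mem (Algebra.adjoin ℝ (Set.range (HI.t n)))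
    | succ d ih =>
      rw [pow_succ, Submodule.mul_le]
      intro a ha b hb
      exact mul_mem (S := Subalgebra ℝ (HI.P n)) (ih ha) (h1 hb)
  exact h2 d hx

theorem HI.finrank_S (n d : ℕ) : Module.finrank ℝ ↥(HI.S n ^ d) = ∑ e ∈ Finset.range (d+1), Module.finrank ℂ ↥(HI.R1 n ^ e) := by
  have hfg : (HI.S n ^ d).FG := Submodule.FG.pow (Submodule.fg_span ((Set.finite_range _).insert 1)) d
  have : Module.Finite ℝ ↥(HI.S n ^ d) := Module.Finite.iff_fg.mpr hfg
  rw [HI.finrank_real n _ (HI.fix_pow n d), ← (HI.R1_cum n d).2]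
  have : Submodule.span ℂ ((HI.S n ^ d : Submodule ℝ (HI.P n)) : Set (HI.P n)) = (1 ⊔ HI.R1 n) ^ d := by
    rw [HI.S, HI.span_pow_tower, Submodule.span_insert, HI.span_t, Submodule.one_eq_span]
  rw [this]

open Filter Topology in
theorem HI.S_growth (k n : ℕ) (hn : n = 2 ^ k) : ∃ r : ℕ, Odd r ∧
    Tendsto (fun d => (Module.finrank ℝ ↥(HI.S n ^ d) : ℝ) / (((d + 4 * n).choose (4*n) : ℕ) : ℝ)) atTop (𝓝 r) := by
  obtain ⟨m, rfl⟩ : ∃ m, n = m + 1 := ⟨n - 1, by have := Nat.one_le_two_pow (n := k); omega⟩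
  obtain ⟨r, hr, hr2⟩ := HI.r_odd k m hn
  refine ⟨r, hr, ?_⟩
  rw [hr2]
  refine (HI.cum_asym m).congr fun d => ?_
  rw [HI.finrank_S, HI.ch, add_comm d (4 * (m+1))]
  push_cast; rfl

noncomputable section
def HI.th {n : ℕ} (T : Fin (n+1) × Fin (n+1) → ℂ) : Matrix (Fin (n+1)) (Fin (n+1)) ℂ :=
  Matrix.of fun i j => ((1 + Complex.I) / 2) * T (i, j) + ((1 - Complex.I) / 2) * T (j, i)

def HI.R2 {n : ℕ} (Z : Matrix (Fin (n+1)) (Fin (n+1)) ℂ) : Prop := ∀ r c : Fin 3 → Fin (n+1), (Z.submatrix r c).det = 0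

def HI.Good {n N : ℕ} (c : Fin N → Fin (n+1) × Fin (n+1) → ℝ) : Prop :=
  ∀ T : Fin (n+1) × Fin (n+1) → ℂ, HI.R2 (HI.th T) → (∀ k, ∑ p, (c k p : ℂ) * T p = 0) → T = 0

def HI.lam {n N : ℕ} (c : Fin N → Fin (n+1) × Fin (n+1) → ℝ) (k : Fin N) : HI.P n := ∑ p, c k p • HI.t n p

def HI.thP (n : ℕ) : Matrix (Fin (n+1)) (Fin (n+1)) (MvPolynomial (Fin (n+1) × Fin (n+1)) ℂ) :=
  Matrix.of fun i j => MvPolynomial.C ((1 + Complex.I) / 2) * MvPolynomial.X (i, j) + MvPolynomial.C ((1 - Complex.I) / 2) * MvPolynomial.X (j, i)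

def HI.minP (n : ℕ) (rc : (Fin 3 → Fin (n+1)) × (Fin 3 → Fin (n+1))) : MvPolynomial (Fin (n+1) × Fin (n+1)) ℂ :=
  ((HI.thP n).submatrix rc.1 rc.2).det

def HI.lP {n N : ℕ} (c : Fin N → Fin (n+1) × Fin (n+1) → ℝ) (k : Fin N) : MvPolynomial (Fin (n+1) × Fin (n+1)) ℂ :=
  ∑ p, MvPolynomial.C (c k p : ℂ) * MvPolynomial.X p
end

theorem HI.eval_minP {n : ℕ} (T : Fin (n+1) × Fin (n+1) → ℂ) (rc) :
    MvPolynomial.aeval T (HI.minP n rc) = ((HI.th T).submatrix rc.1 rc.2).det := by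
  rw [HI.minP, AlgHom.map_det]
  congr 1
  ext i j
  simp [HI.thP, HI.th]

theorem HI.aeval_t_minP {n : ℕ} (rc) : MvPolynomial.aeval (HI.t n) (HI.minP n rc) = 0 := by
  rw [HI.minP, AlgHom.map_det]
  have : ((MvPolynomial.aeval (HI.t n)).mapMatrix ((HI.thP n).submatrix rc.1 rc.2)) = Matrix.of fun i j => HI.Xm n (rc.1 i) (rc.2 j) := by
    ext1 i j
    simp only [AlgHom.mapMatrix_apply, Matrix.map_apply, Matrix.submatrix_apply, HI.thP, Matrix.of_apply, map_add, map_mul,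
      MvPolynomial.aeval_C, MvPolynomial.aeval_X, HI.X_t, MvPolynomial.algebraMap_eq, MvPolynomial.smul_eq_C_mul]
  rw [this, Matrix.det_fin_three]
  simp only [Matrix.of_apply, HI.Xm]
  ring

theorem HI.aeval_t_lP {n N : ℕ} (c : Fin N → Fin (n+1) × Fin (n+1) → ℝ) (k) :
    MvPolynomial.aeval (HI.t n) (HI.lP c k) = HI.lam c k := by
  simp only [HI.lP, HI.lam, map_sum, map_mul, MvPolynomial.aeval_C, MvPolynomial.aeval_X]
  refine Finset.sum_congr rfl fun p _ => ?_
  rw [← Algebra.smul_def]; simp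

theorem HI.X_rad {n N : ℕ} (c : Fin N → Fin (n+1) × Fin (n+1) → ℝ) (hc : HI.Good c) (p : Fin (n+1) × Fin (n+1)) :
    (MvPolynomial.X p : MvPolynomial (Fin (n+1) × Fin (n+1)) ℂ) ∈
      (Ideal.span (Set.range (HI.minP n)) ⊔ Ideal.span (Set.range (HI.lP c))).radical := by
  rw [← MvPolynomial.vanishingIdeal_zeroLocus_eq_radical (K := ℂ), MvPolynomial.mem_vanishingIdeal_iff]
  intro T hT
  rw [MvPolynomial.mem_zeroLocus_iff] at hT
  have h0 : T = 0 := by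
    apply hc T
    · intro r s
      have := hT (HI.minP n (r, s)) (Ideal.mem_sup_left (Ideal.subset_span ⟨_, rfl⟩))
      rwa [HI.eval_minP] at this
    · intro k
      have := hT (HI.lP c k) (Ideal.mem_sup_right (Ideal.subset_span ⟨_, rfl⟩))
      simpa [HI.lP] using this
  simp [h0]

theorem HI.t_mem (n : ℕ) (p) : HI.t n p ∈ HI.R1 n := by
  rw [← HI.span_t]; exact Submodule.subset_span ⟨p, rfl⟩

theorem HI.lam_mem {n N : ℕ} (c : Fin N → Fin (n+1) × Fin (n+1) → ℝ) (k) : HI.lam c k ∈ HI.G n :=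
  Submodule.sum_mem _ fun p _ => Submodule.smul_mem _ _ (Submodule.subset_span ⟨p, rfl⟩)

theorem HI.G_le (n d : ℕ) (x : HI.P n) (hx : x ∈ HI.G n ^ d) : x ∈ HI.R1 n ^ d := by
  rw [← HI.span_t, ← HI.span_pow_tower]
  exact Submodule.subset_span hx

theorem HI.hc_lam (n : ℕ) (d : ℕ) (y : HI.P n) (hy : y ∈ HI.R1 n) (a : MvPolynomial (Fin (n+1) × Fin (n+1)) ℂ) :
    ∃ b ∈ HI.R1 n ^ d, MvPolynomial.homogeneousComponent (2 * (d+1)) (MvPolynomial.aeval (HI.t n) a * y) = b * y := by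
  induction a using MvPolynomial.induction_on' with
  | monomial s b =>
    have h1 : MvPolynomial.aeval (HI.t n) (MvPolynomial.monomial s b) ∈ HI.R1 n ^ s.degree := by
      rw [MvPolynomial.aeval_monomial, ← Algebra.smul_def]
      refine Submodule.smul_mem _ _ ?_
      rw [Finsupp.prod_fintype _ _ (by simp), Finsupp.degree_eq_sum, ← Finset.prod_pow_eq_pow_sum]
      exact HI.prod_mem_prod _ _ _ fun p _ => Submodule.pow_mem_pow _ (HI.t_mem n p) _
    have h2 : MvPolynomial.aeval (HI.t n) (MvPolynomial.monomial s b) * y ∈ HI.R1 n ^ (s.degree + 1) := by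
      rw [pow_succ]; exact Submodule.mul_mem_mul h1 hy
    rw [MvPolynomial.homogeneousComponent_of_mem (HI.R1_hom n _ h2)]
    split_ifs with h
    · have : s.degree = d := by omega
      rw [this] at h1
      exact ⟨_, h1, rfl⟩
    · exact ⟨0, Submodule.zero_mem _, by simp⟩
  | add p q hp hq =>
    obtain ⟨b, hb, hb2⟩ := hp
    obtain ⟨b', hb', hb2'⟩ := hq
    refine ⟨b + b', Submodule.add_mem _ hb hb', ?_⟩
    rw [map_add, add_mul, map_add, hb2, hb2', add_mul]

theorem HI.span_re_im (n : ℕ) (M : Submodule ℝ (HI.P n)) (x : HI.P n) (hx : x ∈ Submodule.span ℂ (M : Set (HI.P n))) :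
    ∃ u ∈ M, ∃ v ∈ M, x = u + Complex.I • v := by
  induction hx using Submodule.span_induction with
  | mem x hx => exact ⟨x, hx, 0, M.zero_mem, by simp⟩
  | zero => exact ⟨0, M.zero_mem, 0, M.zero_mem, by simp⟩
  | add x y _ _ hx hy =>
    obtain ⟨u, hu, v, hv, rfl⟩ := hx
    obtain ⟨u', hu', v', hv', rfl⟩ := hy
    exact ⟨u + u', M.add_mem hu hu', v + v', M.add_mem hv hv', by rw [smul_add]; abel⟩
  | smul a x _ hx =>
    obtain ⟨u, hu, v, hv, rfl⟩ := hx
    refine ⟨a.re • u - a.im • v, M.sub_mem (M.smul_mem _ hu) (M.smul_mem _ hv), a.re • v + a.im • u,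
      M.add_mem (M.smul_mem _ hv) (M.smul_mem _ hu), ?_⟩
    have e : ∀ (r : ℝ) (z : HI.P n), r • z = (r : ℂ) • z := fun r z => by simp
    simp only [e]
    conv_lhs => rw [← Complex.re_add_im a]
    have : (Complex.I * Complex.I) • ((a.im : ℂ) • v) = - ((a.im : ℂ) • v) := by rw [Complex.I_mul_I]; simp
    simp only [smul_add, add_smul, mul_smul] at this ⊢
    rw [smul_comm (a.im : ℂ) Complex.I (Complex.I • v), smul_comm (a.im : ℂ) Complex.I v, this, smul_comm (a.re : ℂ) Complex.I v, smul_comm (a.im : ℂ) Complex.I u]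
    abel

theorem HI.fin_R1 {n N : ℕ} (c : Fin N → Fin (n+1) × Fin (n+1) → ℝ) (hc : HI.Good c) :
    ∃ d0, ∀ x ∈ HI.R1 n ^ (d0+1), ∃ b : Fin N → HI.P n, (∀ k, b k ∈ HI.R1 n ^ d0) ∧ x = ∑ k, b k * HI.lam c k := by
  classical
  set J := (Ideal.span (Set.range (HI.minP n)) ⊔ Ideal.span (Set.range (HI.lP c))) with hJ
  have h1 : ∀ p, ∃ K, (MvPolynomial.X p : MvPolynomial (Fin (n+1) × Fin (n+1)) ℂ) ^ K ∈ J := fun p => HI.X_rad c hc p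
  choose K hK using h1
  set M := ∑ p, K p with hM
  have hKM : ∀ p, (MvPolynomial.X p : MvPolynomial (Fin (n+1) × Fin (n+1)) ℂ) ^ M ∈ J := fun p =>
    Ideal.pow_mem_of_pow_mem J (hK p) (Finset.single_le_sum (f := K) (fun _ _ => Nat.zero_le _) (Finset.mem_univ p))
  refine ⟨Fintype.card (Fin (n+1) × Fin (n+1)) * M, ?_⟩
  set d0 := Fintype.card (Fin (n+1) × Fin (n+1)) * M with hd0
  intro x hx
  have hx0 := hx
  rw [← HI.span_t, Submodule.span_pow] at hx
  induction hx using Submodule.span_induction with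
  | mem x hx1 =>
    obtain ⟨f, rfl⟩ := Set.mem_pow.mp hx1
    choose g hg using fun i => (f i).2
    have hx2 : (List.ofFn fun i => (f i : HI.P n)).prod = MvPolynomial.aeval (HI.t n) (∏ i, MvPolynomial.X (g i) : MvPolynomial (Fin (n+1) × Fin (n+1)) ℂ) := by
      rw [List.prod_ofFn, map_prod]
      exact Finset.prod_congr rfl fun i _ => by rw [MvPolynomial.aeval_X, hg]
    have hmem : (∏ i, MvPolynomial.X (g i) : MvPolynomial (Fin (n+1) × Fin (n+1)) ℂ) ∈ J := by
      obtain ⟨p, _, hp⟩ := Finset.exists_lt_card_fiber_of_mul_lt_card_of_maps_to (s := Finset.univ) (t := Finset.univ)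
        (f := g) (n := M) (fun _ _ => Finset.mem_univ _) (by simp [hd0])
      have h2 : (∏ i ∈ Finset.univ.filter (fun i => g i = p), MvPolynomial.X (g i) : MvPolynomial (Fin (n+1) × Fin (n+1)) ℂ) ∈ J := by
        rw [Finset.prod_congr rfl (g := fun _ => MvPolynomial.X p) (fun i hi => by rw [(Finset.mem_filter.mp hi).2]), Finset.prod_const]
        exact Ideal.pow_mem_of_pow_mem J (hKM p) hp.le
      exact Ideal.mem_of_dvd _ (Finset.prod_dvd_prod_of_subset _ _ _ (Finset.filter_subset _ _)) h2
    rw [hx2] at hx0 ⊢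
    obtain ⟨g1, hg1, h, hh, hsum⟩ := Submodule.mem_sup.mp hmem
    have e1 : MvPolynomial.aeval (HI.t n) g1 = 0 := by
      have : Ideal.span (Set.range (HI.minP n)) ≤ RingHom.ker (MvPolynomial.aeval (R := ℂ) (HI.t n)) := by
        rw [Ideal.span_le]; rintro _ ⟨rc, rfl⟩; exact HI.aeval_t_minP rc
      exact this hg1
    obtain ⟨a, ha⟩ := Ideal.mem_span_range_iff_exists_fun.mp hh
    have e2 : MvPolynomial.aeval (HI.t n) (∏ i, MvPolynomial.X (g i) : MvPolynomial (Fin (n+1) × Fin (n+1)) ℂ) = ∑ k, MvPolynomial.aeval (HI.t n) (a k) * HI.lam c k := by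
      rw [← hsum, map_add, e1, zero_add, ← ha, map_sum]
      exact Finset.sum_congr rfl fun k _ => by rw [map_mul, HI.aeval_t_lP]
    have e3 := congrArg (MvPolynomial.homogeneousComponent (2 * (d0+1))) e2
    rw [MvPolynomial.homogeneousComponent_of_mem (HI.R1_hom n _ hx0), if_pos rfl, map_sum] at e3
    choose b hb hb2 using fun k => HI.hc_lam n d0 (HI.lam c k) (by simpa using HI.G_le n 1 _ (by simpa using HI.lam_mem c k)) (a k)
    refine ⟨b, hb, ?_⟩
    rw [e3]
    exact Finset.sum_congr rfl fun k _ => hb2 k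
  | zero => exact ⟨0, fun _ => Submodule.zero_mem _, by simp⟩
  | add x y hx hy ihx ihy =>
    rw [← Submodule.span_pow, HI.span_t] at hx hy
    obtain ⟨b, hb, hb2⟩ := ihx hx
    obtain ⟨b', hb', hb2'⟩ := ihy hy
    refine ⟨b + b', fun k => Submodule.add_mem _ (hb k) (hb' k), ?_⟩
    rw [hb2, hb2', ← Finset.sum_add_distrib]
    exact Finset.sum_congr rfl fun k _ => by rw [Pi.add_apply, add_mul]
  | smul a x hx ihx =>
    rw [← Submodule.span_pow, HI.span_t] at hx
    obtain ⟨b, hb, hb2⟩ := ihx hx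
    refine ⟨a • b, fun k => Submodule.smul_mem _ _ (hb k), ?_⟩
    rw [hb2, Finset.smul_sum]
    exact Finset.sum_congr rfl fun k _ => by rw [Pi.smul_apply, smul_mul_assoc]

theorem HI.G_le_S (n d : ℕ) : HI.G n ^ d ≤ HI.S n ^ d := pow_le_pow_left' (by rw [HI.S_eq]; exact le_sup_right) d

def HI.FG {n N : ℕ} (c : Fin N → Fin (n+1) × Fin (n+1) → ℝ) (d0 : ℕ) : Prop :=
  ∀ x ∈ HI.G n ^ (d0+1), ∃ b : Fin N → HI.P n, (∀ k, b k ∈ HI.G n ^ d0) ∧ ∑ k, b k * HI.lam c k = x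

theorem HI.fin_G {n N : ℕ} (c : Fin N → Fin (n+1) × Fin (n+1) → ℝ) (hc : HI.Good c) :
    ∃ d0, HI.FG c d0 := by
  obtain ⟨d0, h⟩ := HI.fin_R1 c hc
  refine ⟨d0, ?_⟩
  have hlam : ∀ k, HI.tau n (HI.lam c k) = HI.lam c k := fun k => HI.fix_pow n 1 _ (by simpa using HI.G_le_S n 1 (by simpa using HI.lam_mem c k))
  intro x hx
  obtain ⟨b, hb, hxb⟩ := h x (HI.G_le n _ x hx)
  have hb2 : ∀ k, ∃ u ∈ HI.G n ^ d0, ∃ v ∈ HI.G n ^ d0, b k = u + Complex.I • v := by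
    intro k
    apply HI.span_re_im
    rw [HI.G, HI.span_pow_tower, HI.span_t]; exact hb k
  choose u hu v hv huv using hb2
  have hfix : ∀ w : Fin N → HI.P n, (∀ k, w k ∈ HI.G n ^ d0) → HI.tau n (∑ k, w k * HI.lam c k) = ∑ k, w k * HI.lam c k := by
    intro w hw
    rw [map_sum]
    exact Finset.sum_congr rfl fun k _ => by rw [map_mul, hlam, HI.fix_pow n d0 _ (HI.G_le_S n d0 (hw k))]
  have key : (∑ k, u k * HI.lam c k - x) + Complex.I • (∑ k, v k * HI.lam c k) = 0 := by
    rw [hxb, Finset.smul_sum]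
    simp only [huv, add_mul, smul_mul_assoc, Finset.sum_add_distrib]
    ring
  have := (HI.re_im n _ _ (by rw [map_sub, hfix u hu, HI.fix_pow n _ x (HI.G_le_S n _ hx)]) (hfix v hv) key).1
  rw [sub_eq_zero] at this
  exact ⟨u, hu, this⟩

theorem HI.fin_S {n N : ℕ} (c : Fin N → Fin (n+1) × Fin (n+1) → ℝ) (d0 : ℕ) (h : HI.FG c d0) :
    HI.S n ^ (d0 + 1) ≤ (Submodule.span ℝ (insert 1 (Set.range (HI.lam c)))) * HI.S n ^ d0 := by
  have hG : HI.G n ^ (d0+1) ≤ (Submodule.span ℝ (insert 1 (Set.range (HI.lam c)))) * HI.S n ^ d0 := by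
    intro x hx
    obtain ⟨u, hu, rfl⟩ := h x hx
    refine Submodule.sum_mem _ fun k _ => ?_
    rw [mul_comm (u k)]
    exact Submodule.mul_mem_mul (Submodule.subset_span (Set.mem_insert_of_mem _ (Set.mem_range_self k))) (HI.G_le_S n d0 (hu k))
  have h1 : HI.S n ^ d0 ≤ (Submodule.span ℝ (insert 1 (Set.range (HI.lam c)))) * HI.S n ^ d0 := by
    intro x hx
    rw [← one_mul x]
    exact Submodule.mul_mem_mul (Submodule.subset_span (Set.mem_insert _ _)) hx
  conv_lhs => rw [HI.S_eq, HI.one_sup_pow, ← HI.S_eq]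
  exact sup_le h1 hG

theorem HI.split_poly {κ : Type*} (f : MvPolynomial κ ℂ) : ∃ p q : MvPolynomial κ ℝ,
    f = MvPolynomial.map Complex.ofRealHom p + MvPolynomial.C Complex.I * MvPolynomial.map Complex.ofRealHom q := by
  induction f using MvPolynomial.induction_on with
  | C a =>
    refine ⟨MvPolynomial.C a.re, MvPolynomial.C a.im, ?_⟩
    simp only [MvPolynomial.map_C, ← MvPolynomial.C_mul, ← MvPolynomial.C_add]
    congr 1
    conv_lhs => rw [← Complex.re_add_im a, mul_comm]
    rfl
  | add f g hf hg =>
    obtain ⟨p, q, rfl⟩ := hf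
    obtain ⟨p', q', rfl⟩ := hg
    exact ⟨p + p', q + q', by rw [map_add, map_add]; ring⟩
  | mul_X f i hf =>
    obtain ⟨p, q, rfl⟩ := hf
    exact ⟨p * MvPolynomial.X i, q * MvPolynomial.X i, by rw [map_mul, map_mul, MvPolynomial.map_X]; ring⟩

theorem HI.t_mem_S (n : ℕ) (p) : HI.t n p ∈ HI.S n := Submodule.subset_span (Set.mem_insert_of_mem _ ⟨p, rfl⟩)

theorem HI.aeval_map_ofReal {κ B : Type*} [CommRing B] [Algebra ℝ B] [Algebra ℂ B] [IsScalarTower ℝ ℂ B] (t : κ → B) (p : MvPolynomial κ ℝ) :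
    MvPolynomial.aeval t (MvPolynomial.map Complex.ofRealHom p) = MvPolynomial.aeval t p := 
  MvPolynomial.aeval_map_algebraMap ℂ t p

theorem HI.eval_chi {n : ℕ} (χ : Algebra.adjoin ℝ (HI.S n : Set (HI.P n)) →ₐ[ℝ] ℝ) (f : MvPolynomial (Fin (n+1) × Fin (n+1)) ℂ)
    (hf : MvPolynomial.aeval (HI.t n) f = 0) :
    MvPolynomial.aeval (fun p => ((χ ⟨HI.t n p, Algebra.subset_adjoin (HI.t_mem_S n p)⟩ : ℝ) : ℂ)) f = 0 := by
  obtain ⟨p, q, rfl⟩ := HI.split_poly f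
  set t' : Fin (n+1) × Fin (n+1) → Algebra.adjoin ℝ (HI.S n : Set (HI.P n)) := fun p => ⟨HI.t n p, Algebra.subset_adjoin (HI.t_mem_S n p)⟩ with ht'
  have h1 : ∀ p : MvPolynomial (Fin (n+1) × Fin (n+1)) ℝ, ((MvPolynomial.aeval t' p : Algebra.adjoin ℝ (HI.S n : Set (HI.P n))) : HI.P n) = MvPolynomial.aeval (HI.t n) p := by
    intro p
    exact (MvPolynomial.comp_aeval_apply (f := t') (Algebra.adjoin ℝ (HI.S n : Set (HI.P n))).val p)
  have hfix : ∀ p : MvPolynomial (Fin (n+1) × Fin (n+1)) ℝ, HI.tau n (MvPolynomial.aeval (HI.t n) p) = MvPolynomial.aeval (HI.t n) p := by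
    intro p
    apply HI.tau_fix
    rw [Algebra.adjoin_range_eq_range_aeval]
    exact ⟨p, rfl⟩
  rw [map_add, map_mul, MvPolynomial.aeval_C, ← Algebra.smul_def, HI.aeval_map_ofReal, HI.aeval_map_ofReal] at hf
  obtain ⟨hp, hq⟩ := HI.re_im n _ _ (hfix p) (hfix q) hf
  have h2 : ∀ p : MvPolynomial (Fin (n+1) × Fin (n+1)) ℝ, MvPolynomial.aeval (HI.t n) p = 0 → 
      MvPolynomial.aeval (fun p => ((χ (t' p) : ℝ) : ℂ)) p = 0 := by
    intro p hp
    rw [← h1, ZeroMemClass.coe_eq_zero] at hp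
    have h3 := MvPolynomial.comp_aeval_apply (f := t') χ p
    rw [hp, map_zero] at h3
    have h4 := MvPolynomial.comp_aeval_apply (f := fun i => χ (t' i)) Complex.ofRealAm p
    rw [← h3, map_zero] at h4
    exact h4.symm
  rw [map_add, map_mul, HI.aeval_map_ofReal, HI.aeval_map_ofReal, h2 p hp, h2 q hq]; simp

theorem HI.dense_image (k n : ℕ) (hn : n = 2 ^ k) (c : Fin (4 * n) → Fin (n+1) × Fin (n+1) → ℝ) (d0 : ℕ) (h : HI.FG c d0) :
    ∃ g : MvPolynomial (Fin (4 * n)) ℝ, g ≠ 0 ∧ ∀ y : Fin (4 * n) → ℝ, MvPolynomial.eval y g ≠ 0 →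
      ∃ T : Fin (n+1) × Fin (n+1) → ℝ, HI.R2 (HI.th fun p => (T p : ℂ)) ∧ ∀ k, ∑ p, c k p * T p = y k := by
  obtain ⟨r, hr, hg⟩ := HI.S_growth k n hn
  have hl : ∀ k, HI.lam c k ∈ HI.S n := fun k => by simpa using HI.G_le_S n 1 (by simpa using HI.lam_mem c k)
  obtain ⟨g, hg0, hg⟩ := HI.AL (HI.S n) (Submodule.subset_span (Set.mem_insert _ _)) 
    (Submodule.fg_span ((Set.finite_range _).insert _)) (HI.lam c) hl d0 (HI.fin_S c d0 h) r hr hg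
  refine ⟨g, hg0, fun y hy => ?_⟩
  obtain ⟨χ, hχ⟩ := hg y hy
  refine ⟨fun p => χ ⟨HI.t n p, Algebra.subset_adjoin (HI.t_mem_S n p)⟩, ?_, ?_⟩
  · intro r s
    rw [← HI.eval_minP _ (r, s)]
    exact HI.eval_chi χ _ (HI.aeval_t_minP _)
  · intro k
    rw [← hχ k]
    have : (⟨HI.lam c k, Algebra.subset_adjoin (hl k)⟩ : Algebra.adjoin ℝ (HI.S n : Set (HI.P n))) = ∑ p, c k p • ⟨HI.t n p, Algebra.subset_adjoin (HI.t_mem_S n p)⟩ := by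
      apply Subtype.ext
      simp [HI.lam]
    rw [this, map_sum]
    exact Finset.sum_congr rfl fun p _ => by rw [map_smul, smul_eq_mul]

noncomputable def HI.pol {n : ℕ} (a : Fin (n+1) → ℂ) : Polynomial ℂ := ∑ i : Fin (n+1), Polynomial.monomial (i : ℕ) (a i)

theorem HI.pol_coeff {n : ℕ} (a : Fin (n+1) → ℂ) (i : Fin (n+1)) : (HI.pol a).coeff i = a i := by
  simp [HI.pol, Polynomial.finsetSum_coeff, Polynomial.coeff_monomial, Fin.val_inj]

theorem HI.pol_mul_coeff {n : ℕ} (a b : Fin (n+1) → ℂ) (s : ℕ) :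
    (HI.pol a * HI.pol b).coeff s = ∑ i : Fin (n+1), ∑ j : Fin (n+1), if (i : ℕ) + j = s then a i * b j else 0 := by
  simp only [HI.pol, Finset.sum_mul_sum, Polynomial.monomial_mul_monomial, Polynomial.finsetSum_coeff, Polynomial.coeff_monomial]

theorem HI.pol_der {n : ℕ} (a : Fin (n+1) → ℂ) :
    Polynomial.X * Polynomial.derivative (HI.pol a) = HI.pol (fun i => (i : ℂ) * a i) := by
  simp only [HI.pol, map_sum, Finset.mul_sum]
  refine Finset.sum_congr rfl fun i _ => ?_
  rw [Polynomial.derivative_monomial]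
  rcases Nat.eq_zero_or_pos (i : ℕ) with h | h
  · simp [h]
  · rw [Polynomial.X_mul_monomial, Nat.sub_add_cancel h, mul_comm]

theorem HI.wronsk (α β : Polynomial ℂ) (h : α * Polynomial.derivative β = Polynomial.derivative α * β) :
    ∃ (g : Polynomial ℂ) (u v : ℂ), α = g * Polynomial.C u ∧ β = g * Polynomial.C v := by
  by_cases h0 : α = 0 ∧ β = 0
  · exact ⟨0, 0, 0, by simp [h0.1], by simp [h0.2]⟩
  have hg0 : EuclideanDomain.gcd α β ≠ 0 := fun h => h0 (EuclideanDomain.gcd_eq_zero_iff.mp h)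
  obtain ⟨u, hu⟩ := EuclideanDomain.gcd_dvd_left α β
  obtain ⟨v, hv⟩ := EuclideanDomain.gcd_dvd_right α β
  set g := EuclideanDomain.gcd α β with hg
  have hc : IsCoprime u v := by
    have e := EuclideanDomain.gcd_eq_gcd_ab α β
    rw [← hg] at e
    refine ⟨EuclideanDomain.gcdA α β, EuclideanDomain.gcdB α β, ?_⟩
    apply mul_left_cancel₀ hg0
    conv_rhs => rw [mul_one, e]
    conv_rhs => rw [hu, hv, ← hu, ← hv]
    linear_combination (-EuclideanDomain.gcdA α β) * hu - EuclideanDomain.gcdB α β * hv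
  have hw : u.wronskian v = 0 := by
    have : g * g * (u.wronskian v) = 0 := by
      rw [hu, hv] at h
      simp only [Polynomial.derivative_mul] at h
      rw [Polynomial.wronskian]
      linear_combination h
    exact (mul_eq_zero.mp this).resolve_left (mul_ne_zero hg0 hg0)
  obtain ⟨h1, h2⟩ := hc.wronskian_eq_zero_iff.mp hw
  rw [Polynomial.eq_C_of_derivative_eq_zero h1] at hu
  rw [Polynomial.eq_C_of_derivative_eq_zero h2] at hv
  exact ⟨g, _, _, hu, hv⟩

theorem HI.rank_two {n : ℕ} (Z : Matrix (Fin (n+1)) (Fin (n+1)) ℂ) (h : HI.R2 Z) (hZ : Z ≠ 0) :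
    (∃ a α : Fin (n+1) → ℂ, ∀ i j, Z i j = a i * α j) ∨
    (∃ a α b β : Fin (n+1) → ℂ, (∀ i j, Z i j = a i * α j + b i * β j) ∧ ∃ c d, α c * β d ≠ α d * β c) := by
  by_cases h2 : ∃ r s c d, Z r c * Z s d ≠ Z r d * Z s c
  · right
    obtain ⟨r, s, c, d, hm⟩ := h2
    have hm' := sub_ne_zero.mpr hm
    refine ⟨fun i => (Z i c * Z s d - Z i d * Z s c) / (Z r c * Z s d - Z r d * Z s c), Z r,
      fun i => (Z r c * Z i d - Z r d * Z i c) / (Z r c * Z s d - Z r d * Z s c), Z s, ?_, c, d, hm⟩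
    intro i j
    have := h ![i, r, s] ![j, c, d]
    rw [Matrix.det_fin_three] at this
    simp at this
    rw [div_mul_eq_mul_div, div_mul_eq_mul_div, ← add_div, eq_div_iff hm']
    linear_combination this
  · left
    push Not at h2
    obtain ⟨k, l, hkl⟩ : ∃ k l, Z k l ≠ 0 := by
      by_contra hh; push Not at hh; exact hZ (by ext i j; exact hh i j)
    refine ⟨fun i => Z i l / Z k l, Z k, fun i j => ?_⟩
    field_simp
    linear_combination h2 i k j l

theorem HI.good_Z {n : ℕ} (Z : Matrix (Fin (n+1)) (Fin (n+1)) ℂ) (h : HI.R2 Z)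
    (hF : ∀ s : ℕ, ∑ i : Fin (n+1), ∑ j : Fin (n+1), (if (i : ℕ) + j = s then Z i j else 0) = 0)
    (hG : ∀ s : ℕ, ∑ i : Fin (n+1), ∑ j : Fin (n+1), (if (i : ℕ) + j = s then ((j : ℂ) - i) * Z i j else 0) = 0) : Z = 0 := by
  by_contra hZ
  rcases HI.rank_two Z h hZ with ⟨a, α, hz⟩ | ⟨a, α, b, β, hz, c, d, hcd⟩
  · have : HI.pol a * HI.pol α = 0 := by
      ext s
      rw [HI.pol_mul_coeff, Polynomial.coeff_zero]
      refine Eq.trans ?_ (hF s)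
      simp only [hz]
    apply hZ
    ext i j
    rw [hz]
    rcases mul_eq_zero.mp this with h | h
    · rw [← HI.pol_coeff a i, h]; simp
    · rw [← HI.pol_coeff α j, h]; simp
  · have e1 : HI.pol a * HI.pol α + HI.pol b * HI.pol β = 0 := by
      ext s
      rw [Polynomial.coeff_add, HI.pol_mul_coeff, HI.pol_mul_coeff, Polynomial.coeff_zero]
      refine Eq.trans ?_ (hF s)
      simp only [hz, ← Finset.sum_add_distrib]
      refine Finset.sum_congr rfl fun i _ => Finset.sum_congr rfl fun j _ => ?_
      split_ifs <;> simp
    have e2 : HI.pol a * HI.pol (fun i => (i : ℂ) * α i) - HI.pol (fun i => (i : ℂ) * a i) * HI.pol α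
        + (HI.pol b * HI.pol (fun i => (i : ℂ) * β i) - HI.pol (fun i => (i : ℂ) * b i) * HI.pol β) = 0 := by
      ext s
      simp only [Polynomial.coeff_add, Polynomial.coeff_sub, HI.pol_mul_coeff, Polynomial.coeff_zero]
      refine Eq.trans ?_ (hG s)
      simp only [hz, ← Finset.sum_add_distrib, ← Finset.sum_sub_distrib]
      refine Finset.sum_congr rfl fun i _ => Finset.sum_congr rfl fun j _ => ?_
      split_ifs
      · ring
      · simp
    simp only [← HI.pol_der] at e2
    have e3 := congrArg Polynomial.derivative e1
    simp only [Polynomial.derivative_add, Polynomial.derivative_mul, Polynomial.derivative_zero] at e3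
    have e4 : HI.pol a * Polynomial.derivative (HI.pol α) + HI.pol b * Polynomial.derivative (HI.pol β) = 0 := by
      have : (2 * Polynomial.X : Polynomial ℂ) * (HI.pol a * Polynomial.derivative (HI.pol α) + HI.pol b * Polynomial.derivative (HI.pol β)) = 0 := by
        linear_combination e2 + Polynomial.X * e3
      exact (mul_eq_zero.mp this).resolve_left (mul_ne_zero two_ne_zero Polynomial.X_ne_zero)
    have hab : HI.pol a ≠ 0 ∨ HI.pol b ≠ 0 := by
      by_contra hh
      push Not at hh
      apply hZ
      ext i j
      rw [hz, ← HI.pol_coeff a i, ← HI.pol_coeff b i, hh.1, hh.2]; simp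
    have hw : HI.pol α * Polynomial.derivative (HI.pol β) = Polynomial.derivative (HI.pol α) * HI.pol β := by
      rw [← sub_eq_zero]
      rcases hab with h | h
      · have : HI.pol a * (HI.pol α * Polynomial.derivative (HI.pol β) - Polynomial.derivative (HI.pol α) * HI.pol β) = 0 := by
          linear_combination Polynomial.derivative (HI.pol β) * e1 - HI.pol β * e4
        exact (mul_eq_zero.mp this).resolve_left h
      · have : HI.pol b * (HI.pol α * Polynomial.derivative (HI.pol β) - Polynomial.derivative (HI.pol α) * HI.pol β) = 0 := by
          linear_combination (-Polynomial.derivative (HI.pol α)) * e1 + HI.pol α * e4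
        exact (mul_eq_zero.mp this).resolve_left h
    obtain ⟨g, u, v, h1, h2⟩ := HI.wronsk _ _ hw
    apply hcd
    rw [← HI.pol_coeff α c, ← HI.pol_coeff α d, ← HI.pol_coeff β c, ← HI.pol_coeff β d, h1, h2]
    simp only [Polynomial.coeff_mul_C]
    ring

theorem HI.th_inv {n : ℕ} (T : Fin (n+1) × Fin (n+1) → ℂ) (i j) :
    T (i, j) = ((1 - Complex.I) / 2) * HI.th T i j + ((1 + Complex.I) / 2) * HI.th T j i := by
  simp only [HI.th, Matrix.of_apply]
  linear_combination (1/2 * T (i,j) - 1/2 * T (j, i)) * Complex.I_sq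

theorem HI.th_zero {n : ℕ} (T : Fin (n+1) × Fin (n+1) → ℂ) (h : HI.th T = 0) : T = 0 := by
  ext ⟨i, j⟩
  rw [HI.th_inv T, h]; simp

def HI.c0 (n : ℕ) (k : Fin (4 * n)) (p : Fin (n+1) × Fin (n+1)) : ℝ :=
  if (k : ℕ) < 2 * n + 1 then (if (p.1 : ℕ) + p.2 = k then 1 else 0)
  else (if (p.1 : ℕ) + p.2 = k - 2 * n then ((p.2 : ℕ) : ℝ) - ((p.1 : ℕ) : ℝ) else 0)

theorem HI.good0 (n : ℕ) (hn : 1 ≤ n) : HI.Good (HI.c0 n) := by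
  intro T hT h
  apply HI.th_zero
  have hF : ∀ s : ℕ, ∑ i : Fin (n+1), ∑ j : Fin (n+1), (if (i : ℕ) + j = s then T (i, j) else 0) = 0 := by
    intro s
    by_cases hs : s < 2 * n + 1
    · have := h ⟨s, by omega⟩
      rw [Fintype.sum_prod_type] at this
      refine Eq.trans ?_ this
      refine Finset.sum_congr rfl fun i _ => Finset.sum_congr rfl fun j _ => ?_
      simp only [HI.c0]
      rw [if_pos hs]
      split_ifs <;> simp
    · refine Finset.sum_eq_zero fun i _ => Finset.sum_eq_zero fun j _ => if_neg (by have := i.2; have := j.2; omega)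
  have hG : ∀ s : ℕ, ∑ i : Fin (n+1), ∑ j : Fin (n+1), (if (i : ℕ) + j = s then ((j : ℂ) - i) * T (i, j) else 0) = 0 := by
    intro s
    by_cases hs : 0 < s ∧ s < 2 * n
    · have := h ⟨2 * n + s, by omega⟩
      rw [Fintype.sum_prod_type] at this
      refine Eq.trans ?_ this
      refine Finset.sum_congr rfl fun i _ => Finset.sum_congr rfl fun j _ => ?_
      simp only [HI.c0]
      rw [if_neg (show ¬ (2 * n + s < 2 * n + 1) by omega), Nat.add_sub_cancel_left]
      split_ifs <;> simp
    · refine Finset.sum_eq_zero fun i _ => Finset.sum_eq_zero fun j _ => ?_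
      split_ifs with h1
      · have : (i : ℕ) = j := by have := i.2; have := j.2; omega
        rw [this]; simp
      · rfl
  have hsw : ∀ (s : ℕ) (f : Fin (n+1) → Fin (n+1) → ℂ), ∑ i : Fin (n+1), ∑ j : Fin (n+1), (if (i : ℕ) + j = s then f j i else 0) = 
      ∑ i : Fin (n+1), ∑ j : Fin (n+1), (if (i : ℕ) + j = s then f i j else 0) := by
    intro s f
    rw [Finset.sum_comm]
    simp only [add_comm]
  apply HI.good_Z _ hT
  · intro s
    have e : ∀ i j : Fin (n+1), (if (i : ℕ) + j = s then HI.th T i j else 0) = ((1 + Complex.I) / 2) * (if (i : ℕ) + j = s then T (i, j) else 0) + ((1 - Complex.I) / 2) * (if (i : ℕ) + j = s then T (j, i) else 0) := by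
      intro i j
      split_ifs <;> simp [HI.th]
    simp only [e, Finset.sum_add_distrib, ← Finset.mul_sum]
    rw [hsw s (fun i j => T (i, j)), hF]; simp
  · intro s
    have e : ∀ i j : Fin (n+1), (if (i : ℕ) + j = s then ((j : ℂ) - i) * HI.th T i j else 0) = ((1 + Complex.I) / 2) * (if (i : ℕ) + j = s then ((j : ℂ) - i) * T (i, j) else 0) - ((1 - Complex.I) / 2) * (if (i : ℕ) + j = s then ((i : ℂ) - j) * T (j, i) else 0) := by
      intro i j
      split_ifs
      · simp [HI.th]; ring
      · simp
    simp only [e, Finset.sum_sub_distrib, ← Finset.mul_sum]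
    rw [hsw s (fun i j => ((j : ℂ) - i) * T (i, j)), hG]; simp

noncomputable def HI.Phi {n N : ℕ} (c : Fin N → Fin (n+1) × Fin (n+1) → ℝ) (d0 : ℕ) :
    (Fin N → ↥(HI.G n ^ d0)) →ₗ[ℝ] ↥(HI.G n ^ (d0+1)) :=
  LinearMap.codRestrict _ (∑ k, (LinearMap.mulRight ℝ (HI.lam c k)) ∘ₗ (HI.G n ^ d0).subtype ∘ₗ (LinearMap.proj k)) (by
    intro b
    simp only [LinearMap.sum_apply, LinearMap.comp_apply, LinearMap.mulRight_apply, LinearMap.proj_apply, Submodule.subtype_apply]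
    refine Submodule.sum_mem _ fun k _ => ?_
    rw [pow_succ]
    exact Submodule.mul_mem_mul (b k).2 (HI.lam_mem c k))

theorem HI.Phi_apply {n N : ℕ} (c : Fin N → Fin (n+1) × Fin (n+1) → ℝ) (d0 : ℕ) (b) :
    (HI.Phi c d0 b : HI.P n) = ∑ k, (b k : HI.P n) * HI.lam c k := by
  simp [HI.Phi, LinearMap.sum_apply]

theorem HI.FG_iff {n N : ℕ} (c : Fin N → Fin (n+1) × Fin (n+1) → ℝ) (d0 : ℕ) :
    HI.FG c d0 ↔ Function.Surjective (HI.Phi c d0) := by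
  constructor
  · rintro h ⟨x, hx⟩
    obtain ⟨b, hb, e⟩ := h x hx
    exact ⟨fun k => ⟨b k, hb k⟩, Subtype.ext (by rw [HI.Phi_apply]; exact e)⟩
  · intro h x hx
    obtain ⟨b, hb⟩ := h ⟨x, hx⟩
    refine ⟨fun k => b k, fun k => (b k).2, ?_⟩
    rw [← HI.Phi_apply, hb]

open Filter Topology in
theorem HI.pert {V W : Type*} [AddCommGroup V] [Module ℝ V] [AddCommGroup W] [Module ℝ W] [FiniteDimensional ℝ W]
    (f g : V →ₗ[ℝ] W) (hg : Function.Surjective g) : ∀ᶠ μ in 𝓝[≠] (0:ℝ), Function.Surjective (f + μ • g : V →ₗ[ℝ] W) := by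
  obtain ⟨ρ, hρ⟩ := g.exists_rightInverse_of_surjective (LinearMap.range_eq_top.mpr hg)
  have hfin := Module.End.finite_hasEigenvalue (f ∘ₗ ρ)
  have hfin2 : Set.Finite (insert 0 ((fun x : ℝ => -x) ⁻¹' {μ | Module.End.HasEigenvalue (f ∘ₗ ρ) μ}) \ {0}) :=
    (Set.Finite.subset ((hfin.preimage neg_injective.injOn).insert 0) Set.sdiff_subset)
  have : ∀ᶠ μ in 𝓝 (0:ℝ), μ ∉ (insert 0 ((fun x : ℝ => -x) ⁻¹' {μ | Module.End.HasEigenvalue (f ∘ₗ ρ) μ}) \ {0}) :=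
    hfin2.isClosed.isOpen_compl.mem_nhds (by simp)
  filter_upwards [this.filter_mono nhdsWithin_le_nhds, self_mem_nhdsWithin] with μ h1 h2
  have h3 : ¬ Module.End.HasEigenvalue (f ∘ₗ ρ) (-μ) := by
    intro h
    exact h1 ⟨Set.mem_insert_of_mem _ h, h2⟩
  have h4 : Function.Injective ((f + μ • g) ∘ₗ ρ) := by
    rw [← LinearMap.ker_eq_bot]
    rw [Module.End.hasEigenvalue_iff, not_not, Module.End.eigenspace_def] at h3
    rw [← h3]
    congr 1
    ext x
    have := LinearMap.congr_fun hρ x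
    simp only [LinearMap.comp_apply, LinearMap.id_apply] at this
    simp [this, Module.algebraMap_end_apply]
  have h5 := LinearMap.surjective_of_injective h4
  rw [LinearMap.coe_comp] at h5
  exact h5.of_comp

open Filter Topology in
theorem HI.FG_pert {n N : ℕ} (c c0 : Fin N → Fin (n+1) × Fin (n+1) → ℝ) (d0 : ℕ) (h : HI.FG c0 d0) :
    ∀ᶠ μ in 𝓝[≠] (0:ℝ), HI.FG (fun k p => c k p + μ * c0 k p) d0 := by
  have hfg : (HI.G n ^ (d0+1)).FG := (Submodule.fg_span (Set.finite_range _)).pow _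
  have : FiniteDimensional ℝ ↥(HI.G n ^ (d0+1)) := Module.Finite.iff_fg.mpr hfg
  filter_upwards [HI.pert (HI.Phi c d0) (HI.Phi c0 d0) ((HI.FG_iff _ _).mp h)] with μ hμ
  rw [HI.FG_iff]
  convert hμ using 2
  refine LinearMap.ext fun b => ?_
  apply Subtype.ext
  rw [HI.Phi_apply, LinearMap.add_apply, Submodule.coe_add, LinearMap.smul_apply, Submodule.coe_smul, HI.Phi_apply, HI.Phi_apply,
    Finset.smul_sum, ← Finset.sum_add_distrib]
  refine Finset.sum_congr rfl fun k _ => ?_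
  rw [← mul_smul_comm, ← mul_add]
  congr 1
  simp only [HI.lam, Finset.smul_sum, ← Finset.sum_add_distrib, add_smul, mul_smul]

theorem HI.nonvan {N : ℕ} (g : MvPolynomial (Fin N) ℝ) (hg : g ≠ 0) (y : Fin N → ℝ) (δ : ℝ) (hδ : 0 < δ) :
    ∃ z : Fin N → ℝ, ‖z - y‖ ≤ δ ∧ MvPolynomial.eval z g ≠ 0 := by
  by_contra hh
  push Not at hh
  apply hg
  apply MvPolynomial.funext_set (fun i => Set.Icc (y i) (y i + δ)) (fun i => Set.Icc_infinite (by linarith))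
  intro z hz
  rw [map_zero]
  apply hh
  rw [pi_norm_le_iff_of_nonneg hδ.le]
  intro i
  have := hz i (Set.mem_univ i)
  rw [Pi.sub_apply, Real.norm_eq_abs, abs_le]
  constructor <;> linarith [this.1, this.2]

def HI.ev {n N : ℕ} (c : Fin N → Fin (n+1) × Fin (n+1) → ℝ) (T : Fin (n+1) × Fin (n+1) → ℝ) : Fin N → ℝ :=
  fun k => ∑ p, c k p * T p

def HI.VR (n : ℕ) : Set (Fin (n+1) × Fin (n+1) → ℝ) := {T | HI.R2 (HI.th fun p => (T p : ℂ))}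

theorem HI.VR_closed (n : ℕ) : IsClosed (HI.VR n) := by
  have : HI.VR n = ⋂ r : Fin 3 → Fin (n+1), ⋂ s : Fin 3 → Fin (n+1), {T | ((HI.th fun p => (T p : ℂ)).submatrix r s).det = 0} := by
    ext T; simp only [Set.mem_iInter]; rfl
  rw [this]
  refine isClosed_iInter fun r => isClosed_iInter fun s => isClosed_eq ?_ continuous_const
  simp only [Matrix.det_fin_three, Matrix.submatrix_apply, HI.th, Matrix.of_apply]
  fun_prop

theorem HI.VR_smul (n : ℕ) (T) (hT : T ∈ HI.VR n) (a : ℝ) : a • T ∈ HI.VR n := by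
  intro r s
  have h := hT r s
  have : (HI.th fun p => ((a • T) p : ℂ)) = (a : ℂ) • (HI.th fun p => (T p : ℂ)) := by
    ext i j; simp [HI.th]; ring
  rw [this, Matrix.submatrix_smul, Pi.smul_apply, Pi.smul_apply, Matrix.det_smul, h]; simp

theorem HI.ev_cont {n N : ℕ} (c : Fin N → Fin (n+1) × Fin (n+1) → ℝ) : Continuous (HI.ev c) := by
  unfold HI.ev; fun_prop

theorem HI.ev_smul {n N : ℕ} (c : Fin N → Fin (n+1) × Fin (n+1) → ℝ) (a : ℝ) (T) : HI.ev c (a • T) = a • HI.ev c T := by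
  ext k; simp [HI.ev, Finset.mul_sum]; exact Finset.sum_congr rfl fun _ _ => by ring

open Filter Topology in
theorem HI.surj (k n : ℕ) (hn : n = 2 ^ k) (c : Fin (4 * n) → Fin (n+1) × Fin (n+1) → ℝ)
    (hc : ∀ T ∈ HI.VR n, HI.ev c T = 0 → T = 0) (y : Fin (4 * n) → ℝ) : ∃ T ∈ HI.VR n, HI.ev c T = y := by
  obtain ⟨d0, hd0⟩ := HI.fin_G _ (HI.good0 n (by rw [hn]; exact Nat.one_le_two_pow))
  obtain ⟨m, hm, hmin⟩ : ∃ m > 0, ∀ T ∈ HI.VR n, m * ‖T‖ ≤ ‖HI.ev c T‖ := by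
    obtain ⟨m, hm, hmin⟩ := ((isCompact_sphere (0 : Fin (n+1) × Fin (n+1) → ℝ) 1).inter_right (HI.VR_closed n)).exists_forall_le'
      (f := fun T => ‖HI.ev c T‖) (HI.ev_cont c).norm.continuousOn (a := 0) (by
        intro T hT
        rw [norm_pos_iff]
        intro h0
        have := hc T hT.2 h0
        have h1 := hT.1
        simp [this] at h1)
    refine ⟨m, hm, fun T hT => ?_⟩
    by_cases hT0 : T = 0
    · subst hT0; simp
    have hT0' : 0 < ‖T‖ := norm_pos_iff.mpr hT0
    have := hmin (‖T‖⁻¹ • T) ⟨by simp [norm_smul, hT0], HI.VR_smul n T hT _⟩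
    rw [HI.ev_smul, norm_smul, norm_inv, norm_norm, inv_mul_eq_div, le_div_iff₀ hT0'] at this
    exact this
  obtain ⟨M, hM⟩ : ∃ M, ∀ T, ‖HI.ev (HI.c0 n) T‖ ≤ M * ‖T‖ := by
    let f : (Fin (n+1) × Fin (n+1) → ℝ) →ₗ[ℝ] (Fin (4*n) → ℝ) :=
      { toFun := HI.ev (HI.c0 n)
        map_add' := fun a b => by ext k; simp [HI.ev, mul_add, Finset.sum_add_distrib]
        map_smul' := fun a b => HI.ev_smul _ a b }
    exact ⟨‖LinearMap.toContinuousLinearMap f‖, fun T => (LinearMap.toContinuousLinearMap f).le_opNorm T⟩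
  have step : ∀ j : ℕ, ∃ T ∈ HI.VR n, ∃ μ : ℝ, |μ| ≤ 1 / ((j:ℝ) + 1) ∧ |μ| * M ≤ m / 2 ∧ ‖HI.ev c T + μ • HI.ev (HI.c0 n) T - y‖ ≤ 1 / ((j : ℝ)+1) := by
    intro j
    have hj : (0:ℝ) < 1 / ((j:ℝ)+1) := by positivity
    have h1 : ∀ᶠ μ in 𝓝[≠] (0:ℝ), |μ| ≤ 1 / ((j:ℝ) + 1) := by
      refine Filter.Eventually.filter_mono nhdsWithin_le_nhds ?_
      have : Tendsto (fun μ : ℝ => |μ|) (𝓝 0) (𝓝 |0|) := continuous_abs.tendsto 0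
      rw [abs_zero] at this
      exact this.eventually_le_const hj
    have h2 : ∀ᶠ μ in 𝓝[≠] (0:ℝ), |μ| * M ≤ m / 2 := by
      refine Filter.Eventually.filter_mono nhdsWithin_le_nhds ?_
      have : Tendsto (fun μ : ℝ => |μ| * M) (𝓝 0) (𝓝 (|0| * M)) := (continuous_abs.mul continuous_const).tendsto 0
      rw [abs_zero, zero_mul] at this
      exact this.eventually_le_const (by positivity)
    obtain ⟨μ, ⟨h1, h2⟩, h3⟩ := ((h1.and h2).and (HI.FG_pert c (HI.c0 n) d0 hd0)).exists
    obtain ⟨g, hg0, hg⟩ := HI.dense_image k n hn _ d0 h3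
    obtain ⟨z, hz, hz2⟩ := HI.nonvan g hg0 y _ hj
    obtain ⟨T, hT, hT2⟩ := hg z hz2
    refine ⟨T, hT, μ, h1, h2, ?_⟩
    have : HI.ev c T + μ • HI.ev (HI.c0 n) T = z := by
      ext k
      rw [← hT2 k]
      simp [HI.ev, add_mul, Finset.sum_add_distrib, Finset.mul_sum, mul_assoc]
    rw [this]; exact hz
  choose T hTV μ hμ1 hμ2 hT using step
  have hj1 : ∀ j : ℕ, 1 / ((j:ℝ)+1) ≤ 1 := fun j => by
    rw [div_le_one (by positivity)]; linarith [(Nat.cast_nonneg j : (0:ℝ) ≤ j)]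
  have hbound : ∀ j, ‖T j‖ ≤ 2 / m * (‖y‖ + 1) := by
    intro j
    have h1 := hmin _ (hTV j)
    have h2 : ‖μ j • HI.ev (HI.c0 n) (T j)‖ ≤ m / 2 * ‖T j‖ := by
      rw [norm_smul, Real.norm_eq_abs]
      calc |μ j| * ‖HI.ev (HI.c0 n) (T j)‖ ≤ |μ j| * (M * ‖T j‖) := mul_le_mul_of_nonneg_left (hM _) (abs_nonneg _)
        _ = (|μ j| * M) * ‖T j‖ := by ring
        _ ≤ m / 2 * ‖T j‖ := mul_le_mul_of_nonneg_right (hμ2 j) (norm_nonneg _)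
    have h3 : ‖HI.ev c (T j)‖ ≤ ‖HI.ev c (T j) + μ j • HI.ev (HI.c0 n) (T j) - y‖ + ‖y‖ + ‖μ j • HI.ev (HI.c0 n) (T j)‖ := by
      calc ‖HI.ev c (T j)‖ = ‖(HI.ev c (T j) + μ j • HI.ev (HI.c0 n) (T j) - y) + y - μ j • HI.ev (HI.c0 n) (T j)‖ := by congr 1; abel
        _ ≤ _ := (norm_sub_le _ _).trans (add_le_add_left (norm_add_le _ _) _)
    have h4 := hT j
    have h5 := hj1 j
    rw [div_mul_eq_mul_div, le_div_iff₀ hm]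
    linarith
  obtain ⟨T0, -, φ, hφ, hlim⟩ := (isCompact_closedBall (0 : Fin (n+1) × Fin (n+1) → ℝ) (2 / m * (‖y‖ + 1))).tendsto_subseq
    (x := T) (fun j => by simpa using hbound j)
  have h1j : Tendsto (fun j : ℕ => 1 / ((j:ℝ)+1)) atTop (𝓝 0) := tendsto_one_div_add_atTop_nhds_zero_nat
  have hμ0 : Tendsto (fun j => μ (φ j)) atTop (𝓝 0) :=
    squeeze_zero_norm (fun j => hμ1 (φ j)) (h1j.comp hφ.tendsto_atTop)
  refine ⟨T0, (HI.VR_closed n).mem_of_tendsto hlim (Eventually.of_forall fun j => hTV _), ?_⟩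
  have l1 : Tendsto (fun j => HI.ev c (T (φ j)) + μ (φ j) • HI.ev (HI.c0 n) (T (φ j)) - y) atTop (𝓝 0) :=
    squeeze_zero_norm (fun j => hT (φ j)) (h1j.comp hφ.tendsto_atTop)
  have l2 : Tendsto (fun j => HI.ev c (T (φ j)) + μ (φ j) • HI.ev (HI.c0 n) (T (φ j)) - y) atTop (𝓝 (HI.ev c T0 + (0:ℝ) • HI.ev (HI.c0 n) T0 - y)) :=
    ((((HI.ev_cont c).tendsto T0).comp hlim).add (hμ0.smul (((HI.ev_cont _).tendsto T0).comp hlim))).sub tendsto_const_nhds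
  have := tendsto_nhds_unique l2 l1
  rw [zero_smul, add_zero, sub_eq_zero] at this
  exact this

noncomputable def HI.vv {n : ℕ} (c : Fin (n+1) → ℂ) : Matrix (Fin (n+1)) (Fin (n+1)) ℂ :=
  Matrix.of fun i j => c i * star (c j)

noncomputable def HI.qf {n : ℕ} (Z : Matrix (Fin (n+1)) (Fin (n+1)) ℂ) (x : Fin (n+1) → ℂ) : ℝ :=
  (star x ⬝ᵥ Z *ᵥ x).re

theorem HI.qf_add {n : ℕ} (Z W : Matrix (Fin (n+1)) (Fin (n+1)) ℂ) (x) : HI.qf (Z + W) x = HI.qf Z x + HI.qf W x := by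
  simp [HI.qf, Matrix.add_mulVec]

theorem HI.qf_sub {n : ℕ} (Z W : Matrix (Fin (n+1)) (Fin (n+1)) ℂ) (x) : HI.qf (Z - W) x = HI.qf Z x - HI.qf W x := by
  simp [HI.qf, Matrix.sub_mulVec]

theorem HI.qf_smul {n : ℕ} (Z : Matrix (Fin (n+1)) (Fin (n+1)) ℂ) (a : ℝ) (x) : HI.qf (a • Z) x = a * HI.qf Z x := by
  simp [HI.qf, Matrix.smul_mulVec]

theorem HI.qf_vv {n : ℕ} (c x : Fin (n+1) → ℂ) : HI.qf (HI.vv c) x = Complex.normSq (star c ⬝ᵥ x) := by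
  have h1 : HI.vv c *ᵥ x = (star c ⬝ᵥ x) • c := by
    ext i
    simp only [HI.vv, Matrix.mulVec, dotProduct, Matrix.of_apply, Pi.smul_apply, smul_eq_mul, Finset.sum_mul, Pi.star_apply]
    exact Finset.sum_congr rfl fun _ _ => by ring
  have h2 : star x ⬝ᵥ c = star (star c ⬝ᵥ x) := by
    rw [star_dotProduct]
  rw [HI.qf, h1, dotProduct_smul, h2, smul_eq_mul]
  have := Complex.mul_conj (star c ⬝ᵥ x)
  rw [starRingEnd_apply] at this
  rw [this, Complex.ofReal_re]

theorem HI.vv_herm {n : ℕ} (c : Fin (n+1) → ℂ) : (HI.vv c).IsHermitian := by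
  ext i j
  simp [HI.vv, Matrix.conjTranspose_apply, mul_comm]

theorem HI.rsmul_herm {n : ℕ} {Z : Matrix (Fin (n+1)) (Fin (n+1)) ℂ} (h : Z.IsHermitian) (a : ℝ) : (a • Z).IsHermitian := by
  ext i j
  have := congrFun (congrFun h i) j
  rw [Matrix.conjTranspose_apply] at this ⊢
  simp [Matrix.smul_apply] at this ⊢
  left; exact this

theorem HI.rank_one {n : ℕ} (Q : Matrix (Fin (n+1)) (Fin (n+1)) ℂ) (hQ : Q.IsHermitian)
    (h : ∀ k l k' l', Q k l * Q k' l' = Q k l' * Q k' l) :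
    ∃ (σ : ℝ) (m : Fin (n+1)), Q = σ • HI.vv (fun k => Q k m) := by
  have hs : ∀ k l, star (Q l k) = Q k l := fun k l => congrFun (congrFun hQ k) l
  by_cases h0 : ∃ m, Q m m ≠ 0
  · obtain ⟨m, hm⟩ := h0
    have hr : ((Q m m).re : ℂ) = Q m m := hQ.coe_re_apply_self m
    refine ⟨(Q m m).re⁻¹, m, ?_⟩
    ext k l
    simp only [Matrix.smul_apply, HI.vv, Matrix.of_apply, Complex.real_smul, Complex.ofReal_inv, hr, hs]
    rw [inv_mul_eq_div, eq_div_iff hm]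
    linear_combination h k l m m
  · push Not at h0
    refine ⟨0, 0, ?_⟩
    ext k l
    rw [zero_smul]
    have := h k l l k
    rw [h0, zero_mul, ← hs l k] at this
    simpa using this

theorem HI.schur {n : ℕ} (Z : Matrix (Fin (n+1)) (Fin (n+1)) ℂ) (hZ : Z.IsHermitian) (h : HI.R2 Z) (i : Fin (n+1)) (hi : Z i i ≠ 0) :
    ∃ (σ : ℝ) (c : Fin (n+1) → ℂ), c i = 0 ∧ Z = (Z i i).re⁻¹ • HI.vv (fun k => Z k i) + σ • HI.vv c := by
  have hs : ∀ k l, star (Z l k) = Z k l := fun k l => congrFun (congrFun hZ k) l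
  have hr : ((Z i i).re : ℂ) = Z i i := hZ.coe_re_apply_self i
  have hQ : (Z - (Z i i).re⁻¹ • HI.vv (fun k => Z k i)).IsHermitian := hZ.sub (HI.rsmul_herm (HI.vv_herm _) _)
  have hQe : ∀ k l, (Z - (Z i i).re⁻¹ • HI.vv (fun k => Z k i)) k l = Z k l - (Z i i)⁻¹ * (Z k i * Z i l) := by
    intro k l
    simp only [Matrix.sub_apply, Matrix.smul_apply, HI.vv, Matrix.of_apply, Complex.real_smul, Complex.ofReal_inv, hr, hs]
  obtain ⟨σ, m, hm⟩ := HI.rank_one _ hQ (by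
    intro k l k' l'
    simp only [hQe]
    have := h ![i, k, k'] ![i, l, l']
    rw [Matrix.det_fin_three] at this
    simp at this
    field_simp
    linear_combination Z i i * this)
  refine ⟨σ, _, ?_, sub_eq_iff_eq_add'.mp hm⟩
  rw [hQe]
  field_simp
  ring

theorem HI.dec {n : ℕ} (Z : Matrix (Fin (n+1)) (Fin (n+1)) ℂ) (hZ : Z.IsHermitian) (h : HI.R2 Z) :
    ∃ (σ τ : ℝ) (a b : Fin (n+1) → ℂ), Z = σ • HI.vv a + τ • HI.vv b := by
  have hs : ∀ k l, star (Z l k) = Z k l := fun k l => congrFun (congrFun hZ k) l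
  by_cases h0 : ∃ i, Z i i ≠ 0
  · obtain ⟨i, hi⟩ := h0
    obtain ⟨σ, c, -, hc⟩ := HI.schur Z hZ h i hi
    exact ⟨_, σ, _, c, hc⟩
  push Not at h0
  by_cases h1 : ∃ i j, Z i j ≠ 0
  · obtain ⟨i, j, hij⟩ := h1
    have hji : Z j i ≠ 0 := by rw [← hs]; simpa using hij
    have key : ∀ k l, Z k l = Z k i * Z j l / Z j i + Z k j * Z i l / Z i j := by
      intro k l
      have := h ![k, i, j] ![l, i, j]
      rw [Matrix.det_fin_three] at this
      simp [h0] at this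
      field_simp
      linear_combination -this
    refine ⟨1/2, -1/2, fun k => Z k i / Z j i + Z k j, fun k => Z k i / Z j i - Z k j, ?_⟩
    ext k l
    have e1 : star (Z l i) = Z i l := hs i l
    have e2 : star (Z l j) = Z j l := hs j l
    have e3 : star (Z j i) = Z i j := hs i j
    simp only [Matrix.smul_apply, HI.vv, Matrix.of_apply, Complex.real_smul, Matrix.add_apply, star_add, star_sub, star_div₀, e1, e2, e3]
    rw [key k l]
    push_cast
    field_simp
    ring
  · push Not at h1
    refine ⟨0, 0, 0, 0, ?_⟩
    ext k l; simp [h1]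

def HI.Semi {n : ℕ} (Z : Matrix (Fin (n+1)) (Fin (n+1)) ℂ) : Prop :=
  ∃ v : Fin (n+1) → ℂ, (∀ x, v ⬝ᵥ x = 0 → 0 ≤ HI.qf Z x) ∨ (∀ x, v ⬝ᵥ x = 0 → HI.qf Z x ≤ 0)

theorem HI.semi_rank2 {n : ℕ} (Z : Matrix (Fin (n+1)) (Fin (n+1)) ℂ) (hZ : Z.IsHermitian) (h : HI.R2 Z) : HI.Semi Z := by
  obtain ⟨σ, τ, a, b, rfl⟩ := HI.dec Z hZ h
  refine ⟨star a, ?_⟩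
  rcases le_total 0 τ with ht | ht
  · left
    intro x hx
    rw [HI.qf_add, HI.qf_smul, HI.qf_smul, HI.qf_vv, HI.qf_vv, hx]
    have := Complex.normSq_nonneg (star b ⬝ᵥ x)
    simp only [map_zero, mul_zero, zero_add]; positivity
  · right
    intro x hx
    rw [HI.qf_add, HI.qf_smul, HI.qf_smul, HI.qf_vv, HI.qf_vv, hx]
    have := Complex.normSq_nonneg (star b ⬝ᵥ x)
    simp only [map_zero, mul_zero, zero_add]; exact mul_nonpos_of_nonpos_of_nonneg ht this

theorem HI.semi_rank2_sub {n : ℕ} (Z : Matrix (Fin (n+1)) (Fin (n+1)) ℂ) (hZ : Z.IsHermitian) (h : HI.R2 Z) (e : Fin (n+1) → ℂ) :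
    HI.Semi (Z - HI.vv e) := by
  obtain ⟨σ, τ, a, b, rfl⟩ := HI.dec Z hZ h
  have e1 : ∀ x, HI.qf (σ • HI.vv a + τ • HI.vv b - HI.vv e) x = σ * Complex.normSq (star a ⬝ᵥ x) + τ * Complex.normSq (star b ⬝ᵥ x) - Complex.normSq (star e ⬝ᵥ x) := by
    intro x; rw [HI.qf_sub, HI.qf_add, HI.qf_smul, HI.qf_smul, HI.qf_vv, HI.qf_vv, HI.qf_vv]
  rcases le_total 0 τ with ht | ht
  · rcases le_total 0 σ with hs | hs
    · refine ⟨star e, Or.inl fun x hx => ?_⟩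
      rw [e1, hx]
      have := Complex.normSq_nonneg (star b ⬝ᵥ x)
      have := Complex.normSq_nonneg (star a ⬝ᵥ x)
      simp only [map_zero, sub_zero]; positivity
    · refine ⟨star b, Or.inr fun x hx => ?_⟩
      rw [e1, hx]
      have h2 := Complex.normSq_nonneg (star e ⬝ᵥ x)
      have := mul_nonpos_of_nonpos_of_nonneg hs (Complex.normSq_nonneg (star a ⬝ᵥ x))
      simp only [map_zero, mul_zero]; linarith
  · refine ⟨star a, Or.inr fun x hx => ?_⟩
    rw [e1, hx]
    have h2 := Complex.normSq_nonneg (star e ⬝ᵥ x)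
    have := mul_nonpos_of_nonpos_of_nonneg ht (Complex.normSq_nonneg (star b ⬝ᵥ x))
    simp only [map_zero, mul_zero]; linarith

theorem HI.th_herm {n : ℕ} (T : Fin (n+1) × Fin (n+1) → ℝ) : (HI.th fun p => (T p : ℂ)).IsHermitian := by
  ext i j
  simp [HI.th, Matrix.conjTranspose_apply]
  ring

theorem HI.herm_th {n : ℕ} (Z : Matrix (Fin (n+1)) (Fin (n+1)) ℂ) (hZ : Z.IsHermitian) :
    ∃ T : Fin (n+1) × Fin (n+1) → ℝ, HI.th (fun p => (T p : ℂ)) = Z := by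
  refine ⟨fun p => (Z p.1 p.2).re + (Z p.1 p.2).im, ?_⟩
  have hs : ∀ k l, star (Z l k) = Z k l := fun k l => congrFun (congrFun hZ k) l
  ext i j
  have h1 : (Z j i).re = (Z i j).re := by rw [← hs j i]; simp
  have h2 : (Z j i).im = - (Z i j).im := by rw [← hs j i]; simp
  simp only [HI.th, Matrix.of_apply, h1, h2]
  conv_rhs => rw [← Complex.re_add_im (Z i j)]
  push_cast
  ring

theorem HI.surjM (k n : ℕ) (hn : n = 2 ^ k) (Λ : Matrix (Fin (n+1)) (Fin (n+1)) ℂ →ₗ[ℝ] (Fin (4 * n) → ℝ))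
    (hΛ : ∀ Z, Z.IsHermitian → HI.R2 Z → Λ Z = 0 → Z = 0) (y) : ∃ Z, Z.IsHermitian ∧ HI.R2 Z ∧ Λ Z = y := by
  let thL : (Fin (n+1) × Fin (n+1) → ℝ) →ₗ[ℝ] Matrix (Fin (n+1)) (Fin (n+1)) ℂ :=
    { toFun := fun T => HI.th (fun p => (T p : ℂ))
      map_add' := fun a b => by ext i j; simp [HI.th]; ring
      map_smul' := fun a b => by ext i j; simp [HI.th]; ring }
  set c : Fin (4 * n) → Fin (n+1) × Fin (n+1) → ℝ := fun k p => Λ (thL (Pi.single p 1)) k with hc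
  have hev : ∀ T, HI.ev c T = Λ (HI.th (fun p => (T p : ℂ))) := by
    intro T
    have : Λ (HI.th (fun p => (T p : ℂ))) = (Λ ∘ₗ thL) T := rfl
    rw [this, LinearMap.pi_apply_eq_sum_univ (Λ ∘ₗ thL) T]
    ext k
    simp only [HI.ev, hc, Finset.sum_apply, Pi.smul_apply, smul_eq_mul, LinearMap.comp_apply]
    refine Finset.sum_congr rfl fun p _ => ?_
    rw [mul_comm]
    rw [show (Pi.single p 1 : Fin (n+1) × Fin (n+1) → ℝ) = fun j => if p = j then 1 else 0 from by
      ext q; simp [Pi.single_apply, eq_comm]]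
  obtain ⟨T, hT, hT2⟩ := HI.surj k n hn c (by
    intro T hT h0
    rw [hev] at h0
    have := HI.th_zero _ (hΛ _ (HI.th_herm T) hT h0)
    ext p
    have := congrFun this p
    simpa using this) y
  exact ⟨_, HI.th_herm T, hT, by rw [← hev, hT2]⟩

section
attribute [local instance] Matrix.normedAddCommGroup Matrix.normedSpace

theorem HI.qf_two {n : ℕ} (P : Matrix (Fin (n+1)) (Fin (n+1)) ℂ) (k l : Fin (n+1)) (u : ℂ) :
    HI.qf P (Pi.single k 1 + Pi.single l u) = (P k k + P k l * u + star u * P l k + star u * P l l * u).re := by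
  have h : ∀ (m : Fin (n+1)) (z : ℂ), star (Pi.single m z : Fin (n+1) → ℂ) = Pi.single m (star z) := by
    intro m z; ext i; by_cases h : i = m
    · subst h; simp
    · simp [h]
  rw [HI.qf, star_add, h, h, Matrix.mulVec_add, add_dotProduct, dotProduct_add, dotProduct_add]
  simp only [single_dotProduct, Matrix.mulVec_single]
  congr 1
  simp
  ring

theorem HI.psd_bound {n : ℕ} (P : Matrix (Fin (n+1)) (Fin (n+1)) ℂ) (hP : P.IsHermitian) (h : ∀ x, 0 ≤ HI.qf P x)
    (ht : ∑ k, (P k k).re = 1) : ‖P‖ ≤ 2 := by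
  rw [Matrix.norm_le_iff (by norm_num)]
  have hd : ∀ k, 0 ≤ (P k k).re := by
    intro k
    have := h (Pi.single k 1 + Pi.single k 0)
    rw [HI.qf_two] at this
    simpa using this
  have hd1 : ∀ k, (P k k).re ≤ 1 := by
    intro k
    rw [← ht]
    exact Finset.single_le_sum (f := fun k => (P k k).re) (fun i _ => hd i) (Finset.mem_univ k)
  intro k l
  have hs : star (P k l) = P l k := congrFun (congrFun hP l) k
  have h1 := h (Pi.single k 1 + Pi.single l 1)
  have h2 := h (Pi.single k 1 + Pi.single l (-1))
  have h3 := h (Pi.single k 1 + Pi.single l Complex.I)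
  have h4 := h (Pi.single k 1 + Pi.single l (-Complex.I))
  rw [HI.qf_two] at h1 h2 h3 h4
  rw [← hs] at h1 h2 h3 h4
  simp at h1 h2 h3 h4
  have hk := hd1 k
  have hl := hd1 l
  refine (Complex.norm_le_abs_re_add_abs_im _).trans ?_
  have a1 : |(P k l).re| ≤ 1 := by rw [abs_le]; constructor <;> linarith
  have a2 : |(P k l).im| ≤ 1 := by rw [abs_le]; constructor <;> linarith
  linarith

noncomputable def HI.SW (n : ℕ) : (Fin (n+1) → ℂ) →ₗ[ℝ] Matrix (Fin (n+1)) (Fin (n+1)) ℂ where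
  toFun w := Matrix.of fun i j => (if i = 0 then star (w j) else 0) + (if j = 0 then w i else 0)
  map_add' a b := by
    ext i j
    simp only [Matrix.of_apply, Pi.add_apply, Matrix.add_apply, star_add]
    split_ifs <;> ring
  map_smul' a b := by
    ext i j
    simp only [Matrix.of_apply, Pi.smul_apply, Matrix.smul_apply, RingHom.id_apply, Complex.real_smul, star_mul']
    split_ifs <;> simp <;> ring

theorem HI.SW_apply (n : ℕ) (w) (i j) : HI.SW n w i j = (if i = 0 then star (w j) else 0) + (if j = 0 then w i else 0) := rfl

theorem HI.SW_herm (n : ℕ) (w) : (HI.SW n w).IsHermitian := by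
  ext i j
  rw [Matrix.conjTranspose_apply, HI.SW_apply, HI.SW_apply]
  split_ifs <;> simp [add_comm]

theorem HI.qf_SW (n : ℕ) (w x : Fin (n+1) → ℂ) (hx : x 0 = 0) : HI.qf (HI.SW n w) x = 0 := by
  have : HI.SW n w *ᵥ x = fun i => if i = 0 then star w ⬝ᵥ x else 0 := by
    ext i
    simp only [Matrix.mulVec, dotProduct, HI.SW_apply, Pi.star_apply]
    split_ifs with h
    · refine Finset.sum_congr rfl fun j _ => ?_
      split_ifs with h2
      · subst h2; simp [hx]
      · simp
    · refine Finset.sum_eq_zero fun j _ => ?_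
      split_ifs with h2
      · subst h2; simp [hx]
      · simp
  rw [HI.qf, this]
  simp [dotProduct, hx]

theorem HI.vv_smul {n : ℕ} (a : ℝ) (u : Fin (n+1) → ℂ) : HI.vv (a • u) = (a * a) • HI.vv u := by
  ext i j; simp [HI.vv]; ring

theorem HI.vv_cont (n : ℕ) : Continuous (HI.vv (n := n)) := by
  unfold HI.vv
  refine continuous_matrix fun i j => ?_
  simp only [Matrix.of_apply]
  fun_prop

theorem HI.exists_psi {n N : ℕ} (Λ : Matrix (Fin (n+1)) (Fin (n+1)) ℂ →ₗ[ℝ] (Fin N → ℝ))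
    (hS : ∀ Z, Z.IsHermitian → Λ Z = 0 → HI.Semi Z → Z = 0) :
    ∃ ψ : (Fin N → ℝ) →L[ℝ] ℝ, (∀ w, ψ (Λ (HI.SW n w)) = 0) ∧ ∀ u : Fin (n+1) → ℂ, u 0 = 0 → u ≠ 0 → 0 < ψ (Λ (HI.vv u)) := by
  set D : Set (Matrix (Fin (n+1)) (Fin (n+1)) ℂ) := {P | P.IsHermitian ∧ (∀ x, 0 ≤ HI.qf P x) ∧ (∀ k, P k 0 = 0) ∧ ∑ k, (P k k).re = 1} with hD
  have hΛc : Continuous Λ := LinearMap.continuous_of_finiteDimensional Λ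
  have hDconv : Convex ℝ D := by
    rintro P ⟨p1, p2, p3, p4⟩ Q ⟨q1, q2, q3, q4⟩ a b ha hb hab
    refine ⟨(HI.rsmul_herm p1 a).add (HI.rsmul_herm q1 b), fun x => ?_, fun k => by simp [p3, q3], ?_⟩
    · rw [HI.qf_add, HI.qf_smul, HI.qf_smul]
      have := p2 x; have := q2 x; positivity
    · simp only [Matrix.add_apply, Matrix.smul_apply, Complex.add_re, Complex.smul_re, Finset.sum_add_distrib, ← Finset.smul_sum, p4, q4]
      simpa using hab
  have hDclosed : IsClosed D := by
    have : D = {P | Pᴴ = P} ∩ ((⋂ x, {P | 0 ≤ HI.qf P x}) ∩ ((⋂ k, {P | P k 0 = 0}) ∩ {P | ∑ k, (P k k).re = 1})) := by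
      ext P; simp only [hD, Set.mem_inter_iff, Set.mem_iInter]; rfl
    rw [this]
    refine (isClosed_eq continuous_id.matrix_conjTranspose continuous_id).inter ((isClosed_iInter fun x => isClosed_le continuous_const ?_).inter
      ((isClosed_iInter fun k => isClosed_eq (continuous_id.matrix_elem k 0) continuous_const).inter (isClosed_eq ?_ continuous_const)))
    · exact Complex.continuous_re.comp (Continuous.dotProduct continuous_const (continuous_id.matrix_mulVec continuous_const))
    · exact continuous_finsetSum _ fun k _ => Complex.continuous_re.comp (continuous_id.matrix_elem k k)
  have hDcomp : IsCompact D := by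
    have : ProperSpace (Matrix (Fin (n+1)) (Fin (n+1)) ℂ) := FiniteDimensional.proper_real _
    refine (isCompact_closedBall (0 : Matrix (Fin (n+1)) (Fin (n+1)) ℂ) 2).of_isClosed_subset hDclosed ?_
    rintro P ⟨p1, p2, p3, p4⟩
    rw [mem_closedBall_zero_iff]
    exact HI.psd_bound P p1 p2 p4
  set M : Submodule ℝ (Fin N → ℝ) := LinearMap.range (Λ ∘ₗ HI.SW n) with hM
  have hdisj : Disjoint (Λ '' D) (M : Set (Fin N → ℝ)) := by
    rw [Set.disjoint_left]
    rintro _ ⟨P, ⟨p1, p2, p3, p4⟩, rfl⟩ ⟨w, hw⟩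
    have h0 := hS (P - HI.SW n w) (p1.sub (HI.SW_herm n w)) (by rw [map_sub, sub_eq_zero]; exact hw.symm)
      ⟨Pi.single 0 1, Or.inl fun x hx => by
        rw [HI.qf_sub, HI.qf_SW n w x (by simpa using hx), sub_zero]; exact p2 x⟩
    rw [sub_eq_zero] at h0
    have : ∑ k, (P k k).re = 0 := by
      refine Finset.sum_eq_zero fun k _ => ?_
      by_cases hk : k = 0
      · subst hk; simp [p3]
      · rw [h0, HI.SW_apply]; simp [hk]
    linarith
  obtain ⟨f, a, b, h1, h2, h3⟩ := geometric_hahn_banach_compact_closed (hDconv.linear_image Λ) (hDcomp.image hΛc) M.convex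
    M.closed_of_finiteDimensional hdisj
  have hb : b < 0 := by simpa using h3 0 M.zero_mem
  have hfM : ∀ y ∈ M, f y = 0 := by
    intro y hy
    by_contra hne
    have := h3 ((b / f y) • y) (M.smul_mem _ hy)
    rw [map_smul, smul_eq_mul, div_mul_cancel₀ _ hne] at this
    exact lt_irrefl _ this
  refine ⟨-f, fun w => ?_, fun u hu0 hu => ?_⟩
  · have h9 := hfM (Λ (HI.SW n w)) ⟨w, rfl⟩
    rw [_root_.neg_apply, h9, neg_zero]
  · have ht : 0 < ∑ k, Complex.normSq (u k) := by
      obtain ⟨k, hk⟩ := Function.ne_iff.mp hu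
      exact Finset.sum_pos' (fun i _ => Complex.normSq_nonneg _) ⟨k, Finset.mem_univ _, Complex.normSq_pos.mpr hk⟩
    set t := ∑ k, Complex.normSq (u k) with htd
    have hmem : t⁻¹ • HI.vv u ∈ D := by
      refine ⟨HI.rsmul_herm (HI.vv_herm _) _, fun x => ?_, fun k => by simp [HI.vv, hu0], ?_⟩
      · rw [HI.qf_smul, HI.qf_vv]
        have := Complex.normSq_nonneg (star u ⬝ᵥ x)
        positivity
      · simp only [Matrix.smul_apply, Complex.smul_re, ← Finset.smul_sum]
        have : ∑ k, (HI.vv u k k).re = t := by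
          refine Finset.sum_congr rfl fun k _ => ?_
          simp [HI.vv, Complex.normSq_apply]
        rw [this, smul_eq_mul, inv_mul_cancel₀ ht.ne']
    have := h1 _ ⟨_, hmem, rfl⟩
    rw [map_smul, map_smul, smul_eq_mul] at this
    have h5 : t⁻¹ * f (Λ (HI.vv u)) < 0 := by linarith
    rw [_root_.neg_apply]
    have h6 : 0 < t⁻¹ := inv_pos.mpr ht
    nlinarith
end

section
attribute [local instance] Matrix.normedAddCommGroup Matrix.normedSpace

theorem HI.proper_mat (n : ℕ) : ProperSpace (Matrix (Fin (n+1)) (Fin (n+1)) ℂ) := FiniteDimensional.proper_real _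

theorem HI.closed_herm (n : ℕ) : IsClosed {Z : Matrix (Fin (n+1)) (Fin (n+1)) ℂ | Z.IsHermitian ∧ HI.R2 Z} := by
  have : {Z : Matrix (Fin (n+1)) (Fin (n+1)) ℂ | Z.IsHermitian ∧ HI.R2 Z} =
      {Z | Zᴴ = Z} ∩ ⋂ r : Fin 3 → Fin (n+1), ⋂ c : Fin 3 → Fin (n+1), {Z | (Z.submatrix r c).det = 0} := by
    ext P; simp only [Set.mem_inter_iff, Set.mem_iInter]; rfl
  rw [this]
  exact (isClosed_eq continuous_id.matrix_conjTranspose continuous_id).inter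
    (isClosed_iInter fun r => isClosed_iInter fun c => isClosed_eq (continuous_id.matrix_submatrix r c).matrix_det continuous_const)

theorem HI.R2_smul {n : ℕ} {Z : Matrix (Fin (n+1)) (Fin (n+1)) ℂ} (h : HI.R2 Z) (a : ℝ) : HI.R2 (a • Z) := by
  intro r c
  have : (a • Z).submatrix r c = (a : ℂ) • Z.submatrix r c := by
    ext i j; simp
  rw [this, Matrix.det_smul, h r c, mul_zero]

theorem HI.bdV {n N : ℕ} (Λ : Matrix (Fin (n+1)) (Fin (n+1)) ℂ →ₗ[ℝ] (Fin N → ℝ))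
    (hΛ : ∀ Z, Z.IsHermitian → HI.R2 Z → Λ Z = 0 → Z = 0) :
    ∃ m : ℝ, 0 < m ∧ ∀ Z, Z.IsHermitian → HI.R2 Z → m * ‖Z‖ ≤ ‖Λ Z‖ := by
  have := HI.proper_mat n
  have hΛc : Continuous Λ := LinearMap.continuous_of_finiteDimensional Λ
  have hK : IsCompact (Metric.sphere (0 : Matrix (Fin (n+1)) (Fin (n+1)) ℂ) 1 ∩ {Z | Z.IsHermitian ∧ HI.R2 Z}) :=
    (isCompact_sphere _ _).inter_right (HI.closed_herm n)
  obtain ⟨m, hm, h⟩ := hK.exists_forall_le' (f := fun Z => ‖Λ Z‖) (a := 0) hΛc.norm.continuousOn (by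
    rintro Z ⟨h1, h2, h3⟩
    rw [norm_pos_iff]
    intro h0
    rw [hΛ Z h2 h3 h0] at h1
    simp at h1)
  refine ⟨m, hm, fun Z h1 h2 => ?_⟩
  by_cases hZ : Z = 0
  · simp [hZ]
  have hp : 0 < ‖Z‖ := norm_pos_iff.mpr hZ
  have := h (‖Z‖⁻¹ • Z) ⟨by simp [norm_smul, hp.ne'], HI.rsmul_herm h1 _, HI.R2_smul h2 _⟩
  rw [map_smul, norm_smul, norm_inv, norm_norm] at this
  rwa [mul_comm, ← le_inv_mul_iff₀ hp]

theorem HI.bdW {n N : ℕ} (Λ : Matrix (Fin (n+1)) (Fin (n+1)) ℂ →ₗ[ℝ] (Fin N → ℝ))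
    (hS : ∀ Z, Z.IsHermitian → Λ Z = 0 → HI.Semi Z → Z = 0) :
    ∃ m : ℝ, 0 < m ∧ ∀ w : Fin (n+1) → ℂ, (w 0).im = 0 → m * ‖w‖ ≤ ‖Λ (HI.SW n w)‖ := by
  have hc : Continuous (Λ ∘ₗ HI.SW n) := LinearMap.continuous_of_finiteDimensional _
  have hK : IsCompact (Metric.sphere (0 : Fin (n+1) → ℂ) 1 ∩ {w | (w 0).im = 0}) :=
    (isCompact_sphere _ _).inter_right (isClosed_eq (by fun_prop) continuous_const)
  obtain ⟨m, hm, h⟩ := hK.exists_forall_le' (f := fun w => ‖(Λ ∘ₗ HI.SW n) w‖) (a := 0) hc.norm.continuousOn (by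
    rintro w ⟨h1, h2⟩
    rw [norm_pos_iff]
    intro h0
    have h3 := hS _ (HI.SW_herm n w) h0 ⟨Pi.single 0 1, Or.inl fun x hx => by
        rw [HI.qf_SW n w x (by simpa using hx)]⟩
    have : w = 0 := by
      ext i
      have h4 := congrFun (congrFun h3 i) 0
      rw [HI.SW_apply] at h4
      by_cases hi : i = 0
      · subst hi
        have h5 := congrArg Complex.re h4
        simp at h5
        apply Complex.ext
        · simp; linarith
        · exact h2
      · simpa [hi] using h4
    rw [this] at h1
    simp at h1)
  refine ⟨m, hm, fun w h1 => ?_⟩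
  by_cases hZ : w = 0
  · simp [hZ]
  have hp : 0 < ‖w‖ := norm_pos_iff.mpr hZ
  have h1' : (w 0).im = 0 := h1
  have := h (‖w‖⁻¹ • w) ⟨by simp [norm_smul, hp.ne'], by simp [h1']⟩
  rw [map_smul, norm_smul, norm_inv, norm_norm] at this
  rw [mul_comm, ← le_inv_mul_iff₀ hp]
  exact this

theorem HI.bdU {n N : ℕ} (Λ : Matrix (Fin (n+1)) (Fin (n+1)) ℂ →ₗ[ℝ] (Fin N → ℝ)) (ψ : (Fin N → ℝ) →L[ℝ] ℝ)
    (hψ : ∀ u : Fin (n+1) → ℂ, u 0 = 0 → u ≠ 0 → 0 < ψ (Λ (HI.vv u))) :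
    ∃ m : ℝ, 0 < m ∧ ∀ u : Fin (n+1) → ℂ, u 0 = 0 → m * ‖u‖ ^ 2 ≤ ψ (Λ (HI.vv u)) := by
  have hΛc : Continuous Λ := LinearMap.continuous_of_finiteDimensional Λ
  have hK : IsCompact (Metric.sphere (0 : Fin (n+1) → ℂ) 1 ∩ {w | w 0 = 0}) :=
    (isCompact_sphere _ _).inter_right (isClosed_eq (by fun_prop) continuous_const)
  obtain ⟨m, hm, h⟩ := hK.exists_forall_le' (f := fun u => ψ (Λ (HI.vv u))) (a := 0)
    (ψ.continuous.comp (hΛc.comp (HI.vv_cont n))).continuousOn (by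
    rintro w ⟨h1, h2⟩
    refine hψ w h2 ?_
    rintro rfl
    simp at h1)
  refine ⟨m, hm, fun w h1 => ?_⟩
  by_cases hZ : w = 0
  · subst hZ
    have : HI.vv (0 : Fin (n+1) → ℂ) = 0 := by ext i j; simp [HI.vv]
    simp [this]
  have hp : 0 < ‖w‖ := norm_pos_iff.mpr hZ
  have := h (‖w‖⁻¹ • w) ⟨by simp [norm_smul, hp.ne'], by simp [h1]⟩
  rw [HI.vv_smul, map_smul, map_smul, smul_eq_mul] at this
  calc m * ‖w‖ ^ 2 ≤ (‖w‖⁻¹ * ‖w‖⁻¹ * ψ (Λ (HI.vv w))) * ‖w‖ ^ 2 := by gcongr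
    _ = _ := by field_simp

theorem HI.bdC {n N : ℕ} (Λ : Matrix (Fin (n+1)) (Fin (n+1)) ℂ →ₗ[ℝ] (Fin N → ℝ)) :
    ∃ C : ℝ, 0 ≤ C ∧ ∀ u : Fin (n+1) → ℂ, ‖Λ (HI.vv u)‖ ≤ C * ‖u‖ ^ 2 := by
  have hΛc : Continuous Λ := LinearMap.continuous_of_finiteDimensional Λ
  obtain ⟨C, hC⟩ := (isCompact_sphere (0 : Fin (n+1) → ℂ) 1).exists_bound_of_continuousOn (f := fun u => Λ (HI.vv u))
    (hΛc.comp (HI.vv_cont n)).continuousOn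
  refine ⟨|C|, abs_nonneg _, fun w => ?_⟩
  by_cases hZ : w = 0
  · subst hZ
    have : HI.vv (0 : Fin (n+1) → ℂ) = 0 := by ext i j; simp [HI.vv]
    simp [this]
  have hp : 0 < ‖w‖ := norm_pos_iff.mpr hZ
  have := (hC (‖w‖⁻¹ • w) (by simp [norm_smul, hp.ne'])).trans (le_abs_self C)
  rw [HI.vv_smul, map_smul, norm_smul, Real.norm_of_nonneg (by positivity)] at this
  calc _ = (‖w‖⁻¹ * ‖w‖⁻¹ * ‖Λ (HI.vv w)‖) * ‖w‖ ^ 2 := by field_simp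
    _ ≤ _ := by gcongr

theorem HI.properE {n N : ℕ} (Λ : Matrix (Fin (n+1)) (Fin (n+1)) ℂ →ₗ[ℝ] (Fin N → ℝ))
    (hS : ∀ Z, Z.IsHermitian → Λ Z = 0 → HI.Semi Z → Z = 0) (e : Fin (n+1) → ℂ) (η : ℝ) (hη : 0 < η) :
    ∃ δ : ℝ, 0 < δ ∧ ∀ Z, Z.IsHermitian → HI.R2 Z → ‖Λ Z - Λ (HI.vv e)‖ < δ → ‖Z - HI.vv e‖ < η := by
  have := HI.proper_mat n
  have hΛc : Continuous Λ := LinearMap.continuous_of_finiteDimensional Λ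
  obtain ⟨m, hm, hb⟩ := HI.bdV Λ (fun Z h1 h2 h3 => hS Z h1 h3 (HI.semi_rank2 Z h1 h2))
  have hc1 : Continuous fun Z => ‖Λ Z - Λ (HI.vv e)‖ := (hΛc.sub continuous_const).norm
  have hK : IsCompact (({Z | Z.IsHermitian ∧ HI.R2 Z} ∩ {Z | ‖Λ Z - Λ (HI.vv e)‖ ≤ 1}) ∩ {Z | η ≤ ‖Z - HI.vv e‖}) := by
    refine (isCompact_closedBall (0 : Matrix (Fin (n+1)) (Fin (n+1)) ℂ) ((‖Λ (HI.vv e)‖ + 1) / m)).of_isClosed_subset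
      (((HI.closed_herm n).inter (isClosed_le hc1 continuous_const)).inter
        (isClosed_le continuous_const (continuous_id.sub continuous_const).norm)) ?_
    rintro Z ⟨⟨⟨h1, h2⟩, h3⟩, h4⟩
    rw [mem_closedBall_zero_iff, le_div_iff₀ hm, mul_comm]
    refine (hb Z h1 h2).trans ?_
    have h3' : ‖Λ Z - Λ (HI.vv e)‖ ≤ 1 := h3
    have := norm_sub_norm_le (Λ Z) (Λ (HI.vv e))
    linarith
  obtain ⟨a, ha, h⟩ := hK.exists_forall_le' (f := fun Z => ‖Λ Z - Λ (HI.vv e)‖) (a := 0) hc1.continuousOn (by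
    rintro Z ⟨⟨⟨h1, h2⟩, h3⟩, h4⟩
    rw [norm_pos_iff]
    intro h0
    have h5 := hS (Z - HI.vv e) (h1.sub (HI.vv_herm e)) (by rw [map_sub]; exact h0) (HI.semi_rank2_sub Z h1 h2 e)
    have h4' : η ≤ ‖Z - HI.vv e‖ := h4
    rw [h5, norm_zero] at h4'
    linarith)
  refine ⟨min a 1, lt_min ha one_pos, fun Z h1 h2 h3 => ?_⟩
  by_contra hc
  push Not at hc
  have := h Z ⟨⟨⟨h1, h2⟩, (h3.trans_le (min_le_right _ _)).le⟩, hc⟩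
  exact absurd (h3.trans_le (min_le_left _ _)) (not_lt.mpr this)
end

section
attribute [local instance] Matrix.normedAddCommGroup Matrix.normedSpace

theorem HI.exists_h {n : ℕ} (hn : 3 ≤ n) (Λ : Matrix (Fin (n+1)) (Fin (n+1)) ℂ →ₗ[ℝ] (Fin (4 * n) → ℝ)) (ψ : (Fin (4 * n) → ℝ) →L[ℝ] ℝ) :
    ∃ (h : Fin (4 * n) → ℝ) (ψ2 : (Fin (4 * n) → ℝ) →L[ℝ] ℝ), ψ h = 0 ∧ ψ2 h = 1 ∧ ∀ w, ψ2 (Λ (HI.SW n w)) = 0 := by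
  set M : Submodule ℝ (Fin (4 * n) → ℝ) := LinearMap.range (Λ ∘ₗ HI.SW n) with hM
  have h1 : Module.finrank ℝ M ≤ 2 * (n + 1) := by
    refine (LinearMap.finrank_range_le _).trans ?_
    rw [Module.finrank_pi_fintype]
    simp [Complex.finrank_real_complex]; omega
  have h2 : 4 * n ≤ Module.finrank ℝ (LinearMap.ker (ψ : (Fin (4 * n) → ℝ) →ₗ[ℝ] ℝ)) + 1 := by
    have := LinearMap.finrank_range_add_finrank_ker (ψ : (Fin (4 * n) → ℝ) →ₗ[ℝ] ℝ)
    have h3 := Submodule.finrank_le (LinearMap.range (ψ : (Fin (4 * n) → ℝ) →ₗ[ℝ] ℝ))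
    rw [Module.finrank_self] at h3
    rw [Module.finrank_pi, Fintype.card_fin] at this
    omega
  have hsub : ¬ LinearMap.ker (ψ : (Fin (4 * n) → ℝ) →ₗ[ℝ] ℝ) ≤ M := by
    intro hle
    have h3 := Submodule.finrank_mono hle
    omega
  obtain ⟨h, hh1, hh2⟩ := Set.not_subset.mp hsub
  obtain ⟨f, hf1, hf2⟩ := Submodule.exists_le_ker_of_notMem hh2
  refine ⟨h, (f h)⁻¹ • LinearMap.toContinuousLinearMap f, hh1, ?_, fun w => ?_⟩
  · simp [hf1]
  · have : f (Λ (HI.SW n w)) = 0 := hf2 ⟨w, rfl⟩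
    simp [this]

theorem HI.core (k n : ℕ) (hn : n = 2 ^ k) (hn2 : 3 ≤ n) (Λ : Matrix (Fin (n+1)) (Fin (n+1)) ℂ →ₗ[ℝ] (Fin (4 * n) → ℝ))
    (hS : ∀ Z, Z.IsHermitian → Λ Z = 0 → HI.Semi Z → Z = 0) : False := by
  obtain ⟨ψ, hψ0, hψ1⟩ := HI.exists_psi Λ hS
  obtain ⟨h, ψ2, hh, hh2, hψ2⟩ := HI.exists_h hn2 Λ ψ
  obtain ⟨m0, hm0, hW⟩ := HI.bdW Λ hS
  obtain ⟨m1, hm1, hU⟩ := HI.bdU Λ ψ hψ1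
  obtain ⟨C, hC, hCb⟩ := HI.bdC Λ
  have hΛ : ∀ Z, Z.IsHermitian → HI.R2 Z → Λ Z = 0 → Z = 0 := fun Z h1 h2 h3 => hS Z h1 h3 (HI.semi_rank2 Z h1 h2)
  set K := 2 * ‖ψ‖ * C / m1 with hKd
  have hK0 : 0 ≤ K := by positivity
  set C5 := C * (2 + K) with hC5
  have hC50 : 0 ≤ C5 := by positivity
  set η := min (1/2) (m0 / (2 * (C5 + 1))) with hη
  have hη0 : 0 < η := lt_min (by norm_num) (by positivity)
  have hη1 : η ≤ 1/2 := min_le_left _ _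
  have hη2 : C5 * η ≤ m0 / 2 := by
    have : η ≤ m0 / (2 * (C5 + 1)) := min_le_right _ _
    rw [le_div_iff₀ (by positivity)] at this
    nlinarith
  set e : Fin (n+1) → ℂ := Pi.single 0 1 with he
  obtain ⟨δ, hδ, hP⟩ := HI.properE Λ hS e η hη0
  set D := ‖ψ2‖ * C5 * (2 * ‖h‖ / m0) ^ 2 with hD
  have hD0 : 0 ≤ D := by positivity
  obtain ⟨s, hs0, hs1, hs2⟩ : ∃ s : ℝ, 0 < s ∧ s * ‖h‖ < δ ∧ D * s < 1 := by
    refine ⟨min (δ / (‖h‖ + 1)) (1 / (D + 1)) , lt_min (by positivity) (by positivity), ?_, ?_⟩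
    · have : min (δ / (‖h‖ + 1)) (1 / (D + 1)) ≤ δ / (‖h‖ + 1) := min_le_left _ _
      have h0 := norm_nonneg h
      calc _ ≤ δ / (‖h‖ + 1) * ‖h‖ := by gcongr
        _ < δ := by rw [div_mul_eq_mul_div, div_lt_iff₀ (by positivity)]; nlinarith
    · have : min (δ / (‖h‖ + 1)) (1 / (D + 1)) ≤ 1 / (D + 1) := min_le_right _ _
      calc _ ≤ D * (1 / (D + 1)) := by gcongr
        _ < 1 := by rw [mul_one_div, div_lt_iff₀ (by positivity)]; linarith
  obtain ⟨Z, hZ, hR, hZy⟩ := HI.surjM k n hn Λ hΛ (Λ (HI.vv e) + s • h)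
  have hZE := hP Z hZ hR (by
    rw [hZy, add_sub_cancel_left, norm_smul, Real.norm_of_nonneg hs0.le]; exact hs1)
  have hent : ∀ i j, ‖Z i j - HI.vv e i j‖ ≤ η := fun i j => (Matrix.norm_entry_le_entrywise_sup_norm (Z - HI.vv e)).trans hZE.le
  set r := (Z 0 0).re with hr
  have hr00 : ((r : ℝ) : ℂ) = Z 0 0 := hZ.coe_re_apply_self 0
  have hr1 : |r - 1| ≤ η := by
    have := hent 0 0
    have h2 : Z 0 0 - HI.vv e 0 0 = ((r - 1 : ℝ) : ℂ) := by rw [← hr00]; simp [HI.vv, he]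
    rwa [h2, Complex.norm_real] at this
  have hr2 : 1 / 2 ≤ r := by have := (abs_le.mp hr1).1; linarith
  have hrpos : 0 < r := by linarith
  obtain ⟨σ, c, hc0, hZd⟩ := HI.schur Z hZ hR 0 (by rw [← hr00]; exact_mod_cast hrpos.ne')
  set w : Fin (n+1) → ℂ := fun i => if i = 0 then (((r - 1) / 2 : ℝ) : ℂ) else Z i 0 with hw
  set w' : Fin (n+1) → ℂ := fun i => if i = 0 then 0 else Z i 0 with hw'
  have hwn : ‖w‖ ≤ η := by
    rw [pi_norm_le_iff_of_nonneg hη0.le]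
    intro i
    by_cases hi : i = 0
    · simp only [hw, hi, if_true]
      rw [Complex.norm_real, Real.norm_eq_abs, abs_div]
      have := abs_nonneg (r - 1)
      norm_num
      linarith
    · simp only [hw, hi, if_false]
      have := hent i 0
      simpa [HI.vv, he, hi] using this
  have hw'n : ‖w'‖ ≤ ‖w‖ := by
    rw [pi_norm_le_iff_of_nonneg (norm_nonneg _)]
    intro i
    refine le_trans ?_ (norm_le_pi_norm w i)
    by_cases hi : i = 0
    · simp [hw', hi]
    · simp [hw', hw, hi]
  have hdec : r⁻¹ • HI.vv (fun k => Z k 0) = HI.vv e + HI.SW n w + r⁻¹ • HI.vv w' := by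
    have hrc : (r : ℂ) ≠ 0 := by exact_mod_cast hrpos.ne'
    ext i j
    simp only [Matrix.add_apply, Matrix.smul_apply, HI.vv, HI.SW_apply, Matrix.of_apply, Complex.real_smul, Complex.ofReal_inv]
    by_cases hi : i = 0 <;> by_cases hj : j = 0
    · subst hi; subst hj
      simp only [he, hw, hw', if_true, Pi.single_eq_same, ← hr00]
      simp
      field_simp
    · subst hi
      simp only [he, hw, hw', if_true, hj, if_false, Pi.single_eq_same, ← hr00]
      simp [hj, hrc]
    · subst hj
      simp only [he, hw, hw', if_true, hi, if_false, Pi.single_eq_same, ← hr00]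
      simp [hi]
      field_simp
    · simp [he, hw, hw', hi, hj]
  have hmain : s • h = Λ (HI.SW n w) + r⁻¹ • Λ (HI.vv w') + σ • Λ (HI.vv c) := by
    have h1 : Λ Z = Λ (HI.vv e) + (Λ (HI.SW n w) + r⁻¹ • Λ (HI.vv w') + σ • Λ (HI.vv c)) := by
      conv_lhs => rw [hZd]
      rw [← hr, hdec]
      simp only [map_add, map_smul]
      abel
    rw [h1] at hZy
    exact (add_left_cancel hZy).symm
  have hri : r⁻¹ ≤ 2 := by
    rw [inv_le_comm₀ hrpos (by norm_num)]; linarith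
  have hri0 : 0 < r⁻¹ := inv_pos.mpr hrpos
  set A := ‖w‖ with hA
  have hA0 : 0 ≤ A := norm_nonneg _
  have hw'A : ‖w'‖ ^ 2 ≤ A ^ 2 := by gcongr
  have hB1 : ‖r⁻¹ • Λ (HI.vv w')‖ ≤ 2 * C * A ^ 2 := by
    rw [norm_smul, Real.norm_of_nonneg hri0.le]
    have := hCb w'
    calc _ ≤ 2 * (C * ‖w'‖ ^ 2) := by gcongr
      _ ≤ 2 * (C * A ^ 2) := by gcongr
      _ = _ := by ring
  have hB2 : |σ| * ‖c‖ ^ 2 ≤ K * A ^ 2 := by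
    have h1 := congrArg ψ hmain
    rw [map_smul, hh, smul_zero, map_add, map_add, hψ0, zero_add] at h1
    have h2 : |ψ (σ • Λ (HI.vv c))| = |ψ (r⁻¹ • Λ (HI.vv w'))| := by
      rw [← abs_neg]; congr 1; linarith
    have h3 : |ψ (r⁻¹ • Λ (HI.vv w'))| ≤ ‖ψ‖ * (2 * C * A ^ 2) := by
      refine (ψ.le_opNorm _).trans ?_
      gcongr
    have h4 : |σ| * (m1 * ‖c‖ ^ 2) ≤ |ψ (σ • Λ (HI.vv c))| := by
      rw [map_smul, smul_eq_mul, abs_mul]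
      gcongr
      exact (hU c hc0).trans (le_abs_self _)
    have h5 : K * m1 = 2 * ‖ψ‖ * C := by rw [hKd]; field_simp
    have h6 : (|σ| * ‖c‖ ^ 2) * m1 ≤ (K * A ^ 2) * m1 := by
      calc _ = |σ| * (m1 * ‖c‖ ^ 2) := by ring
        _ ≤ ‖ψ‖ * (2 * C * A ^ 2) := by linarith
        _ = (K * m1) * A ^ 2 := by rw [h5]; ring
        _ = _ := by ring
    exact le_of_mul_le_mul_right h6 hm1
  have hB3 : ‖σ • Λ (HI.vv c)‖ ≤ C * K * A ^ 2 := by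
    rw [norm_smul, Real.norm_eq_abs]
    calc _ ≤ |σ| * (C * ‖c‖ ^ 2) := by gcongr; exact hCb c
      _ = C * (|σ| * ‖c‖ ^ 2) := by ring
      _ ≤ C * (K * A ^ 2) := by gcongr
      _ = _ := by ring
  have hB4 : ‖r⁻¹ • Λ (HI.vv w') + σ • Λ (HI.vv c)‖ ≤ C5 * A ^ 2 := by
    refine (norm_add_le _ _).trans ?_
    calc _ ≤ 2 * C * A ^ 2 + C * K * A ^ 2 := add_le_add hB1 hB3
      _ = _ := by rw [hC5]; ring
  have hE1 : s ≤ ‖ψ2‖ * (C5 * A ^ 2) := by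
    have h1 := congrArg ψ2 hmain
    rw [map_smul, hh2, smul_eq_mul, mul_one, add_assoc, map_add, hψ2, zero_add] at h1
    rw [h1]
    refine (le_abs_self _).trans ((ψ2.le_opNorm _).trans ?_)
    gcongr
  have hE2 : m0 * A ≤ s * ‖h‖ + C5 * A ^ 2 := by
    refine (hW w (by simp [hw])).trans ?_
    have : Λ (HI.SW n w) = s • h - (r⁻¹ • Λ (HI.vv w') + σ • Λ (HI.vv c)) := by
      rw [hmain]; abel
    rw [this]
    refine (norm_sub_le _ _).trans ?_
    rw [norm_smul, Real.norm_of_nonneg hs0.le]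
    gcongr
  have hE3 : A ≤ (2 * ‖h‖ / m0) * s := by
    have h1 : C5 * A ^ 2 ≤ (m0 / 2) * A := by
      calc _ = (C5 * A) * A := by ring
        _ ≤ (C5 * η) * A := by gcongr
        _ ≤ _ := by gcongr
    rw [div_mul_eq_mul_div, le_div_iff₀ hm0]
    linarith
  have hE4 : s ≤ D * s * s := by
    calc s ≤ ‖ψ2‖ * (C5 * A ^ 2) := hE1
      _ ≤ ‖ψ2‖ * (C5 * ((2 * ‖h‖ / m0) * s) ^ 2) := by gcongr
      _ = _ := by rw [hD]; ring
  nlinarith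
end

theorem HI.two_eig {q : ℕ} {X : Matrix (Fin q) (Fin q) ℂ} (hX : X.IsHermitian) (i j : Fin q) (hij : i ≠ j)
    (φ : (Fin q → ℂ) →ₗ[ℂ] ℂ) : ∃ (y : Fin q → ℂ) (α β : ℂ), (α ≠ 0 ∨ β ≠ 0) ∧ φ y = 0 ∧
      (star y ⬝ᵥ X *ᵥ y).re = hX.eigenvalues i * Complex.normSq α + hX.eigenvalues j * Complex.normSq β := by
  set a : Fin q → ℂ := ⇑(hX.eigenvectorBasis i) with ha
  set b : Fin q → ℂ := ⇑(hX.eigenvectorBasis j) with hb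
  have hXa : X *ᵥ a = (hX.eigenvalues i) • a := hX.mulVec_eigenvectorBasis i
  have hXb : X *ᵥ b = (hX.eigenvalues j) • b := hX.mulVec_eigenvectorBasis j
  have ho := orthonormal_iff_ite.mp hX.eigenvectorBasis.orthonormal
  have haa : star a ⬝ᵥ a = 1 := by
    have := ho i i
    rw [EuclideanSpace.inner_eq_star_dotProduct, if_pos rfl] at this
    rw [dotProduct_comm]; exact this
  have hbb : star b ⬝ᵥ b = 1 := by
    have := ho j j
    rw [EuclideanSpace.inner_eq_star_dotProduct, if_pos rfl] at this
    rw [dotProduct_comm]; exact this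
  have hab : star a ⬝ᵥ b = 0 := by
    have := ho i j
    rw [EuclideanSpace.inner_eq_star_dotProduct, if_neg hij] at this
    rw [dotProduct_comm]; exact this
  have hba : star b ⬝ᵥ a = 0 := by
    have := ho j i
    rw [EuclideanSpace.inner_eq_star_dotProduct, if_neg hij.symm] at this
    rw [dotProduct_comm]; exact this
  obtain ⟨α, β, h1, h2⟩ : ∃ α β : ℂ, (α ≠ 0 ∨ β ≠ 0) ∧ α * φ a + β * φ b = 0 := by
    by_cases h : φ a = 0
    · exact ⟨1, 0, by simp, by simp [h]⟩
    · exact ⟨- φ b, φ a, Or.inr h, by ring⟩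
  refine ⟨α • a + β • b, α, β, h1, by simpa using h2, ?_⟩
  rw [Matrix.mulVec_add, Matrix.mulVec_smul, Matrix.mulVec_smul, hXa, hXb, star_add, star_smul, star_smul]
  simp only [add_dotProduct, dotProduct_add, smul_dotProduct, dotProduct_smul, haa, hab, hba, hbb]
  simp [Complex.normSq_apply]
  ring

theorem HI.embed {n q : ℕ} (hnq : n ≤ q) : ∃ E : Matrix (Fin q) (Fin n) ℂ, Eᴴ * E = 1 := by
  refine ⟨(1 : Matrix (Fin q) (Fin q) ℂ).submatrix id (Fin.castLE hnq), ?_⟩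
  ext i j
  rw [Matrix.mul_apply, Finset.sum_eq_single (Fin.castLE hnq j)]
  · simp [Matrix.one_apply, Fin.ext_iff, eq_comm]
  · intro b _ hb
    simp [Matrix.one_apply, hb]
  · simp

theorem HI.quot {a N : ℕ} (W : Submodule ℝ (Fin a × Fin a → ℝ)) (h : a ^ 2 ≤ Module.finrank ℝ W + N) :
    ∃ g : (Fin a × Fin a → ℝ) →ₗ[ℝ] (Fin N → ℝ), LinearMap.ker g = W := by
  have h1 := Submodule.finrank_quotient_add_finrank W
  rw [Module.finrank_pi, Fintype.card_prod, Fintype.card_fin] at h1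
  have h2 : Module.finrank ℝ ((Fin a × Fin a → ℝ) ⧸ W) ≤ Module.finrank ℝ (Fin N → ℝ) := by
    rw [Module.finrank_pi, Fintype.card_fin]; nlinarith
  have h3 : Module.rank ℝ ((Fin a × Fin a → ℝ) ⧸ W) ≤ Module.rank ℝ (Fin N → ℝ) := by
    rw [← Module.finrank_eq_rank, ← Module.finrank_eq_rank]; exact_mod_cast h2
  obtain ⟨f, hf⟩ := rank_le_iff_exists_linearMap.mp h3
  refine ⟨f ∘ₗ W.mkQ, ?_⟩
  rw [LinearMap.ker_comp_of_ker_eq_bot _ (LinearMap.ker_eq_bot.mpr hf), Submodule.ker_mkQ]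

noncomputable def HI.thq (q : ℕ) : Matrix (Fin q) (Fin q) ℂ →ₗ[ℝ] (Fin q × Fin q → ℝ) where
  toFun X p := (X p.1 p.2).re + (X p.1 p.2).im
  map_add' a b := by ext p; simp; ring
  map_smul' a b := by ext p; simp; ring

theorem HI.thq_inj {q : ℕ} {X : Matrix (Fin q) (Fin q) ℂ} (hX : X.IsHermitian) (h : HI.thq q X = 0) : X = 0 := by
  ext i j
  have h1 : (X i j).re + (X i j).im = 0 := congrFun h (i, j)
  have h2 : (X j i).re + (X j i).im = 0 := congrFun h (j, i)
  have h3 : star (X i j) = X j i := congrFun (congrFun hX j) i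
  rw [← h3] at h2
  simp at h2
  apply Complex.ext <;> simp <;> linarith

noncomputable def HI.ext {n q : ℕ} (E : Matrix (Fin q) (Fin n) ℂ) : Matrix (Fin n) (Fin n) ℂ →ₗ[ℝ] Matrix (Fin q) (Fin q) ℂ where
  toFun Z := E * Z * Eᴴ
  map_add' a b := by simp [Matrix.mul_add, Matrix.add_mul]
  map_smul' a b := by simp

theorem HI.final (k n q : ℕ) (hn : n = 2 ^ k) (hn3 : 3 ≤ n) (hq : n + 1 ≤ q)
    (L : Submodule ℝ (Matrix (Fin q) (Fin q) ℂ))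
    (hherm : ∀ X ∈ L, X.IsHermitian)
    (hinertia : ∀ X ∈ L, X ≠ 0 → ∀ hX : Matrix.IsHermitian X,
      2 ≤ (Finset.univ.filter fun i => 0 < hX.eigenvalues i).card ∧ 2 ≤ (Finset.univ.filter fun i => hX.eigenvalues i < 0).card)
    (hdim : q ^ 2 ≤ Module.finrank ℝ L + 4 * n) : False := by
  have hinj : Function.Injective ((HI.thq q).domRestrict L) := by
    rw [← LinearMap.ker_eq_bot, LinearMap.ker_eq_bot']
    intro X hX
    exact Subtype.ext (HI.thq_inj (hherm X X.2) hX)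
  have hfr : Module.finrank ℝ (L.map (HI.thq q)) = Module.finrank ℝ L := by
    rw [← LinearMap.finrank_range_of_inj hinj, LinearMap.range_domRestrict]
  obtain ⟨g, hg⟩ := HI.quot (L.map (HI.thq q)) (N := 4 * n) (by rw [hfr]; exact hdim)
  obtain ⟨E, hE⟩ := HI.embed hq
  refine HI.core k n hn hn3 (g ∘ₗ HI.thq q ∘ₗ HI.ext E) ?_
  intro Z hZ hΛ hS
  by_contra hne
  set X := HI.ext E Z with hXd
  have hXE : X = E * Z * Eᴴ := rfl
  have hX : X.IsHermitian := by
    rw [hXE, Matrix.IsHermitian, Matrix.conjTranspose_mul, Matrix.conjTranspose_mul, Matrix.conjTranspose_conjTranspose, hZ, Matrix.mul_assoc]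
  have hXL : X ∈ L := by
    have h1 : HI.thq q X ∈ L.map (HI.thq q) := by rw [← hg]; exact hΛ
    obtain ⟨Y, hY, hYX⟩ := h1
    have := HI.thq_inj (X := Y - X) ((hherm Y hY).sub hX) (by rw [map_sub, hYX, sub_self])
    rwa [← sub_eq_zero.mp this]
  have hX0 : X ≠ 0 := by
    intro h0
    apply hne
    have : Eᴴ * X * E = Z := by
      rw [hXE]
      calc Eᴴ * (E * Z * Eᴴ) * E = (Eᴴ * E) * Z * (Eᴴ * E) := by simp only [Matrix.mul_assoc]
        _ = Z := by rw [hE, Matrix.one_mul, Matrix.mul_one]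
    rw [← this, h0]; simp
  have hform : ∀ y, HI.qf Z (Eᴴ *ᵥ y) = (star y ⬝ᵥ X *ᵥ y).re := by
    intro y
    rw [HI.qf, hXE, Matrix.star_mulVec, Matrix.conjTranspose_conjTranspose, ← Matrix.dotProduct_mulVec, Matrix.mulVec_mulVec, Matrix.mulVec_mulVec, Matrix.mul_assoc]
  obtain ⟨hp, hm⟩ := hinertia X hXL hX0 hX
  obtain ⟨v, hv⟩ := hS
  let φ : (Fin q → ℂ) →ₗ[ℂ] ℂ := (dotProductBilin ℂ ℂ v) ∘ₗ (Matrix.mulVecLin Eᴴ)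
  have hφ : ∀ y, φ y = v ⬝ᵥ (Eᴴ *ᵥ y) := fun y => rfl
  rcases hv with hv | hv
  · obtain ⟨i, hi, j, hj, hij⟩ := Finset.one_lt_card.mp hm
    simp only [Finset.mem_filter, Finset.mem_univ, true_and] at hi hj
    obtain ⟨y, α, β, h1, h2, h3⟩ := HI.two_eig hX i j hij φ
    have h4 := hv (Eᴴ *ᵥ y) h2
    rw [hform, h3] at h4
    have ha := Complex.normSq_nonneg α
    have hb := Complex.normSq_nonneg β
    rcases h1 with h1 | h1
    · have := Complex.normSq_pos.mpr h1
      nlinarith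
    · have := Complex.normSq_pos.mpr h1
      nlinarith
  · obtain ⟨i, hi, j, hj, hij⟩ := Finset.one_lt_card.mp hp
    simp only [Finset.mem_filter, Finset.mem_univ, true_and] at hi hj
    obtain ⟨y, α, β, h1, h2, h3⟩ := HI.two_eig hX i j hij φ
    have h4 := hv (Eᴴ *ᵥ y) h2
    rw [hform, h3] at h4
    have ha := Complex.normSq_nonneg α
    have hb := Complex.normSq_nonneg β
    rcases h1 with h1 | h1
    · have := Complex.normSq_pos.mpr h1
      nlinarith
    · have := Complex.normSq_pos.mpr h1
      nlinarith

theorem dim_bound_of_min_inertia_ge_two_eps (k ε q : ℕ) (hk : 2 ≤ k)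
    (hε₀ : 0 < ε) (hε₁ : ε < 2 ^ k) (hq : q = 2 ^ k + 1 + ε)
    (L : Submodule ℝ (Matrix (Fin q) (Fin q) ℂ))
    (hherm : ∀ X ∈ L, X.IsHermitian)
    (hinertia : ∀ X ∈ L, X ≠ 0 → ∀ hX : Matrix.IsHermitian X,
      2 ≤ posEigCount hX ∧ 2 ≤ negEigCount hX) :
    Module.finrank ℝ L ≤ q ^ 2 - (4 * q - 3 - 4 * ε) := by
  have hn4 : 4 ≤ 2 ^ k := by
    calc 4 = 2 ^ 2 := by norm_num
      _ ≤ 2 ^ k := Nat.pow_le_pow_right (by norm_num) hk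
  by_contra hcon
  have hq2 : q * q = q ^ 2 := by ring
  have h5 : 5 ≤ q := by omega
  have h6 : 5 * q ≤ q ^ 2 := by rw [← hq2]; exact Nat.mul_le_mul_right q h5
  exact HI.final k (2 ^ k) q rfl (by omega) (by omega) L hherm hinertia (by omega)
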